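/- arXiv:1212.6451 — 5 statements merged into one kernel-verified Lean document; each statement's English description precedes it below -/
import Mathlib

section
/- Let Ψ be a critical branching mechanism which is regularly varying at 0 with index γ ∈ (1,2]. Let (ν_t)_{t>0} be a family of nonzero finite Borel measures on (0,∞) such that φ(t,q) = ∫_{(0,∞)} (1 − e^{−qx}) ν_t(dx) satisfies ∂_t φ(t,q) = −Ψ(φ(t,q)) for all t > 0 and all q ∈ (0,∞], where φ(t,∞) := ν_t((0,∞)). Suppose there exist t₀ > 0, ρ ∈ (0,1], and a function L slowly varying at infinity such that ∫_{(0,x]} y ν_{t₀}(dy) ∼ x^{1−ρ} L(x) as x → ∞. Then there exists a function λ : (0,∞) → (0,∞) with λ(t) → 0 as t → ∞ such that for every bounded continuous f : (0,∞) → ℝ, ν_t((0,∞))^{−1} ∫_{(0,∞)} f(λ(t) x) ν_t(dx) → ∫_{(0,∞)} f dF_{γ,ρ} as t → ∞. -/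
open MeasureTheory Set Filter

noncomputable section

theorem aux_cont_moment (P : ℝ → ProbabilityMeasure (Icc (0:ℝ) 1)) (g : ℝ → ℝ)
    (hg0 : Tendsto g (nhdsWithin 0 (Ioi 0)) (nhds 0)) (hg1 : Tendsto g atTop (nhds 1))
    (hP : ∀ q : ℝ, 0 < q → Tendsto (fun t => ∫ y, (y:ℝ) ^ q ∂(P t : Measure (Icc (0:ℝ) 1)))
      atTop (nhds (1 - g q))) :
    ∃ Q : ProbabilityMeasure (Icc (0:ℝ) 1), Tendsto P atTop (nhds Q) ∧
      (∀ q : ℝ, 0 < q → ∫ y, (y:ℝ) ^ q ∂(Q : Measure (Icc (0:ℝ) 1)) = 1 - g q) ∧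
      (Q : Measure (Icc (0:ℝ) 1)) {y | (y:ℝ) = 0} = 0 ∧
      (Q : Measure (Icc (0:ℝ) 1)) {y | (y:ℝ) = 1} = 0 := by
  have hcq : ∀ q : ℝ, 0 < q → Continuous (fun y : Icc (0:ℝ) 1 => (y:ℝ) ^ q) := by
    intro q hq
    exact (Real.continuous_rpow_const hq.le).comp continuous_subtype_val
  have hcl : ∀ Q : ProbabilityMeasure (Icc (0:ℝ) 1), ClusterPt Q (map P atTop) →
      ∀ q : ℝ, 0 < q → ∫ y, (y:ℝ) ^ q ∂(Q : Measure (Icc (0:ℝ) 1)) = 1 - g q := by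
    intro Q hQ q hq
    obtain ⟨U, hU, hUQ⟩ := mapClusterPt_iff_ultrafilter.1 hQ
    have h1 := (ProbabilityMeasure.tendsto_iff_forall_integral_tendsto.1 hUQ)
      (BoundedContinuousFunction.mkOfCompact ⟨_, hcq q hq⟩)
    exact tendsto_nhds_unique h1 ((hP q hq).mono_left hU)
  obtain ⟨Q, hQ⟩ := exists_clusterPt_of_compactSpace (map P atTop)
  have hQm := hcl Q hQ
  refine ⟨Q, ?_, hQm, ?_, ?_⟩
  · refine le_nhds_of_unique_clusterPt ?_
    intro Q' hQ'
    have hm := hcl Q' hQ'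
    have key : ∀ p : Polynomial ℝ, ∫ y, p.eval (y:ℝ) ∂(Q' : Measure (Icc (0:ℝ) 1))
        = ∫ y, p.eval (y:ℝ) ∂(Q : Measure (Icc (0:ℝ) 1)) := by
      intro p
      have hint : ∀ (R : ProbabilityMeasure (Icc (0:ℝ) 1)) (p : Polynomial ℝ),
          Integrable (fun y : Icc (0:ℝ) 1 => p.eval (y:ℝ)) (R : Measure (Icc (0:ℝ) 1)) := by
        intro R p
        have : Continuous (fun y : Icc (0:ℝ) 1 => p.eval (y:ℝ)) :=
          p.continuous.comp continuous_subtype_val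
        exact (BoundedContinuousFunction.mkOfCompact ⟨_, this⟩).integrable _
      induction p using Polynomial.induction_on' with
      | add p q hp hq =>
        simp only [Polynomial.eval_add]
        rw [integral_add (hint _ _) (hint _ _), integral_add (hint _ _) (hint _ _), hp, hq]
      | monomial n a =>
        simp only [Polynomial.eval_monomial]
        rw [integral_const_mul, integral_const_mul]
        congr 1
        rcases Nat.eq_zero_or_pos n with rfl | hn
        · simp
        · have hn' : (0:ℝ) < n := by exact_mod_cast hn
          have h1 := hm n hn'
          have h2 := hQm n hn'
          simp only [Real.rpow_natCast] at h1 h2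
          rw [h1, h2]
    have hall : ∀ f : C(Icc (0:ℝ) 1, ℝ), ∫ y, f y ∂(Q' : Measure (Icc (0:ℝ) 1))
        = ∫ y, f y ∂(Q : Measure (Icc (0:ℝ) 1)) := by
      intro f
      have hf : f ∈ closure ((polynomialFunctions (Icc (0:ℝ) 1) : Set C(Icc (0:ℝ) 1, ℝ))) := by
        have := polynomialFunctions.topologicalClosure (Icc (0:ℝ) 1)
        have h2 : f ∈ (polynomialFunctions (Icc (0:ℝ) 1)).topologicalClosure := by
          rw [this]; trivial
        exact h2
      have hcont : ∀ R : ProbabilityMeasure (Icc (0:ℝ) 1),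
          Continuous (fun f : C(Icc (0:ℝ) 1, ℝ) => ∫ y, f y ∂(R : Measure (Icc (0:ℝ) 1))) := by
        intro R
        refine (LipschitzWith.of_dist_le_mul (K := 1) ?_).continuous
        intro f f'
        have hi : ∀ f : C(Icc (0:ℝ) 1, ℝ), Integrable f (R : Measure (Icc (0:ℝ) 1)) := fun f =>
          (BoundedContinuousFunction.mkOfCompact f).integrable _
        rw [Real.dist_eq, ← integral_sub (hi _) (hi _)]
        have := norm_integral_le_of_norm_le_const (μ := (R : Measure (Icc (0:ℝ) 1)))
          (f := fun y => f y - f' y) (C := dist f f') (by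
            refine ae_of_all _ fun y => ?_
            rw [← dist_eq_norm]; exact ContinuousMap.dist_apply_le_dist y)
        simpa using this
      refine (isClosed_eq (hcont Q') (hcont Q)).closure_subset_iff.2 ?_ hf
      rintro f ⟨p, -, rfl⟩
      exact key p
    apply tendsto_nhds_unique (f := fun _ : ℕ => Q') (l := atTop) tendsto_const_nhds
    rw [ProbabilityMeasure.tendsto_iff_forall_integral_tendsto]
    intro f
    have := hall f.toContinuousMap
    simp only [BoundedContinuousFunction.coe_toContinuousMap] at this
    rw [this]; exact tendsto_const_nhds
  · have hle : ∀ q : ℝ, 0 < q → (Q : Measure (Icc (0:ℝ) 1)).real {y | (y:ℝ) = 0} ≤ g q := by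
      intro q hq
      have hms : MeasurableSet {y : Icc (0:ℝ) 1 | (y:ℝ) = 0} :=
        measurableSet_eq_fun measurable_subtype_coe measurable_const
      have h1 : ∫ y, ((y:ℝ) ^ q + ({y : Icc (0:ℝ) 1 | (y:ℝ) = 0}).indicator 1 y)
          ∂(Q : Measure (Icc (0:ℝ) 1)) ≤ ∫ y, (1:ℝ) ∂(Q : Measure (Icc (0:ℝ) 1)) := by
        refine integral_mono_of_nonneg (ae_of_all _ fun y => ?_) (integrable_const _)
          (ae_of_all _ fun y => ?_)
        · exact add_nonneg (Real.rpow_nonneg y.2.1 _) (indicator_nonneg (by simp) _)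
        · by_cases hy : (y:ℝ) = 0
          · beta_reduce
            rw [indicator_of_mem (show y ∈ {y : Icc (0:ℝ) 1 | (y:ℝ) = 0} from hy)]
            simp [hy, Real.zero_rpow hq.ne']
          · beta_reduce
            rw [indicator_of_notMem (show y ∉ {y : Icc (0:ℝ) 1 | (y:ℝ) = 0} from hy), add_zero]
            exact Real.rpow_le_one y.2.1 y.2.2 hq.le
      have i1 : Integrable (fun y : Icc (0:ℝ) 1 => (y:ℝ) ^ q) (Q : Measure (Icc (0:ℝ) 1)) :=
        (BoundedContinuousFunction.mkOfCompact ⟨_, hcq q hq⟩).integrable _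
      have i2 : Integrable (({y : Icc (0:ℝ) 1 | (y:ℝ) = 0}).indicator (1 : Icc (0:ℝ) 1 → ℝ))
          (Q : Measure (Icc (0:ℝ) 1)) := (integrable_const (1:ℝ)).indicator hms
      rw [integral_add i1 i2, hQm q hq, integral_indicator_one hms] at h1
      simp only [integral_const, probReal_univ, smul_eq_mul, mul_one] at h1
      linarith
    have h0 : (Q : Measure (Icc (0:ℝ) 1)).real {y | (y:ℝ) = 0} ≤ 0 :=
      ge_of_tendsto hg0 (by filter_upwards [self_mem_nhdsWithin] with q hq using hle q hq)
    exact (measureReal_eq_zero_iff).1 (le_antisymm h0 measureReal_nonneg)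
  · have hle : ∀ q : ℝ, 0 < q → (Q : Measure (Icc (0:ℝ) 1)).real {y | (y:ℝ) = 1} ≤ 1 - g q := by
      intro q hq
      have hms : MeasurableSet {y : Icc (0:ℝ) 1 | (y:ℝ) = 1} :=
        measurableSet_eq_fun measurable_subtype_coe measurable_const
      rw [← hQm q hq, ← integral_indicator_one hms]
      refine integral_mono_of_nonneg (ae_of_all _ fun y => (indicator_nonneg (by simp) _))
        ((BoundedContinuousFunction.mkOfCompact ⟨_, hcq q hq⟩).integrable _)
          (ae_of_all _ fun y => ?_)
      by_cases hy : (y:ℝ) = 1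
      · rw [indicator_of_mem (show y ∈ {y : Icc (0:ℝ) 1 | (y:ℝ) = 1} from hy)]
        simp [hy]
      · rw [indicator_of_notMem (show y ∉ {y : Icc (0:ℝ) 1 | (y:ℝ) = 1} from hy)]
        exact Real.rpow_nonneg y.2.1 _
    have h0 : (Q : Measure (Icc (0:ℝ) 1)).real {y | (y:ℝ) = 1} ≤ 1 - 1 :=
      ge_of_tendsto (tendsto_const_nhds.sub hg1)
        (by filter_upwards [eventually_gt_atTop 0] with q hq using hle q hq)
    rw [sub_self] at h0
    exact (measureReal_eq_zero_iff).1 (le_antisymm h0 measureReal_nonneg)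

theorem aux_cut (P : ℝ → ProbabilityMeasure (Icc (0:ℝ) 1)) (Q : ProbabilityMeasure (Icc (0:ℝ) 1))
    (hPQ : Tendsto P atTop (nhds Q))
    (h0 : (Q : Measure (Icc (0:ℝ) 1)) {y | (y:ℝ) = 0} = 0)
    (h1 : (Q : Measure (Icc (0:ℝ) 1)) {y | (y:ℝ) = 1} = 0)
    (h : ℝ → ℝ) (hc : ContinuousOn h (Ioo 0 1)) (M : ℝ) (hM : ∀ y, |h y| ≤ M)
    (hmeas : Measurable h) :
    Tendsto (fun t => ∫ y, h y ∂(P t : Measure (Icc (0:ℝ) 1))) atTop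
      (nhds (∫ y, h y ∂(Q : Measure (Icc (0:ℝ) 1)))) := by
  set k : ℕ → ℝ → ℝ := fun n y => min 1 (n * (y * (1 - y))) with hk
  have hkc : ∀ n, Continuous (k n) := fun n => by simp only [hk]; fun_prop
  have hk0 : ∀ n, ∀ y ∈ Icc (0:ℝ) 1, 0 ≤ k n y := by
    intro n y hy
    have : 0 ≤ 1 - y := by linarith [hy.2]
    have := hy.1
    simp only [hk]; positivity
  have hk1 : ∀ n y, k n y ≤ 1 := fun n y => min_le_left _ _
  have hM0 : 0 ≤ M := (abs_nonneg _).trans (hM 0)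
  have hhi : ∀ R : ProbabilityMeasure (Icc (0:ℝ) 1),
      Integrable (fun y : Icc (0:ℝ) 1 => h y) (R : Measure (Icc (0:ℝ) 1)) := by
    intro R
    refine Integrable.of_bound (hmeas.comp measurable_subtype_coe).aestronglyMeasurable M
      (ae_of_all _ fun y => hM y)
  have hkC : ∀ n, Continuous (fun y : Icc (0:ℝ) 1 => k n y) := fun n =>
    (hkc n).comp continuous_subtype_val
  have hhk : ∀ n, Continuous (fun y : Icc (0:ℝ) 1 => h y * k n y) := by
    intro n
    rw [continuous_iff_continuousAt]
    intro y
    have bd : (k n y = 0) → ContinuousAt (fun y : Icc (0:ℝ) 1 => h y * k n y) y := by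
      intro hy
      have h1 : Tendsto (fun y : Icc (0:ℝ) 1 => M * |k n y|) (nhds y) (nhds 0) := by
        have := ((hkC n).abs.const_mul M).tendsto y
        simpa [hy] using this
      rw [ContinuousAt, hy, mul_zero]
      refine squeeze_zero_norm (fun z => ?_) h1
      rw [Real.norm_eq_abs, abs_mul]
      exact mul_le_mul_of_nonneg_right (hM _) (abs_nonneg _)
    rcases eq_or_lt_of_le y.2.1 with hy | hy
    · apply bd; simp [hk, ← hy]
    rcases eq_or_lt_of_le y.2.2 with hy' | hy'
    · apply bd; simp [hk, hy']
    have : ContinuousAt h (y:ℝ) := hc.continuousAt (Ioo_mem_nhds hy hy')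
    exact (ContinuousAt.comp (f := fun y : Icc (0:ℝ) 1 => (y:ℝ)) this
      continuous_subtype_val.continuousAt).mul (hkC n).continuousAt
  have ik : ∀ n (R : ProbabilityMeasure (Icc (0:ℝ) 1)),
      Integrable (fun y : Icc (0:ℝ) 1 => k n y) (R : Measure (Icc (0:ℝ) 1)) := fun n R =>
    (BoundedContinuousFunction.mkOfCompact ⟨_, hkC n⟩).integrable _
  have ihk : ∀ n (R : ProbabilityMeasure (Icc (0:ℝ) 1)),
      Integrable (fun y : Icc (0:ℝ) 1 => h y * k n y) (R : Measure (Icc (0:ℝ) 1)) := fun n R =>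
    (BoundedContinuousFunction.mkOfCompact ⟨_, hhk n⟩).integrable _
  have est : ∀ n (R : ProbabilityMeasure (Icc (0:ℝ) 1)),
      |∫ y, h y ∂(R : Measure (Icc (0:ℝ) 1)) - ∫ y, h y * k n y ∂(R : Measure (Icc (0:ℝ) 1))|
        ≤ M * (1 - ∫ y, k n y ∂(R : Measure (Icc (0:ℝ) 1))) := by
    intro n R
    rw [← integral_sub (hhi R) (ihk n R)]
    have e : M * (1 - ∫ y, k n y ∂(R : Measure (Icc (0:ℝ) 1)))
        = ∫ y, M * (1 - k n y) ∂(R : Measure (Icc (0:ℝ) 1)) := by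
      rw [integral_const_mul, integral_sub (integrable_const _) (ik n R)]; simp
    rw [e, ← Real.norm_eq_abs]
    refine norm_integral_le_of_norm_le (((integrable_const _).sub (ik n R)).const_mul M)
      (ae_of_all _ fun y => ?_)
    have : h y - h y * k n y = h y * (1 - k n y) := by ring
    rw [this, Real.norm_eq_abs, abs_mul, abs_of_nonneg (sub_nonneg.2 (hk1 n y))]
    exact mul_le_mul_of_nonneg_right (hM _) (sub_nonneg.2 (hk1 n y))
  have tk : Tendsto (fun n : ℕ => ∫ y, k n y ∂(Q : Measure (Icc (0:ℝ) 1))) atTop (nhds 1) := by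
    have : Tendsto (fun n : ℕ => ∫ y, k n y ∂(Q : Measure (Icc (0:ℝ) 1))) atTop
        (nhds (∫ y, (1:ℝ) ∂(Q : Measure (Icc (0:ℝ) 1)))) := by
      refine tendsto_integral_of_dominated_convergence (fun _ => 1)
        (fun n => (ik n Q).aestronglyMeasurable) (integrable_const _)
        (fun n => ae_of_all _ fun y => ?_) ?_
      · rw [Real.norm_eq_abs, abs_of_nonneg (hk0 n y y.2)]; exact hk1 n y
      · have a0 : ∀ᵐ y : Icc (0:ℝ) 1 ∂(Q : Measure (Icc (0:ℝ) 1)), ¬ ((y:ℝ) = 0) := by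
          rw [ae_iff]; simp only [not_not]; exact h0
        have a1 : ∀ᵐ y : Icc (0:ℝ) 1 ∂(Q : Measure (Icc (0:ℝ) 1)), ¬ ((y:ℝ) = 1) := by
          rw [ae_iff]; simp only [not_not]; exact h1
        filter_upwards [a0, a1] with y hy0 hy1
        have p : 0 < (y:ℝ) * (1 - y) :=
          mul_pos (lt_of_le_of_ne y.2.1 (Ne.symm hy0)) (sub_pos.2 (lt_of_le_of_ne y.2.2 hy1))
        refine tendsto_const_nhds.congr' ?_
        filter_upwards [(tendsto_natCast_atTop_atTop.atTop_mul_const p).eventually_ge_atTop 1]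
          with n hn
        simp only [hk]
        exact (min_eq_left hn).symm
    simpa using this
  rw [Metric.tendsto_nhds]
  intro ε hε
  have hP := ProbabilityMeasure.tendsto_iff_forall_integral_tendsto.1 hPQ
  have tk2 : Tendsto (fun n : ℕ => M * (1 - ∫ y, k n y ∂(Q : Measure (Icc (0:ℝ) 1)))) atTop
      (nhds 0) := by
    simpa using ((tendsto_const_nhds (x := (1:ℝ))).sub tk).const_mul M
  obtain ⟨n, hn⟩ := (tk2.eventually_lt_const (show (0:ℝ) < ε / 4 by linarith)).exists
  have A := (hP (BoundedContinuousFunction.mkOfCompact ⟨_, hhk n⟩))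
  have B := ((tendsto_const_nhds (x := (1:ℝ))).sub
    (hP (BoundedContinuousFunction.mkOfCompact ⟨_, hkC n⟩))).const_mul M
  have A' := Metric.tendsto_nhds.1 A (ε/4) (by linarith)
  have B' := B.eventually_lt_const hn
  filter_upwards [A', B'] with t ht1 ht2
  have e1 := est n (P t)
  have e2 := est n Q
  rw [Real.dist_eq] at ht1 ⊢
  simp only [BoundedContinuousFunction.mkOfCompact_apply, ContinuousMap.coe_mk] at ht1 ht2 
  rw [abs_le] at e1 e2
  rw [abs_lt] at ht1 ⊢
  constructor <;> linarith

theorem aux_exp_nonneg (a : ℝ) : 0 ≤ Real.exp (-a) - 1 + a := by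
  linarith [Real.add_one_le_exp (-a)]

theorem aux_exp_le (a : ℝ) (ha : 0 ≤ a) : Real.exp (-a) - 1 + a ≤ a ^ 2 := by
  have h1 := Real.add_one_le_exp a
  have h2 : Real.exp (-a) * Real.exp a = 1 := by rw [← Real.exp_add]; simp
  have h3 := Real.exp_pos (-a)
  have h4 : Real.exp (-a) * (1 + a) ≤ 1 := by nlinarith
  have h5 : (Real.exp (-a) - 1 + a) * (1 + a) ≤ a ^ 2 := by nlinarith
  have h6 := aux_exp_nonneg a
  nlinarith

theorem aux_exp_le2 (u b x : ℝ) (hu : 0 ≤ u) (hub : u ≤ b) (hx : 0 ≤ x) :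
    Real.exp (-(u * x)) - 1 + u * x ≤ (b + b ^ 2) * min x (x ^ 2) := by
  have hb : 0 ≤ b := hu.trans hub
  have h1 := aux_exp_le (u * x) (by positivity)
  have h2 : Real.exp (-(u * x)) ≤ 1 := Real.exp_le_one_iff.2 (by
    have : 0 ≤ u * x := by positivity
    linarith)
  have h3 : u * x ≤ b * x := mul_le_mul_of_nonneg_right hub hx
  rcases le_total x (x ^ 2) with h | h
  · rw [min_eq_left h]
    have : 0 ≤ b ^ 2 * x := by positivity
    nlinarith
  · rw [min_eq_right h]
    have h4 : (u * x) ^ 2 ≤ (b * x) ^ 2 := pow_le_pow_left₀ (by positivity) h3 2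
    have : 0 ≤ b * x ^ 2 := by positivity
    nlinarith

theorem aux_psi (Ψ : ℝ → ℝ) (β : ℝ) (π : Measure ℝ)
    (hβ : 0 ≤ β)
    (hπfin : ∫⁻ x in Ioi (0:ℝ), ENNReal.ofReal (min x (x ^ 2)) ∂π < ⊤)
    (hΨ : ∀ u : ℝ, 0 < u →
      Ψ u = β * u ^ 2 + ∫ x in Ioi (0:ℝ), (Real.exp (-(u * x)) - 1 + u * x) ∂π)
    (γ : ℝ)
    (hreg : ∀ x : ℝ, 0 < x →
      Tendsto (fun t => Ψ (t * x) / Ψ t) (nhdsWithin 0 (Ioi 0)) (nhds (x ^ γ))) :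
    ContinuousOn Ψ (Ioi 0) ∧ ∀ u, 0 < u → 0 < Ψ u := by
  have hmin : Integrable (fun x : ℝ => min x (x ^ 2)) (π.restrict (Ioi 0)) := by
    refine ⟨by fun_prop, ?_⟩
    rw [hasFiniteIntegral_iff_ofReal]
    · exact hπfin
    · filter_upwards [ae_restrict_mem measurableSet_Ioi] with x hx
      exact le_min (le_of_lt hx) (sq_nonneg x)
  have hbd : ∀ b u : ℝ, 0 < u → u ≤ b → ∀ᵐ x ∂(π.restrict (Ioi 0)),
      ‖Real.exp (-(u * x)) - 1 + u * x‖ ≤ (b + b ^ 2) * min x (x ^ 2) := by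
    intro b u hu hub
    filter_upwards [ae_restrict_mem measurableSet_Ioi] with x hx
    rw [Real.norm_eq_abs, abs_of_nonneg (aux_exp_nonneg _)]
    exact aux_exp_le2 u b x hu.le hub (le_of_lt hx)
  have hint : ∀ u : ℝ, 0 < u → Integrable (fun x => Real.exp (-(u * x)) - 1 + u * x)
      (π.restrict (Ioi 0)) := fun u hu =>
    Integrable.mono' (hmin.const_mul (u + u ^ 2)) (by fun_prop) (hbd u u hu le_rfl)
  constructor
  · intro u hu
    have hu : 0 < u := hu
    have hc : ContinuousAt (fun u => β * u ^ 2 +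
        ∫ x in Ioi (0:ℝ), (Real.exp (-(u * x)) - 1 + u * x) ∂π) u := by
      refine ContinuousAt.add (by fun_prop) ?_
      refine continuousAt_of_dominated (bound := fun x => ((u+1) + (u+1) ^ 2) * min x (x ^ 2))
        (Eventually.of_forall fun v => by fun_prop) ?_ (hmin.const_mul _)
        (ae_of_all _ fun x => by fun_prop)
      filter_upwards [Ioo_mem_nhds hu (lt_add_one u)] with v hv
      exact hbd _ v hv.1 hv.2.le
    refine (hc.congr ?_).continuousWithinAt
    filter_upwards [Ioi_mem_nhds hu] with v hv
    exact (hΨ v hv).symm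
  · intro u hu
    have hI : ∀ u, 0 ≤ ∫ x in Ioi (0:ℝ), (Real.exp (-(u * x)) - 1 + u * x) ∂π := fun u =>
      integral_nonneg fun x => aux_exp_nonneg _
    have h0 : 0 ≤ Ψ u := by
      rw [hΨ u hu]; have := hI u; positivity
    refine lt_of_le_of_ne h0 fun h => ?_
    rw [hΨ u hu] at h
    have hIu := hI u
    have hβ2 : 0 ≤ β * u ^ 2 := by positivity
    have e1 : β * u ^ 2 = 0 := by linarith
    have e2 : ∫ x in Ioi (0:ℝ), (Real.exp (-(u * x)) - 1 + u * x) ∂π = 0 := by linarith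
    have hβ0 : β = 0 := by
      rcases mul_eq_zero.1 e1 with h | h
      · exact h
      · exact absurd h (by positivity)
    rw [integral_eq_zero_iff_of_nonneg (fun x => aux_exp_nonneg _) (hint u hu)] at e2
    have hfalse : ∀ᵐ x ∂(π.restrict (Ioi 0)), False := by
      filter_upwards [e2, ae_restrict_mem measurableSet_Ioi] with x hx hx0
      have hx0 : 0 < x := hx0
      have hne : -(u * x) ≠ 0 := neg_ne_zero.2 (by positivity)
      have := Real.add_one_lt_exp hne
      simp only [Pi.zero_apply] at hx
      linarith
    have hz : π.restrict (Ioi 0) = 0 := by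
      rw [← ae_eq_bot]; exact eventually_false_iff_eq_bot.1 hfalse
    have hΨ0 : ∀ v, 0 < v → Ψ v = 0 := by
      intro v hv
      rw [hΨ v hv, hz, hβ0]; simp
    have h3 := hreg 1 one_pos
    have h4 : Tendsto (fun t => Ψ (t * 1) / Ψ t) (nhdsWithin 0 (Ioi 0)) (nhds 0) := by
      refine tendsto_const_nhds.congr' ?_
      filter_upwards [self_mem_nhdsWithin] with t ht
      rw [hΨ0 t ht]; simp
    have := tendsto_nhds_unique h3 h4
    simp at this

theorem aux_G (Ψ : ℝ → ℝ) (hc : ContinuousOn Ψ (Ioi 0)) (hpos : ∀ u, 0 < u → 0 < Ψ u) :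
    ∃ G : ℝ → ℝ, ∀ v, 0 < v → HasDerivAt G (-(1 / Ψ v)) v := by
  refine ⟨fun v => - ∫ u in (1:ℝ)..v, 1 / Ψ u, fun v hv => ?_⟩
  have hcc : ContinuousOn (fun u => 1 / Ψ u) (Ioi 0) :=
    continuousOn_const.div hc fun u hu => (hpos u hu).ne'
  refine HasDerivAt.neg ?_
  refine intervalIntegral.integral_hasDerivAt_right ?_ ?_ (hcc.continuousAt (Ioi_mem_nhds hv))
  · refine (hcc.mono ?_).intervalIntegrable
    intro u hu
    have := hu.1
    exact lt_of_lt_of_le (lt_min one_pos hv) this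
  · exact hcc.stronglyMeasurableAtFilter isOpen_Ioi v hv

theorem aux_G_anti (Ψ G : ℝ → ℝ) (hpos : ∀ u, 0 < u → 0 < Ψ u)
    (hG : ∀ v, 0 < v → HasDerivAt G (-(1 / Ψ v)) v) : StrictAntiOn G (Ioi 0) := by
  refine strictAntiOn_of_deriv_neg (convex_Ioi 0)
    (fun v hv => (hG v hv).continuousAt.continuousWithinAt) ?_
  intro v hv
  rw [interior_Ioi] at hv
  rw [(hG v hv).deriv]
  have := hpos v hv
  have : 0 < 1 / Ψ v := by positivity
  linarith

/-- If H' ≥ 0 near zero (ratio bounded), get upper bound -/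
theorem aux_G_rv (Ψ G : ℝ → ℝ) (γ : ℝ) (hpos : ∀ u, 0 < u → 0 < Ψ u)
    (hreg : ∀ x : ℝ, 0 < x →
      Tendsto (fun t => Ψ (t * x) / Ψ t) (nhdsWithin 0 (Ioi 0)) (nhds (x ^ γ)))
    (hG : ∀ v, 0 < v → HasDerivAt G (-(1 / Ψ v)) v)
    (hGtop : Tendsto G (nhdsWithin 0 (Ioi 0)) atTop) (x : ℝ) (hx : 0 < x) :
    Tendsto (fun v => G (v * x) / G v) (nhdsWithin 0 (Ioi 0)) (nhds (x ^ (-(γ - 1)))) := by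
  have hr : Tendsto (fun v => x * (Ψ v / Ψ (v * x))) (nhdsWithin 0 (Ioi 0))
      (nhds (x ^ (-(γ - 1)))) := by
    have h1 := ((hreg x hx).inv₀ (Real.rpow_pos_of_pos hx _).ne').const_mul x
    have e : x * (x ^ γ)⁻¹ = x ^ (-(γ - 1)) := by
      rw [← Real.rpow_neg hx.le, show -(γ - 1) = 1 + -γ by ring, Real.rpow_add hx, Real.rpow_one]
    rw [e] at h1
    refine h1.congr fun v => ?_
    rw [inv_div]
  have hH : ∀ c v : ℝ, 0 < v → HasDerivAt (fun v => G (v * x) - c * G v)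
      ((c - x * (Ψ v / Ψ (v * x))) / Ψ v) v := by
    intro c v hv
    have hvx : 0 < v * x := by positivity
    have h1 : HasDerivAt (fun v => G (v * x)) (-(1 / Ψ (v * x)) * (1 * x)) v :=
      (hG (v * x) hvx).comp v ((hasDerivAt_id v).mul_const x)
    refine (h1.sub ((hG v hv).const_mul c)).congr_deriv ?_
    have := (hpos v hv).ne'
    have := (hpos _ hvx).ne'
    field_simp
    ring
  -- eventual bounds
  have hbig : ∀ C ε : ℝ, 0 < ε → ∀ᶠ v in nhdsWithin 0 (Ioi 0), C < ε * G v := by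
    intro C ε hε
    filter_upwards [hGtop.eventually_gt_atTop (C / ε)] with v hv
    rw [div_lt_iff₀ hε] at hv; linarith
  rw [tendsto_order]
  constructor
  · intro a ha
    obtain ⟨c, hac, hc⟩ := exists_between ha
    have he := hr.eventually_const_lt hc
    obtain ⟨δ, hδ, hδ'⟩ := mem_nhdsGT_iff_exists_Ioc_subset.1 he
    have hδ : 0 < δ := hδ
    have hm : AntitoneOn (fun v => G (v * x) - c * G v) (Ioc 0 δ) := by
      refine antitoneOn_of_deriv_nonpos (convex_Ioc 0 δ)
        (fun v hv => (hH c v hv.1).continuousAt.continuousWithinAt)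
        (fun v hv => ?_) (fun v hv => ?_)
      · rw [interior_Ioc] at hv
        exact (hH c v hv.1).differentiableAt.differentiableWithinAt
      · rw [interior_Ioc] at hv
        rw [(hH c v hv.1).deriv]
        have h1 : c < x * (Ψ v / Ψ (v * x)) := hδ' ⟨hv.1, hv.2.le⟩
        exact div_nonpos_of_nonpos_of_nonneg (by linarith) (hpos v hv.1).le
    filter_upwards [hbig (-(G (δ * x) - c * G δ)) (c - a) (by linarith), Ioc_mem_nhdsGT hδ,
      hGtop.eventually_gt_atTop 0] with v h1 h2 h3
    have h4 := hm h2 (right_mem_Ioc.2 hδ) h2.2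
    simp only at h4
    rw [lt_div_iff₀ h3]
    linarith
  · intro a ha
    obtain ⟨c, hc, hac⟩ := exists_between ha
    have he := hr.eventually_lt_const hc
    obtain ⟨δ, hδ, hδ'⟩ := mem_nhdsGT_iff_exists_Ioc_subset.1 he
    have hδ : 0 < δ := hδ
    have hm : MonotoneOn (fun v => G (v * x) - c * G v) (Ioc 0 δ) := by
      refine monotoneOn_of_deriv_nonneg (convex_Ioc 0 δ)
        (fun v hv => (hH c v hv.1).continuousAt.continuousWithinAt)
        (fun v hv => ?_) (fun v hv => ?_)
      · rw [interior_Ioc] at hv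
        exact (hH c v hv.1).differentiableAt.differentiableWithinAt
      · rw [interior_Ioc] at hv
        rw [(hH c v hv.1).deriv]
        have h1 : x * (Ψ v / Ψ (v * x)) < c := hδ' ⟨hv.1, hv.2.le⟩
        exact div_nonneg (by linarith) (hpos v hv.1).le
    filter_upwards [hbig (G (δ * x) - c * G δ) (a - c) (by linarith), Ioc_mem_nhdsGT hδ,
      hGtop.eventually_gt_atTop 0] with v h1 h2 h3
    have h4 := hm h2 (right_mem_Ioc.2 hδ) h2.2
    simp only at h4
    rw [div_lt_iff₀ h3]
    linarith

theorem aux_ode (Ψ G φ : ℝ → ℝ) (hpos : ∀ u, 0 < u → 0 < Ψ u)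
    (hG : ∀ v, 0 < v → HasDerivAt G (-(1 / Ψ v)) v)
    (hφ : ∀ t, 0 < t → 0 < φ t) (hd : ∀ t, 0 < t → HasDerivAt φ (-Ψ (φ t)) t)
    (s t : ℝ) (hs : 0 < s) (ht : 0 < t) : G (φ t) = G (φ s) + (t - s) := by
  have h1 : ∀ t, 0 < t → HasDerivAt (fun t => G (φ t) - t) 0 t := by
    intro t ht
    have := ((hG (φ t) (hφ t ht)).comp t (hd t ht)).sub (hasDerivAt_id t)
    refine this.congr_deriv ?_
    have := (hpos _ (hφ t ht)).ne'
    field_simp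
    ring
  have h2 : (fun t => G (φ t) - t) t = (fun t => G (φ t) - t) s := by
    refine isOpen_Ioi.is_const_of_deriv_eq_zero (s := Ioi (0:ℝ)) isPreconnected_Ioi
      (fun u hu => (h1 u hu).differentiableAt.differentiableWithinAt)
      (fun u hu => (h1 u hu).deriv) ht hs
  simp only at h2
  linarith

theorem aux_sand {ι : Type*} (l : Filter ι) (G : ℝ → ℝ) (κ : ℝ) (hanti : StrictAntiOn G (Ioi 0))
    (hGtop : Tendsto G (nhdsWithin 0 (Ioi 0)) atTop)
    (hRV : ∀ x, 0 < x →
      Tendsto (fun v => G (v * x) / G v) (nhdsWithin 0 (Ioi 0)) (nhds (x ^ (-κ))))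
    (b m : ι → ℝ) (hb : ∀ᶠ t in l, 0 < b t) (hm : Tendsto m l (nhdsWithin 0 (Ioi 0)))
    (x : ℝ) (hx : 0 < x) (hbm : Tendsto (fun t => b t / m t) l (nhds x)) :
    Tendsto (fun t => G (b t) / G (m t)) l (nhds (x ^ (-κ))) := by
  have hmpos : ∀ᶠ t in l, 0 < m t := hm.eventually self_mem_nhdsWithin
  have hGm : ∀ᶠ t in l, 0 < G (m t) := (hGtop.comp hm).eventually_gt_atTop 0
  have hcx : ContinuousAt (fun y : ℝ => y ^ (-κ)) x := Real.continuousAt_rpow_const _ _ (Or.inl hx.ne')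
  rw [tendsto_order]
  constructor
  · intro a ha
    obtain ⟨y, hy1, hy2⟩ := (((hcx.tendsto.eventually_const_lt ha).filter_mono
      (nhdsWithin_le_nhds (s := Ioi x))).and self_mem_nhdsWithin).exists
    have hy2 : x < y := hy2
    have hy0 : 0 < y := hx.trans hy2
    filter_upwards [hbm.eventually_lt_const hy2, hb, hmpos, hGm,
      ((hRV y hy0).comp hm).eventually_const_lt hy1] with t h1 h2 h3 h4 h5
    refine lt_of_lt_of_le h5 ?_
    rw [div_lt_iff₀ h3, mul_comm] at h1
    exact div_le_div_of_nonneg_right (hanti.antitoneOn h2 (mul_pos h3 hy0) h1.le) h4.le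
  · intro a ha
    obtain ⟨y, ⟨hy1, hy0⟩, hy2⟩ := ((((hcx.tendsto.eventually_lt_const ha).and
      (Ioi_mem_nhds hx)).filter_mono
      (nhdsWithin_le_nhds (s := Iio x))).and self_mem_nhdsWithin).exists
    have hy2 : y < x := hy2
    have hy0 : 0 < y := hy0
    filter_upwards [hbm.eventually_const_lt hy2, hb, hmpos, hGm,
      ((hRV y hy0).comp hm).eventually_lt_const hy1] with t h1 h2 h3 h4 h5
    refine lt_of_le_of_lt ?_ h5
    rw [lt_div_iff₀ h3, mul_comm] at h1
    exact div_le_div_of_nonneg_right (hanti.antitoneOn (mul_pos h3 hy0) h2 h1.le) h4.le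

theorem aux_inv {ι : Type*} (l : Filter ι) (G : ℝ → ℝ) (κ : ℝ) (hκ : 0 < κ)
    (hanti : StrictAntiOn G (Ioi 0))
    (hGtop : Tendsto G (nhdsWithin 0 (Ioi 0)) atTop)
    (hRV : ∀ x, 0 < x →
      Tendsto (fun v => G (v * x) / G v) (nhdsWithin 0 (Ioi 0)) (nhds (x ^ (-κ))))
    (b m : ι → ℝ) (hb : ∀ᶠ t in l, 0 < b t) (hm : Tendsto m l (nhdsWithin 0 (Ioi 0)))
    (K : ℝ) (hK : 0 < K) (hbm : Tendsto (fun t => G (b t) / G (m t)) l (nhds K)) :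
    Tendsto (fun t => b t / m t) l (nhds (K ^ (-(1 / κ)))) := by
  have hmpos : ∀ᶠ t in l, 0 < m t := hm.eventually self_mem_nhdsWithin
  have hGm : ∀ᶠ t in l, 0 < G (m t) := (hGtop.comp hm).eventually_gt_atTop 0
  have hy0 : 0 < K ^ (-(1 / κ)) := Real.rpow_pos_of_pos hK _
  have hyK : (K ^ (-(1 / κ))) ^ (-κ) = K := by
    rw [← Real.rpow_mul hK.le]
    have : -(1 / κ) * -κ = 1 := by field_simp
    rw [this, Real.rpow_one]
  rw [tendsto_order]
  constructor
  · intro a ha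
    rcases le_or_gt a 0 with h0 | h0
    · filter_upwards [hb, hmpos] with t h1 h2
      exact lt_of_le_of_lt h0 (div_pos h1 h2)
    · have h1 : K < a ^ (-κ) := by
        rw [← hyK]; exact Real.rpow_lt_rpow_of_neg h0 ha (neg_lt_zero.2 hκ)
      obtain ⟨c, hc1, hc2⟩ := exists_between h1
      filter_upwards [hb, hmpos, hGm, hbm.eventually_lt_const hc1,
        ((hRV a h0).comp hm).eventually_const_lt hc2] with t h1 h2 h3 h4 h5
      have h6 := h4.trans h5
      simp only [Function.comp] at h6
      rw [div_lt_div_iff_of_pos_right h3, hanti.lt_iff_gt h1 (mul_pos h2 h0)] at h6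
      rw [lt_div_iff₀ h2]; linarith
  · intro a ha
    have h0 : 0 < a := hy0.trans ha
    have h1 : a ^ (-κ) < K := by
      refine lt_of_lt_of_eq ?_ hyK
      exact Real.rpow_lt_rpow_of_neg hy0 ha (neg_lt_zero.2 hκ)
    obtain ⟨c, hc1, hc2⟩ := exists_between h1
    filter_upwards [hb, hmpos, hGm, hbm.eventually_const_lt hc2,
      ((hRV a h0).comp hm).eventually_lt_const hc1] with t h1 h2 h3 h4 h5
    have h6 := h5.trans h4
    simp only [Function.comp] at h6
    rw [div_lt_div_iff_of_pos_right h3, hanti.lt_iff_gt (mul_pos h2 h0) h1] at h6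
    rw [div_lt_iff₀ h2]; linarith

theorem aux_dyn (G : ℝ → ℝ) (κ ρ t₀ : ℝ) (hκ : 0 < κ) (ht₀ : 0 < t₀)
    (hanti : StrictAntiOn G (Ioi 0))
    (hRV : Tendsto G (nhdsWithin 0 (Ioi 0)) atTop → ∀ x, 0 < x →
      Tendsto (fun v => G (v * x) / G v) (nhdsWithin 0 (Ioi 0)) (nhds (x ^ (-κ))))
    (m : ℝ → ℝ) (hm : ∀ t, 0 < t → 0 < m t)
    (hGm : ∀ t, 0 < t → G (m t) = G (m t₀) + (t - t₀))
    (φ : ℝ → ℝ → ℝ) (hφ : ∀ t q, 0 < t → 0 < q → 0 < φ t q)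
    (hGφ : ∀ t q, 0 < t → 0 < q → G (φ t q) = G (φ t₀ q) + (t - t₀))
    (hc : ContinuousOn (φ t₀) (Ioi 0)) (hmono : MonotoneOn (φ t₀) (Ioi 0))
    (h0 : Tendsto (φ t₀) (nhdsWithin 0 (Ioi 0)) (nhds 0))
    (h1 : Tendsto (φ t₀) atTop (nhds (m t₀)))
    (hrv : ∀ c, 0 < c →
      Tendsto (fun q => φ t₀ (c * q) / φ t₀ q) (nhdsWithin 0 (Ioi 0)) (nhds (c ^ ρ))) :
    ∃ lam : ℝ → ℝ, (∀ t : ℝ, 0 < t → 0 < lam t) ∧ Tendsto lam atTop (nhds 0) ∧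
      ∀ q, 0 < q → Tendsto (fun t => φ t (q * lam t) / m t) atTop
        (nhds ((1 + q ^ (-(ρ * κ))) ^ (-(1 / κ)))) := by
  have hGtop : Tendsto G (nhdsWithin 0 (Ioi 0)) atTop := by
    rw [tendsto_atTop]
    intro C
    set t := max t₀ (C - G (m t₀) + t₀) with ht
    have htp : 0 < t := lt_of_lt_of_le ht₀ (le_max_left _ _)
    have hC : C ≤ G (m t) := by
      rw [hGm t htp]; linarith [le_max_right t₀ (C - G (m t₀) + t₀)]
    filter_upwards [Ioc_mem_nhdsGT (hm t htp)] with v hv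
    exact hC.trans (hanti.antitoneOn hv.1 (hm t htp) hv.2)
  have hRV := hRV hGtop
  have hm0 : Tendsto m atTop (nhdsWithin 0 (Ioi 0)) := by
    rw [tendsto_nhdsWithin_iff]
    refine ⟨?_, by filter_upwards [eventually_gt_atTop 0] with t ht using hm t ht⟩
    rw [tendsto_order]
    constructor
    · intro a ha
      filter_upwards [eventually_gt_atTop 0] with t ht using ha.trans (hm t ht)
    · intro a ha
      filter_upwards [eventually_gt_atTop 0, eventually_gt_atTop (G a - G (m t₀) + t₀)]
        with t ht ht2
      have : G a < G (m t) := by rw [hGm t ht]; linarith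
      exact (hanti.lt_iff_gt ha (hm t ht)).1 this
  have hex : ∀ t, ∃ l, 0 < l ∧ (t₀ < t → φ t₀ l = m t) := by
    intro t
    by_cases htt : t₀ < t
    · have htp : 0 < t := ht₀.trans htt
      have hlt : m t < m t₀ := by
        have : G (m t₀) < G (m t) := by rw [hGm t htp]; linarith
        exact (hanti.lt_iff_gt (hm _ ht₀) (hm t htp)).1 this
      obtain ⟨q1, hq1, hq1'⟩ := ((h0.eventually_lt_const (hm t htp)).and
        self_mem_nhdsWithin).exists
      obtain ⟨q2, hq2, hq2'⟩ := ((h1.eventually_const_lt hlt).and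
        (eventually_gt_atTop 0)).exists
      obtain ⟨l, hl, hl'⟩ := isPreconnected_Ioi.intermediate_value hq1' (show q2 ∈ Ioi (0:ℝ) from hq2')
        hc ⟨hq1.le, hq2.le⟩
      exact ⟨l, hl, fun _ => hl'⟩
    · exact ⟨1, one_pos, fun h => absurd h htt⟩
  choose lam hlam hlam' using hex
  have hl0 : Tendsto lam atTop (nhds 0) := by
    rw [tendsto_order]
    constructor
    · intro a ha
      exact Eventually.of_forall fun t => ha.trans (hlam t)
    · intro a ha
      have hm0' := (hm0.mono_right nhdsWithin_le_nhds)
      filter_upwards [hm0'.eventually_lt_const (hφ t₀ a ht₀ ha), eventually_gt_atTop t₀] with t h1 h2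
      by_contra hcon
      push Not at hcon
      have := hmono ha (hlam t) hcon
      rw [hlam' t h2] at this
      linarith
  have hl0' : Tendsto lam atTop (nhdsWithin 0 (Ioi 0)) :=
    tendsto_nhdsWithin_iff.2 ⟨hl0, Eventually.of_forall hlam⟩
  refine ⟨lam, fun t _ => hlam t, hl0, fun q hq => ?_⟩
  have hqr : 0 < q ^ ρ := Real.rpow_pos_of_pos hq _
  refine aux_inv atTop G κ hκ hanti hGtop hRV _ m ?_ hm0 _ (by positivity) ?_
  · filter_upwards [eventually_gt_atTop 0] with t ht using hφ t _ ht (mul_pos hq (hlam t))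
  have hs : Tendsto (fun t => G (φ t₀ (q * lam t)) / G (m t)) atTop (nhds ((q ^ ρ) ^ (-κ))) := by
    refine aux_sand atTop G κ hanti hGtop hRV _ m ?_ hm0 _ hqr ?_
    · exact Eventually.of_forall fun t => hφ t₀ _ ht₀ (mul_pos hq (hlam t))
    · refine ((hrv q hq).comp hl0').congr' ?_
      filter_upwards [eventually_gt_atTop t₀] with t ht
      simp only [Function.comp]
      rw [hlam' t ht]
  rw [← Real.rpow_mul hq.le, mul_neg] at hs
  have hGmt : Tendsto (fun t => G (m t)) atTop atTop := hGtop.comp hm0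
  have h2 : Tendsto (fun t => 1 - G (m t₀) / G (m t)) atTop (nhds (1 - 0)) :=
    tendsto_const_nhds.sub (tendsto_const_nhds.div_atTop hGmt)
  rw [sub_zero] at h2
  refine (h2.add hs).congr' ?_
  filter_upwards [eventually_gt_atTop 0, hGmt.eventually_gt_atTop 0] with t ht hg
  rw [hGφ t _ ht (mul_pos hq (hlam t))]
  have h3 := hGm t ht
  field_simp
  linarith

def auxk (z : ℝ) : ℝ := (1 - Real.exp (-z) - z * Real.exp (-z)) / z ^ 2

theorem auxk_num (z : ℝ) : 0 ≤ 1 - Real.exp (-z) - z * Real.exp (-z) := by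
  have h1 := Real.add_one_le_exp z
  have h2 : Real.exp (-z) * Real.exp z = 1 := by rw [← Real.exp_add]; simp
  have h3 := Real.exp_pos (-z)
  nlinarith

theorem auxk_nonneg (z : ℝ) : 0 ≤ auxk z := div_nonneg (auxk_num z) (sq_nonneg z)

theorem auxk_pos (z : ℝ) (hz : 0 < z) : 0 < auxk z := by
  refine div_pos ?_ (by positivity)
  have h1 := Real.add_one_lt_exp hz.ne'
  have h2 : Real.exp (-z) * Real.exp z = 1 := by rw [← Real.exp_add]; simp
  have h3 := Real.exp_pos (-z)
  nlinarith

theorem auxk_le_one (z : ℝ) (hz : 0 < z) : auxk z ≤ 1 := by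
  rw [auxk, div_le_one (by positivity)]
  have h1 := Real.add_one_le_exp (-z)
  nlinarith

theorem auxk_le_inv (z : ℝ) (hz : 0 < z) : auxk z ≤ z ^ (-2 : ℝ) := by
  rw [auxk, Real.rpow_neg hz.le, ← one_div]
  norm_cast
  refine div_le_div_of_nonneg_right ?_ (by positivity)
  have h3 := Real.exp_pos (-z)
  nlinarith

theorem auxk_meas : Measurable auxk := by unfold auxk; fun_prop

theorem auxk_lint (a : ℝ) (ha : 0 < a) :
    ∫⁻ z in Ici a, ENNReal.ofReal (auxk z) = ENNReal.ofReal ((1 - Real.exp (-a)) / a) := by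
  rw [← setLIntegral_congr Ioi_ae_eq_Ici]
  have hd : ∀ z ∈ Ici a, HasDerivAt (fun z => -((1 - Real.exp (-z)) / z)) (auxk z) z := by
    intro z hz
    have hz : 0 < z := lt_of_lt_of_le ha hz
    have h1 : HasDerivAt (fun z => 1 - Real.exp (-z)) (-(Real.exp (-z) * (-1))) z :=
      ((hasDerivAt_id z).neg.exp).const_sub 1
    refine ((h1.div (hasDerivAt_id z) hz.ne').neg).congr_deriv ?_
    simp only [auxk, id]
    field_simp
    ring
  have hnn : ∀ z ∈ Ioi a, 0 ≤ auxk z := fun z _ => auxk_nonneg z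
  have hl : Tendsto (fun z => -((1 - Real.exp (-z)) / z)) atTop (nhds 0) := by
    have h1 : Tendsto (fun z : ℝ => 1 - Real.exp (-z)) atTop (nhds (1 - 0)) :=
      tendsto_const_nhds.sub Real.tendsto_exp_neg_atTop_nhds_zero
    simpa using (h1.div_atTop tendsto_id).neg
  rw [← ofReal_integral_eq_lintegral_ofReal (integrableOn_Ioi_deriv_of_nonneg' hd hnn hl)
    (ae_of_all _ auxk_nonneg), integral_Ioi_of_hasDerivAt_of_nonneg' hd hnn hl]
  simp

theorem auxU_int (μ : Measure ℝ) [IsFiniteMeasure μ] (w : ℝ) :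
    IntegrableOn (fun y : ℝ => y) (Ioc 0 w) μ := by
  refine Measure.integrableOn_of_bounded (M := w) (measure_ne_top _ _) (by fun_prop) ?_
  filter_upwards [ae_restrict_mem measurableSet_Ioc] with y hy
  rw [Real.norm_eq_abs, abs_of_pos hy.1]; exact hy.2

theorem auxU_mono (μ : Measure ℝ) [IsFiniteMeasure μ] :
    Monotone (fun w : ℝ => ∫ y in Ioc (0:ℝ) w, y ∂μ) := by
  intro a b hab
  refine setIntegral_mono_set (auxU_int μ b) ?_ (Ioc_subset_Ioc_right hab).eventuallyLE
  filter_upwards [ae_restrict_mem measurableSet_Ioc] with y hy using hy.1.le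

theorem auxU_nonneg (μ : Measure ℝ) (w : ℝ) :
    0 ≤ ∫ y in Ioc (0:ℝ) w, y ∂μ := 
  setIntegral_nonneg measurableSet_Ioc fun _ hy => hy.1.le

theorem aux_int1 (μ : Measure ℝ) [IsFiniteMeasure μ] (q : ℝ) (hq : 0 ≤ q) :
    IntegrableOn (fun x => 1 - Real.exp (-(q * x))) (Ioi 0) μ := by
  refine Measure.integrableOn_of_bounded (M := 1) (measure_ne_top _ _) (by fun_prop) ?_
  filter_upwards [ae_restrict_mem measurableSet_Ioi] with y hy
  have hy : 0 < y := hy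
  have h1 : Real.exp (-(q * y)) ≤ 1 := Real.exp_le_one_iff.2 (by
    have : 0 ≤ q * y := by positivity
    linarith)
  have h2 := Real.exp_pos (-(q * y))
  rw [Real.norm_eq_abs, abs_le]; constructor <;> linarith

theorem aux_fubini (μ : Measure ℝ) [IsFiniteMeasure μ] (x : ℝ) (hx : 0 < x) :
    x * ∫ y in Ioi (0:ℝ), (1 - Real.exp (-(x⁻¹ * y))) ∂μ
      = ∫ z in Ioi (0:ℝ), auxk z * ∫ y in Ioc (0:ℝ) (z * x), y ∂μ := by
  have hnn : ∀ y ∈ Ioi (0:ℝ), 0 ≤ 1 - Real.exp (-(x⁻¹ * y)) := by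
    intro y hy
    have hy : 0 < y := hy
    have h1 : Real.exp (-(x⁻¹ * y)) ≤ 1 := Real.exp_le_one_iff.2 (by
      have : 0 ≤ x⁻¹ * y := by positivity
      linarith)
    linarith
  have hL : 0 ≤ x * ∫ y in Ioi (0:ℝ), (1 - Real.exp (-(x⁻¹ * y))) ∂μ :=
    mul_nonneg hx.le (setIntegral_nonneg measurableSet_Ioi hnn)
  have hmeasU : Measurable (fun w : ℝ => ∫ y in Ioc (0:ℝ) w, y ∂μ) := (auxU_mono μ).measurable
  rw [integral_eq_lintegral_of_nonneg_ae
    (ae_of_all _ fun z => mul_nonneg (auxk_nonneg z) (auxU_nonneg μ _))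
    (auxk_meas.mul (hmeasU.comp (measurable_id'.mul_const x))).aestronglyMeasurable]
  rw [← ENNReal.toReal_ofReal hL]
  congr 1
  rw [← integral_const_mul, ofReal_integral_eq_lintegral_ofReal
    ((aux_int1 μ x⁻¹ (by positivity)).const_mul x) (by
      filter_upwards [ae_restrict_mem measurableSet_Ioi] with y hy
      exact mul_nonneg hx.le (hnn y hy))]
  have hS : MeasurableSet {p : ℝ × ℝ | p.1 ≤ p.2 * x} :=
    measurableSet_le measurable_fst (measurable_snd.mul_const x)
  set F : ℝ → ℝ → ENNReal := fun y z =>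
    ({p : ℝ × ℝ | p.1 ≤ p.2 * x}).indicator
      (fun p => ENNReal.ofReal p.1 * ENNReal.ofReal (auxk p.2)) (y, z) with hF
  have hFm : Measurable (Function.uncurry F) := by
    have : Function.uncurry F = ({p : ℝ × ℝ | p.1 ≤ p.2 * x}).indicator
      (fun p => ENNReal.ofReal p.1 * ENNReal.ofReal (auxk p.2)) := by
      ext ⟨y, z⟩; rfl
    rw [this]
    refine Measurable.indicator ?_ hS
    exact (measurable_fst.ennreal_ofReal).mul ((auxk_meas.comp measurable_snd).ennreal_ofReal)
  have e1 : ∫⁻ y in Ioi (0:ℝ), ENNReal.ofReal (x * (1 - Real.exp (-(x⁻¹ * y)))) ∂μ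
      = ∫⁻ y in Ioi (0:ℝ), (∫⁻ z in Ioi (0:ℝ), F y z) ∂μ := by
    refine setLIntegral_congr_fun measurableSet_Ioi fun y hy => ?_
    have hy : 0 < y := hy
    have hyx : 0 < x⁻¹ * y := by positivity
    have : ∀ z, F y z = (Ici (x⁻¹ * y)).indicator
        (fun z => ENNReal.ofReal y * ENNReal.ofReal (auxk z)) z := by
      intro z
      simp only [hF, indicator, mem_ofPred_eq, mem_Ici]
      have : y ≤ z * x ↔ x⁻¹ * y ≤ z := by
        rw [inv_mul_le_iff₀ hx, mul_comm]
      simp only [this]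
    simp only [this]
    rw [setLIntegral_indicator measurableSet_Ici,
      inter_eq_left.2 (show Ici (x⁻¹ * y) ⊆ Ioi 0 from fun z hz => lt_of_lt_of_le hyx hz),
      lintegral_const_mul _ auxk_meas.ennreal_ofReal, auxk_lint _ hyx,
      ← ENNReal.ofReal_mul hy.le]
    congr 1
    field_simp
  have e2 : ∫⁻ z in Ioi (0:ℝ), ENNReal.ofReal (auxk z * ∫ y in Ioc (0:ℝ) (z * x), y ∂μ)
      = ∫⁻ z in Ioi (0:ℝ), (∫⁻ y in Ioi (0:ℝ), F y z ∂μ) := by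
    refine setLIntegral_congr_fun measurableSet_Ioi fun z hz => ?_
    have : ∀ y, F y z = (Iic (z * x)).indicator
        (fun y => ENNReal.ofReal y * ENNReal.ofReal (auxk z)) y := by
      intro y
      simp only [hF, indicator, mem_ofPred_eq, mem_Iic]
    simp only [this]
    rw [setLIntegral_indicator measurableSet_Iic, inter_comm, Ioi_inter_Iic,
      lintegral_mul_const _ (measurable_id'.ennreal_ofReal), ENNReal.ofReal_mul (auxk_nonneg z),
      mul_comm, ofReal_integral_eq_lintegral_ofReal (auxU_int μ _) (by
        filter_upwards [ae_restrict_mem measurableSet_Ioc] with y hy using hy.1.le)]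
  rw [e1, e2, lintegral_lintegral_swap hFm.aemeasurable]

theorem aux_potter (U : ℝ → ℝ) (hU : Monotone U) (hpos : ∀ᶠ x in atTop, 0 < U x) (ρ : ℝ)
    (hρ : 0 < ρ ∧ ρ ≤ 1)
    (hrv : ∀ z, 0 < z → Tendsto (fun x => U (z * x) / U x) atTop (nhds (z ^ (1 - ρ)))) :
    ∀ᶠ x in atTop, ∀ z, 1 ≤ z → U (z * x) / U x ≤ 2 * z ^ (1 - ρ / 2) := by
  have h2 : (2:ℝ) ^ (1 - ρ) < 2 ^ (1 - ρ / 2) :=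
    Real.rpow_lt_rpow_of_exponent_lt (by norm_num) (by linarith [hρ.1])
  obtain ⟨X, hX⟩ := eventually_atTop.1
    (((hrv 2 two_pos).eventually_lt_const h2).and (hpos.and (eventually_gt_atTop 0)))
  filter_upwards [eventually_ge_atTop X] with x hx z hz
  have hxp : 0 < x := (hX x hx).2.2
  have hUx : 0 < U x := (hX x hx).2.1
  have ind : ∀ n : ℕ, U (2 ^ n * x) ≤ ((2:ℝ) ^ (1 - ρ / 2)) ^ n * U x := by
    intro n
    induction n with
    | zero => simp
    | succ n ih =>
      have hge : X ≤ 2 ^ n * x := by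
        have : (1:ℝ) ≤ 2 ^ n := one_le_pow₀ (by norm_num)
        nlinarith
      have h3 := (hX _ hge).1
      rw [div_lt_iff₀ (hX _ hge).2.1] at h3
      have e : (2:ℝ) ^ (n + 1) * x = 2 * (2 ^ n * x) := by ring
      rw [e]
      refine h3.le.trans ?_
      have := mul_le_mul_of_nonneg_left ih (show (0:ℝ) ≤ 2 ^ (1 - ρ / 2) by positivity)
      refine this.trans_eq ?_
      ring
  obtain ⟨n, hn1, hn2⟩ := exists_nat_pow_near hz (show (1:ℝ) < 2 by norm_num)
  rw [div_le_iff₀ hUx]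
  have h4 : U (z * x) ≤ U (2 ^ (n + 1) * x) :=
    hU (mul_le_mul_of_nonneg_right hn2.le hxp.le)
  refine h4.trans ((ind (n + 1)).trans ?_)
  refine mul_le_mul_of_nonneg_right ?_ hUx.le
  rw [pow_succ, mul_comm]
  refine mul_le_mul ?_ ?_ (by positivity) (by norm_num)
  · calc (2:ℝ) ^ (1 - ρ / 2) ≤ 2 ^ (1:ℝ) :=
        Real.rpow_le_rpow_of_exponent_le (by norm_num) (by linarith [hρ.1])
      _ = 2 := by simp
  · rw [← Real.rpow_natCast, ← Real.rpow_mul (by norm_num), mul_comm, Real.rpow_mul (by norm_num),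
      Real.rpow_natCast]
    exact Real.rpow_le_rpow (by positivity) hn1 (by linarith [hρ.2])

theorem aux_karamata (U : ℝ → ℝ) (hU : Monotone U) (hU0 : ∀ x, 0 ≤ U x)
    (hpos : ∀ᶠ x in atTop, 0 < U x) (ρ : ℝ)
    (hρ : 0 < ρ ∧ ρ ≤ 1)
    (hrv : ∀ z, 0 < z → Tendsto (fun x => U (z * x) / U x) atTop (nhds (z ^ (1 - ρ)))) :
    ∃ C : ℝ, 0 < C ∧
      Tendsto (fun x => (∫ z in Ioi (0:ℝ), auxk z * U (z * x)) / U x) atTop (nhds C) := by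
  set B : ℝ → ℝ := fun z => if z ≤ 1 then 1 else 2 * z ^ (-1 - ρ / 2) with hB
  have hBi : IntegrableOn B (Ioi 0) := by
    rw [← Ioc_union_Ioi_eq_Ioi (zero_le_one (α := ℝ))]
    refine IntegrableOn.union ?_ ?_
    · refine IntegrableOn.congr_fun (f := fun _ => (1:ℝ)) (by simp) ?_ measurableSet_Ioc
      intro z hz
      simp [hB, hz.2]
    · refine IntegrableOn.congr_fun (f := fun z => 2 * z ^ (-1 - ρ / 2))
        ((integrableOn_Ioi_rpow_of_lt (by linarith [hρ.1]) one_pos).const_mul 2) ?_ measurableSet_Ioi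
      intro z hz
      have : ¬ z ≤ 1 := not_le.2 hz
      simp [hB, this]
  have hkB : ∀ z r : ℝ, 0 < z → 0 ≤ r → (z ≤ 1 → r ≤ 1) → (1 ≤ z → r ≤ 2 * z ^ (1 - ρ / 2)) →
      ‖auxk z * r‖ ≤ B z := by
    intro z r hz hr h1 h2
    rw [Real.norm_eq_abs, abs_of_nonneg (mul_nonneg (auxk_nonneg z) hr)]
    by_cases hz1 : z ≤ 1
    · simp only [hB, hz1, if_true]
      exact mul_le_one₀ (auxk_le_one z hz) hr (h1 hz1)
    · simp only [hB, hz1, if_false]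
      push Not at hz1
      calc auxk z * r ≤ z ^ (-2:ℝ) * (2 * z ^ (1 - ρ / 2)) :=
            mul_le_mul (auxk_le_inv z hz) (h2 hz1.le) hr (by positivity)
        _ = 2 * (z ^ (-2:ℝ) * z ^ (1 - ρ / 2)) := by ring
        _ = _ := by rw [← Real.rpow_add hz]; ring_nf
  have hlimB : ∀ z, 0 < z → ‖auxk z * z ^ (1 - ρ)‖ ≤ B z := by
    intro z hz
    refine hkB z _ hz (by positivity) (fun h => ?_) (fun h => ?_)
    · exact Real.rpow_le_one hz.le h (by linarith [hρ.2])
    · have h1 : z ^ (1 - ρ) ≤ z ^ (1 - ρ / 2) :=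
        Real.rpow_le_rpow_of_exponent_le h (by linarith [hρ.1])
      have : 0 ≤ z ^ (1 - ρ / 2) := by positivity
      linarith
  have hlimI : IntegrableOn (fun z => auxk z * z ^ (1 - ρ)) (Ioi 0) := by
    refine Integrable.mono' hBi ?_ ?_
    · exact (auxk_meas.mul (measurable_id.pow_const _)).aestronglyMeasurable
    · filter_upwards [ae_restrict_mem measurableSet_Ioi] with z hz using hlimB z hz
  refine ⟨∫ z in Ioi (0:ℝ), auxk z * z ^ (1 - ρ), ?_, ?_⟩
  · rw [setIntegral_pos_iff_support_of_nonneg_ae _ hlimI]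
    · have : Function.support (fun z => auxk z * z ^ (1 - ρ)) ∩ Ioi 0 = Ioi 0 := by
        refine inter_eq_right.2 fun z hz => ?_
        exact (mul_pos (auxk_pos z hz) (Real.rpow_pos_of_pos hz _)).ne'
      rw [this]; simp
    · filter_upwards [ae_restrict_mem measurableSet_Ioi] with z hz
      exact mul_nonneg (auxk_nonneg z) (Real.rpow_nonneg (le_of_lt hz) _)
  · have : ∀ x, (∫ z in Ioi (0:ℝ), auxk z * U (z * x)) / U x
        = ∫ z in Ioi (0:ℝ), auxk z * (U (z * x) / U x) := by
      intro x
      rw [← integral_div]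
      congr 1; ext z; ring
    simp only [this]
    refine tendsto_integral_filter_of_dominated_convergence B ?_ ?_ hBi ?_
    · refine Eventually.of_forall fun x => ?_
      exact (auxk_meas.mul ((hU.measurable.comp (measurable_id.mul_const x)).div_const _)).aestronglyMeasurable
    · filter_upwards [aux_potter U hU hpos ρ hρ hrv, hpos, eventually_gt_atTop 0] with x hx hx2 hx3
      filter_upwards [ae_restrict_mem measurableSet_Ioi] with z hz
      refine hkB z _ hz (div_nonneg (hU0 _) hx2.le) (fun h => ?_) (fun h => hx z h)
      rw [div_le_one hx2]
      exact hU (by nlinarith)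
    · filter_upwards [ae_restrict_mem measurableSet_Ioi] with z hz
      exact (hrv z hz).const_mul _

theorem aux_abel (μ : Measure ℝ) [IsFiniteMeasure μ] (ρ : ℝ) (hρ : 0 < ρ ∧ ρ ≤ 1)
    (L : ℝ → ℝ)
    (hLpos : ∀ᶠ x in atTop, 0 < L x)
    (hLslow : ∀ c : ℝ, 0 < c → Tendsto (fun x => L (c * x) / L x) atTop (nhds 1))
    (htail : Tendsto (fun x => (∫ y in Ioc (0:ℝ) x, y ∂μ) / (x ^ (1 - ρ) * L x))
      atTop (nhds 1)) (c : ℝ) (hc : 0 < c) :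
    Tendsto (fun q => (∫ x in Ioi (0:ℝ), (1 - Real.exp (-((c * q) * x))) ∂μ) /
      (∫ x in Ioi (0:ℝ), (1 - Real.exp (-(q * x))) ∂μ)) (nhdsWithin 0 (Ioi 0)) (nhds (c ^ ρ)) := by
  set U : ℝ → ℝ := fun w => ∫ y in Ioc (0:ℝ) w, y ∂μ with hUdef
  have hU0 : ∀ x, 0 ≤ U x := auxU_nonneg μ
  have hUm : Monotone U := auxU_mono μ
  have hpos : ∀ᶠ x in atTop, 0 < U x := by
    filter_upwards [htail.eventually_ne one_ne_zero] with x hx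
    refine lt_of_le_of_ne (hU0 x) fun h => hx ?_
    change U x / _ = 0
    rw [← h, zero_div]
  have hrv : ∀ z, 0 < z → Tendsto (fun x => U (z * x) / U x) atTop (nhds (z ^ (1 - ρ))) := by
    intro z hz
    have hzx : Tendsto (fun x : ℝ => z * x) atTop atTop := tendsto_id.const_mul_atTop hz
    have h1 := htail.comp hzx
    have h2 := ((h1.mul (hLslow z hz)).mul (htail.inv₀ one_ne_zero)).const_mul (z ^ (1 - ρ))
    simp only [mul_one, inv_one] at h2
    refine h2.congr' ?_
    filter_upwards [hpos, hLpos, eventually_gt_atTop 0, hzx.eventually hLpos] with x a1 a2 a3 a4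
    simp only [Function.comp]
    change z ^ (1 - ρ) * (U (z * x) / ((z * x) ^ (1 - ρ) * L (z * x)) * (L (z * x) / L x) *
      (U x / (x ^ (1 - ρ) * L x))⁻¹) = U (z * x) / U x
    rw [Real.mul_rpow hz.le a3.le]
    have b1 : 0 < z ^ (1 - ρ) := Real.rpow_pos_of_pos hz _
    have b2 : 0 < x ^ (1 - ρ) := Real.rpow_pos_of_pos a3 _
    field_simp
  obtain ⟨C, hC, hlim⟩ := aux_karamata U hUm hU0 hpos ρ hρ hrv
  set φ : ℝ → ℝ := fun q => ∫ x in Ioi (0:ℝ), (1 - Real.exp (-(q * x))) ∂μ with hφ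
  have hlim' : Tendsto (fun x => x * φ x⁻¹ / U x) atTop (nhds C) := by
    refine hlim.congr' ?_
    filter_upwards [eventually_gt_atTop 0] with x hx
    rw [← aux_fubini μ x hx]
  have hcx : Tendsto (fun x : ℝ => c⁻¹ * x) atTop atTop := tendsto_id.const_mul_atTop (by positivity)
  have h3 := (((hlim'.comp hcx).mul (hrv c⁻¹ (by positivity))).mul (hlim'.inv₀ hC.ne')).const_mul c
  have e : c * (C * c⁻¹ ^ (1 - ρ) * C⁻¹) = c ^ ρ := by
    rw [Real.inv_rpow hc.le, ← Real.rpow_neg hc.le]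
    have : c ^ ρ = c * c ^ (-(1 - ρ)) := by
      nth_rewrite 2 [← Real.rpow_one c]
      rw [← Real.rpow_add hc]; congr 1; ring
    rw [this]; field_simp
  rw [e] at h3
  have h4 : Tendsto (fun x => φ (c * x⁻¹) / φ x⁻¹) atTop (nhds (c ^ ρ)) := by
    refine h3.congr' ?_
    filter_upwards [hpos, hcx.eventually hpos, eventually_gt_atTop 0,
      hlim'.eventually_ne hC.ne'] with x a1 a2 a3 a4
    simp only [Function.comp]
    have : (c⁻¹ * x)⁻¹ = c * x⁻¹ := by rw [mul_inv, inv_inv]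
    rw [this]
    have a5 : φ x⁻¹ ≠ 0 := by
      intro h; rw [h] at a4; simp at a4
    have a1 := a1.ne'
    have a2 := a2.ne'
    generalize φ x⁻¹ = p at *
    generalize φ (c * x⁻¹) = p2 at *
    generalize U (c⁻¹ * x) = u2 at *
    field_simp
  refine (h4.comp tendsto_inv_nhdsGT_zero).congr fun q => ?_
  simp [hφ]

theorem aux_phi (μ : Measure ℝ) [IsFiniteMeasure μ] :
    ContinuousOn (fun q : ℝ => ∫ x in Ioi (0:ℝ), (1 - Real.exp (-(q * x))) ∂μ) (Ioi 0) ∧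
    MonotoneOn (fun q : ℝ => ∫ x in Ioi (0:ℝ), (1 - Real.exp (-(q * x))) ∂μ) (Ioi 0) ∧
    Tendsto (fun q : ℝ => ∫ x in Ioi (0:ℝ), (1 - Real.exp (-(q * x))) ∂μ)
      (nhdsWithin 0 (Ioi 0)) (nhds 0) ∧
    Tendsto (fun q : ℝ => ∫ x in Ioi (0:ℝ), (1 - Real.exp (-(q * x))) ∂μ)
      atTop (nhds (μ (Ioi 0)).toReal) := by
  have hbd : ∀ q : ℝ, 0 < q → ∀ᵐ x ∂(μ.restrict (Ioi 0)), ‖1 - Real.exp (-(q * x))‖ ≤ 1 := by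
    intro q hq
    filter_upwards [ae_restrict_mem measurableSet_Ioi] with y hy
    have hy : 0 < y := hy
    have h1 : Real.exp (-(q * y)) ≤ 1 := Real.exp_le_one_iff.2 (by
      have : 0 ≤ q * y := by positivity
      linarith)
    have h2 := Real.exp_pos (-(q * y))
    rw [Real.norm_eq_abs, abs_le]; constructor <;> linarith
  refine ⟨?_, ?_, ?_, ?_⟩
  · refine continuousOn_of_dominated (bound := fun _ => 1) (fun q hq => by fun_prop)
      (fun q hq => hbd q hq) (integrable_const _) (ae_of_all _ fun x => by fun_prop)
  · intro q hq r hr hqr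
    refine setIntegral_mono_on (aux_int1 μ q (le_of_lt hq)) (aux_int1 μ r (le_of_lt hr))
      measurableSet_Ioi fun x hx => ?_
    have hx : 0 < x := hx
    have : Real.exp (-(r * x)) ≤ Real.exp (-(q * x)) := Real.exp_le_exp.2 (by nlinarith)
    linarith
  · have : Tendsto (fun q : ℝ => ∫ x in Ioi (0:ℝ), (1 - Real.exp (-(q * x))) ∂μ)
      (nhdsWithin 0 (Ioi 0)) (nhds (∫ x in Ioi (0:ℝ), (0:ℝ) ∂μ)) := by
      refine tendsto_integral_filter_of_dominated_convergence (fun _ => 1)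
        (Eventually.of_forall fun q => by fun_prop) ?_ (integrable_const _)
        (ae_of_all _ fun x => ?_)
      · filter_upwards [self_mem_nhdsWithin] with q hq using hbd q hq
      · have hc : Continuous (fun q : ℝ => 1 - Real.exp (-(q * x))) := by fun_prop
        have := hc.tendsto 0
        simp only [zero_mul, neg_zero, Real.exp_zero, sub_self] at this
        exact this.mono_left nhdsWithin_le_nhds
    simpa using this
  · have : Tendsto (fun q : ℝ => ∫ x in Ioi (0:ℝ), (1 - Real.exp (-(q * x))) ∂μ)
      atTop (nhds (∫ x in Ioi (0:ℝ), (1:ℝ) ∂μ)) := by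
      refine tendsto_integral_filter_of_dominated_convergence (fun _ => 1)
        (Eventually.of_forall fun q => by fun_prop) ?_ (integrable_const _) ?_
      · filter_upwards [eventually_gt_atTop 0] with q hq using hbd q hq
      · filter_upwards [ae_restrict_mem measurableSet_Ioi] with x hx
        have h1 : Tendsto (fun q : ℝ => q * x) atTop atTop := tendsto_id.atTop_mul_const hx
        have := (tendsto_const_nhds (x := (1:ℝ))).sub (Real.tendsto_exp_neg_atTop_nhds_zero.comp h1)
        simpa using this
    simpa [Measure.real] using this

theorem aux_phi_pos (μ : Measure ℝ) [IsFiniteMeasure μ] (h : μ (Ioi 0) ≠ 0) (q : ℝ) (hq : 0 < q) :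
    0 < ∫ x in Ioi (0:ℝ), (1 - Real.exp (-(q * x))) ∂μ := by
  have hp : ∀ x : ℝ, 0 < x → 0 < 1 - Real.exp (-(q * x)) := by
    intro x hx
    have : Real.exp (-(q * x)) < 1 := (fun h => by simpa using Real.exp_lt_exp.2 h : ∀ {a : ℝ}, a < 0 → Real.exp a < 1) (by
      have : 0 < q * x := by positivity
      linarith)
    linarith
  rw [setIntegral_pos_iff_support_of_nonneg_ae _ (aux_int1 μ q hq.le)]
  · rw [inter_eq_right.2 (show Ioi 0 ⊆ Function.support (fun x => 1 - Real.exp (-(q * x))) from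
      fun x hx => (hp x hx).ne')]
    exact pos_iff_ne_zero.2 h
  · filter_upwards [ae_restrict_mem measurableSet_Ioi] with x hx using (hp x hx).le

theorem aux_g (κ ρ : ℝ) (hκ : 0 < κ) (hρ : 0 < ρ) :
    Tendsto (fun q : ℝ => (1 + q ^ (-(ρ * κ))) ^ (-(1 / κ))) (nhdsWithin 0 (Ioi 0)) (nhds 0) ∧
    Tendsto (fun q : ℝ => (1 + q ^ (-(ρ * κ))) ^ (-(1 / κ))) atTop (nhds 1) := by
  have hρκ : 0 < ρ * κ := by positivity
  constructor
  · have h1 : Tendsto (fun q : ℝ => q ^ (-(ρ * κ))) (nhdsWithin 0 (Ioi 0)) atTop := by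
      refine ((tendsto_rpow_atTop hρκ).comp tendsto_inv_nhdsGT_zero).congr' ?_
      filter_upwards [self_mem_nhdsWithin] with q hq
      have hq : 0 < q := hq
      simp only [Function.comp]
      rw [Real.inv_rpow hq.le, Real.rpow_neg hq.le]
    exact (tendsto_rpow_neg_atTop (show 0 < 1 / κ by positivity)).comp
      (tendsto_atTop_add_const_left _ 1 h1)
  · have h1 := (tendsto_rpow_neg_atTop hρκ).const_add 1
    have h2 : ContinuousAt (fun y : ℝ => y ^ (-(1 / κ))) (1 + 0) :=
      Real.continuousAt_rpow_const _ _ (Or.inl (by norm_num))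
    have h3 := h2.tendsto.comp h1
    simp only [add_zero, Real.one_rpow] at h3
    exact h3

theorem aux_weak (ν : ℝ → Measure ℝ)
    (hfin : ∀ t : ℝ, 0 < t → IsFiniteMeasure (ν t))
    (hnz : ∀ t : ℝ, 0 < t → ν t (Ioi 0) ≠ 0)
    (lam : ℝ → ℝ) (hlam : ∀ t : ℝ, 0 < t → 0 < lam t) (g : ℝ → ℝ)
    (hg0 : Tendsto g (nhdsWithin 0 (Ioi 0)) (nhds 0)) (hg1 : Tendsto g atTop (nhds 1))
    (hlim : ∀ q : ℝ, 0 < q → Tendsto (fun t =>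
      (∫ x in Ioi (0:ℝ), (1 - Real.exp (-((q * lam t) * x))) ∂(ν t)) / ((ν t) (Ioi 0)).toReal)
      atTop (nhds (g q))) :
    ∃ F : Measure ℝ, IsProbabilityMeasure F ∧ F (Iic 0) = 0 ∧
        (∀ q : ℝ, 0 < q →
          ∫ x in Ioi (0:ℝ), (1 - Real.exp (-(q * x))) ∂F = g q) ∧
        (∀ f : ℝ → ℝ, ContinuousOn f (Ioi 0) →
          (∃ M : ℝ, ∀ x ∈ Ioi (0:ℝ), |f x| ≤ M) →
          Tendsto (fun t => (((ν t) (Ioi 0)).toReal)⁻¹ *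
              ∫ x in Ioi (0:ℝ), f (lam t * x) ∂(ν t)) atTop
            (nhds (∫ x in Ioi (0:ℝ), f x ∂F))) := by
  classical
  set τ : ℝ → ℝ → Icc (0:ℝ) 1 := fun t x => projIcc 0 1 zero_le_one (Real.exp (-(lam t * x)))
    with hτ
  have hτm : ∀ t, Measurable (τ t) := by
    intro t
    refine continuous_projIcc.measurable.comp (by fun_prop)
  have hτv : ∀ t x, 0 < t → 0 < x → ((τ t x : Icc (0:ℝ) 1) : ℝ) = Real.exp (-(lam t * x)) := by
    intro t x ht hx
    have h1 : Real.exp (-(lam t * x)) ≤ 1 := Real.exp_le_one_iff.2 (by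
      have := mul_pos (hlam t ht) hx
      linarith)
    simp only [hτ]
    rw [projIcc_of_mem zero_le_one ⟨(Real.exp_pos _).le, h1⟩]
  have hex : ∀ t, ∃ P : ProbabilityMeasure (Icc (0:ℝ) 1), 0 < t →
      (P : Measure (Icc (0:ℝ) 1)) =
        Measure.map (τ t) ((ν t (Ioi 0))⁻¹ • (ν t).restrict (Ioi 0)) := by
    intro t
    by_cases ht : 0 < t
    · have := hfin t ht
      have hp : IsProbabilityMeasure ((ν t (Ioi 0))⁻¹ • (ν t).restrict (Ioi 0)) := by
        constructor
        simp only [Measure.smul_apply, Measure.restrict_apply_univ, smul_eq_mul]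
        exact ENNReal.inv_mul_cancel (hnz t ht) (measure_ne_top _ _)
      exact ⟨⟨_, Measure.isProbabilityMeasure_map (hτm t).aemeasurable⟩, fun _ => rfl⟩
    · exact ⟨⟨Measure.dirac 0, inferInstance⟩, fun h => absurd h ht⟩
  choose P hP using hex
  have hint : ∀ t, 0 < t → ∀ h : ℝ → ℝ, Measurable h →
      ∫ y, h y ∂(P t : Measure (Icc (0:ℝ) 1))
        = ((ν t (Ioi 0)).toReal)⁻¹ * ∫ x in Ioi (0:ℝ), h (Real.exp (-(lam t * x))) ∂(ν t) := by
    intro t ht h hh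
    rw [hP t ht, integral_map (hτm t).aemeasurable
      (f := fun y : Icc (0:ℝ) 1 => h y)
      (hh.comp measurable_subtype_coe).aestronglyMeasurable, integral_smul_measure,
      ENNReal.toReal_inv, smul_eq_mul]
    congr 1
    refine setIntegral_congr_fun measurableSet_Ioi fun x hx => ?_
    rw [hτv t x ht hx]
  have hmpos : ∀ t, 0 < t → 0 < (ν t (Ioi 0)).toReal := by
    intro t ht
    have := hfin t ht
    exact ENNReal.toReal_pos (hnz t ht) (measure_ne_top _ _)
  have hPm : ∀ q : ℝ, 0 < q → Tendsto (fun t => ∫ y, (y:ℝ) ^ q ∂(P t : Measure (Icc (0:ℝ) 1)))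
      atTop (nhds (1 - g q)) := by
    intro q hq
    refine ((tendsto_const_nhds (x := (1:ℝ))).sub (hlim q hq)).congr' ?_
    filter_upwards [eventually_gt_atTop 0] with t ht
    have := hfin t ht
    rw [hint t ht (fun y => y ^ q) (measurable_id.pow_const q)]
    have e : ∀ x, Real.exp (-(lam t * x)) ^ q = 1 - (1 - Real.exp (-((q * lam t) * x))) := by
      intro x
      rw [← Real.exp_mul]; ring_nf
    simp only [e]
    rw [integral_sub (integrable_const _)
      (aux_int1 (ν t) _ (mul_pos hq (hlam t ht)).le)]
    have hm := (hmpos t ht).ne'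
    simp only [integral_const, Measure.real, Measure.restrict_apply_univ, smul_eq_mul, mul_one]
    field_simp
  obtain ⟨Q, hPQ, hQm, hQ0, hQ1⟩ := aux_cont_moment P g hg0 hg1 hPm
  have hlogm : Measurable (fun y : Icc (0:ℝ) 1 => -Real.log (y:ℝ)) :=
    (Real.measurable_log.comp measurable_subtype_coe).neg
  have hFint : ∀ f : ℝ → ℝ, Measurable ((Ioi (0:ℝ)).indicator f) →
      ∫ x in Ioi (0:ℝ), f x ∂(Measure.map (fun y : Icc (0:ℝ) 1 => -Real.log (y:ℝ))
        (Q : Measure (Icc (0:ℝ) 1)))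
      = ∫ y, (Ioi (0:ℝ)).indicator f (-Real.log (y:ℝ)) ∂(Q : Measure (Icc (0:ℝ) 1)) := by
    intro f hf
    rw [← integral_indicator measurableSet_Ioi, integral_map hlogm.aemeasurable
      hf.aestronglyMeasurable]
  refine ⟨Measure.map (fun y : Icc (0:ℝ) 1 => -Real.log (y:ℝ)) (Q : Measure (Icc (0:ℝ) 1)),
    Measure.isProbabilityMeasure_map hlogm.aemeasurable, ?_, ?_, ?_⟩
  · rw [Measure.map_apply hlogm measurableSet_Iic]
    refine measure_mono_null (t := {y | (y:ℝ) = 0} ∪ {y | (y:ℝ) = 1}) ?_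
      (measure_union_null hQ0 hQ1)
    intro y hy
    have hy : -Real.log (y:ℝ) ≤ 0 := hy
    by_contra hcon
    simp only [mem_union, mem_ofPred_eq, not_or] at hcon
    have h1 := Real.log_neg (lt_of_le_of_ne y.2.1 (Ne.symm hcon.1)) (lt_of_le_of_ne y.2.2 hcon.2)
    linarith
  · intro q hq
    rw [hFint _ (Measurable.indicator (by fun_prop) measurableSet_Ioi)]
    have : ∫ y, (Ioi (0:ℝ)).indicator (fun x => 1 - Real.exp (-(q * x))) (-Real.log (y:ℝ))
        ∂(Q : Measure (Icc (0:ℝ) 1)) = ∫ y, (1 - (y:ℝ) ^ q) ∂(Q : Measure (Icc (0:ℝ) 1)) := by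
      refine integral_congr_ae ?_
      have a0 : ∀ᵐ y : Icc (0:ℝ) 1 ∂(Q : Measure (Icc (0:ℝ) 1)), ¬ ((y:ℝ) = 0) := by
        rw [ae_iff]; simp only [not_not]; exact hQ0
      have a1 : ∀ᵐ y : Icc (0:ℝ) 1 ∂(Q : Measure (Icc (0:ℝ) 1)), ¬ ((y:ℝ) = 1) := by
        rw [ae_iff]; simp only [not_not]; exact hQ1
      filter_upwards [a0, a1] with y h0 h1
      have hy0 := lt_of_le_of_ne y.2.1 (Ne.symm h0)
      have h1 := Real.log_neg hy0 (lt_of_le_of_ne y.2.2 h1)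
      rw [indicator_of_mem (show -Real.log (y:ℝ) ∈ Ioi (0:ℝ) by simpa using h1),
        Real.rpow_def_of_pos hy0]
      ring_nf
    have i1 : Integrable (fun y : Icc (0:ℝ) 1 => (y:ℝ) ^ q) (Q : Measure (Icc (0:ℝ) 1)) :=
      (BoundedContinuousFunction.mkOfCompact
        ⟨_, (Real.continuous_rpow_const hq.le).comp continuous_subtype_val⟩).integrable _
    rw [this, integral_sub (integrable_const _) i1, hQm q hq]
    simp
  · rintro f hf ⟨M, hM⟩
    have hfm : Measurable ((Ioi (0:ℝ)).indicator f) := by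
      rw [← piecewise_eq_indicator]
      exact hf.measurable_piecewise continuousOn_const measurableSet_Ioi
    rw [hFint f hfm]
    have hM0 : 0 ≤ M := (abs_nonneg _).trans (hM 1 (mem_Ioi.2 one_pos))
    have hhm : Measurable (fun y : ℝ => (Ioi (0:ℝ)).indicator f (-Real.log y)) :=
      hfm.comp Real.measurable_log.neg
    have := aux_cut P Q hPQ hQ0 hQ1 (fun y => (Ioi (0:ℝ)).indicator f (-Real.log y)) ?_ M ?_ hhm
    · refine this.congr' ?_
      filter_upwards [eventually_gt_atTop 0] with t ht
      rw [hint t ht _ hhm]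
      congr 1
      refine setIntegral_congr_fun measurableSet_Ioi fun x hx => ?_
      simp only [Real.log_exp, neg_neg]
      exact indicator_of_mem (mul_pos (hlam t ht) hx) _
    · have h1 : ContinuousOn (fun y : ℝ => f (-Real.log y)) (Ioo 0 1) := by
        refine hf.comp (Real.continuousOn_log.mono ?_).neg ?_
        · intro y hy
          exact hy.1.ne'
        · intro y hy
          have := Real.log_neg hy.1 hy.2
          simpa using this
      refine h1.congr fun y hy => ?_
      have := Real.log_neg hy.1 hy.2
      exact indicator_of_mem (by simpa using this) _
    · intro y
      by_cases hy : -Real.log y ∈ Ioi (0:ℝ)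
      · rw [indicator_of_mem hy]; exact hM _ hy
      · rw [indicator_of_notMem hy]; simpa using hM0

/-- converse direction. If `Ψ` is a critical branching
mechanism regularly varying at 0 with index `γ ∈ (1,2]`, and at some time
`t₀` the mass distribution function satisfies
`∫_{(0,x]} y ν_{t₀}(dy) ∼ x^{1-ρ} L(x)` as `x → ∞` with `L` slowly
varying, then with `α(t) = ν_t((0,∞))⁻¹` and a suitable `λ(t) → 0`, the
rescaled measures converge weakly to the Mittag-Leffler law `F_{γ,ρ}`. -/
theorem converse_scaling_limit
    (Ψ : ℝ → ℝ) (β : ℝ) (π : Measure ℝ)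
    (hβ : 0 ≤ β)
    (hπfin : ∫⁻ x in Ioi (0:ℝ), ENNReal.ofReal (min x (x ^ 2)) ∂π < ⊤)
    (hΨ : ∀ u : ℝ, 0 < u →
      Ψ u = β * u ^ 2 + ∫ x in Ioi (0:ℝ), (Real.exp (-(u * x)) - 1 + u * x) ∂π)
    (γ : ℝ) (hγ : 1 < γ ∧ γ ≤ 2)
    (hreg : ∀ x : ℝ, 0 < x →
      Tendsto (fun t => Ψ (t * x) / Ψ t) (nhdsWithin 0 (Ioi 0)) (nhds (x ^ γ)))
    (ν : ℝ → Measure ℝ)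
    (hfin : ∀ t : ℝ, 0 < t → IsFiniteMeasure (ν t))
    (hnz : ∀ t : ℝ, 0 < t → ν t (Ioi 0) ≠ 0)
    (hconc : ∀ t : ℝ, 0 < t → ν t (Iic 0) = 0)
    (hode : ∀ q : ℝ, 0 < q → ∀ t : ℝ, 0 < t →
      HasDerivAt (fun u => ∫ x in Ioi (0:ℝ), (1 - Real.exp (-(q * x))) ∂(ν u))
        (-Ψ (∫ x in Ioi (0:ℝ), (1 - Real.exp (-(q * x))) ∂(ν t))) t)
    (hodeInf : ∀ t : ℝ, 0 < t →
      HasDerivAt (fun u => ((ν u) (Ioi 0)).toReal) (-Ψ (((ν t) (Ioi 0)).toReal)) t)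
    (t₀ : ℝ) (ht₀ : 0 < t₀) (ρ : ℝ) (hρ : 0 < ρ ∧ ρ ≤ 1)
    (L : ℝ → ℝ)
    (hLpos : ∀ᶠ x in atTop, 0 < L x)
    (hLslow : ∀ c : ℝ, 0 < c → Tendsto (fun x => L (c * x) / L x) atTop (nhds 1))
    (htail : Tendsto (fun x => (∫ y in Ioc (0:ℝ) x, y ∂(ν t₀)) / (x ^ (1 - ρ) * L x))
      atTop (nhds 1)) :
    ∃ lam : ℝ → ℝ, (∀ t : ℝ, 0 < t → 0 < lam t) ∧
      Tendsto lam atTop (nhds 0) ∧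
      ∃ F : Measure ℝ, IsProbabilityMeasure F ∧ F (Iic 0) = 0 ∧
        (∀ q : ℝ, 0 < q →
          ∫ x in Ioi (0:ℝ), (1 - Real.exp (-(q * x))) ∂F
            = (1 + q ^ (-(ρ * (γ - 1)))) ^ (-(1 / (γ - 1)))) ∧
        (∀ f : ℝ → ℝ, ContinuousOn f (Ioi 0) →
          (∃ M : ℝ, ∀ x ∈ Ioi (0:ℝ), |f x| ≤ M) →
          Tendsto (fun t => (((ν t) (Ioi 0)).toReal)⁻¹ *
              ∫ x in Ioi (0:ℝ), f (lam t * x) ∂(ν t)) atTop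
            (nhds (∫ x in Ioi (0:ℝ), f x ∂F))) := by
  obtain ⟨hΨc, hΨp⟩ := aux_psi Ψ β π hβ hπfin hΨ γ hreg
  obtain ⟨G, hG⟩ := aux_G Ψ hΨc hΨp
  have hκ : 0 < γ - 1 := by linarith [hγ.1]
  have hmpos : ∀ t, 0 < t → 0 < (ν t (Ioi 0)).toReal := by
    intro t ht
    have := hfin t ht
    exact ENNReal.toReal_pos (hnz t ht) (measure_ne_top _ _)
  have hφpos : ∀ t q : ℝ, 0 < t → 0 < q →
      0 < ∫ x in Ioi (0:ℝ), (1 - Real.exp (-(q * x))) ∂(ν t) := by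
    intro t q ht hq
    have := hfin t ht
    exact aux_phi_pos (ν t) (hnz t ht) q hq
  have hf0 := hfin t₀ ht₀
  obtain ⟨p1, p2, p3, p4⟩ := aux_phi (ν t₀)
  obtain ⟨lam, hlam, hlam0, hl⟩ := aux_dyn G (γ - 1) ρ t₀ hκ ht₀ (aux_G_anti Ψ G hΨp hG)
    (fun hGtop x hx => aux_G_rv Ψ G γ hΨp hreg hG hGtop x hx)
    (fun t => (ν t (Ioi 0)).toReal) hmpos
    (fun t ht => aux_ode Ψ G _ hΨp hG hmpos hodeInf t₀ t ht₀ ht)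
    (fun t q => ∫ x in Ioi (0:ℝ), (1 - Real.exp (-(q * x))) ∂(ν t)) hφpos
    (fun t q ht hq => aux_ode Ψ G
      (fun u => ∫ x in Ioi (0:ℝ), (1 - Real.exp (-(q * x))) ∂(ν u)) hΨp hG
      (fun u hu => hφpos u q hu hq) (hode q hq) t₀ t ht₀ ht)
    p1 p2 p3 p4 (fun c hc => aux_abel (ν t₀) ρ hρ L hLpos hLslow htail c hc)
  obtain ⟨g0, g1⟩ := aux_g (γ - 1) ρ hκ hρ.1
  exact ⟨lam, hlam, hlam0, aux_weak ν hfin hnz lam hlam _ g0 g1 hl⟩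
end
end

section
/- (Uniform Convergence Lemma.) Let f : (0,∞) → (0,∞) be monotone and regularly varying at infinity with index ρ ≠ 0, and let h : (0,∞) → (0,∞). Then for any λ ∈ [0,∞], f(x h(x))/f(x) → λ^ρ as x → ∞ if and only if h(x) → λ as x → ∞. Here λ^ρ is interpreted in [0,∞] with the conventions: for ρ > 0, 0^ρ = 0 and ∞^ρ = ∞; for ρ < 0, 0^ρ = ∞ and ∞^ρ = 0; and convergence to 0 or ∞ is understood in the sense of limits in [0,∞]. -/
open MeasureTheory Set Filter
open scoped ENNReal

noncomputable section

theorem ucl_abstract (H G : ℝ → ℝ≥0∞) (C : NNReal → ℝ → ℝ≥0∞) (ρ : ℝ) (hρ : 0 < ρ)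
    (A : ∀ c : NNReal, 0 < c → ∀ᶠ x in atTop, H x ≤ c → G x ≤ C c x)
    (B : ∀ c : NNReal, 0 < c → ∀ᶠ x in atTop, (c : ℝ≥0∞) ≤ H x → C c x ≤ G x)
    (T : ∀ c : NNReal, 0 < c → Tendsto (C c) atTop (nhds ((c : ℝ≥0∞) ^ ρ)))
    (lam : ℝ≥0∞) :
    Tendsto G atTop (nhds (lam ^ ρ)) ↔ Tendsto H atTop (nhds lam) := by
  have pos : ∀ (a : ℝ≥0∞) (c : NNReal), a < c → 0 < c := fun a c h => by
    exact ENNReal.coe_pos.1 (pos_of_gt h)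
  constructor
  · intro hG
    rw [tendsto_order]
    constructor
    · intro a ha
      obtain ⟨c, hac, hcl⟩ := ENNReal.lt_iff_exists_nnreal_btwn.1 ha
      have hc := pos a c hac
      obtain ⟨m, h1, h2⟩ := exists_between (ENNReal.rpow_lt_rpow hcl hρ)
      filter_upwards [A c hc, (T c hc).eventually_lt_const h1, hG.eventually_const_lt h2]
        with x h3 h4 h5
      by_contra h6
      exact absurd (h3 ((not_lt.1 h6).trans hac.le)) (not_le.2 (h4.trans h5))
    · intro a ha
      obtain ⟨c, hlc, hca⟩ := ENNReal.lt_iff_exists_nnreal_btwn.1 ha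
      have hc := pos lam c hlc
      obtain ⟨m, h1, h2⟩ := exists_between (ENNReal.rpow_lt_rpow hlc hρ)
      filter_upwards [B c hc, (T c hc).eventually_const_lt h2, hG.eventually_lt_const h1]
        with x h3 h4 h5
      by_contra h6
      exact absurd (h3 (hca.le.trans (not_lt.1 h6))) (not_le.2 (h5.trans h4))
  · intro hH
    rw [tendsto_order]
    constructor
    · intro a ha
      obtain ⟨c, hac, hcl⟩ := ENNReal.lt_iff_exists_nnreal_btwn.1
        ((ENNReal.rpow_inv_lt_iff hρ).2 ha)
      have hc := pos _ c hac
      filter_upwards [B c hc, (T c hc).eventually_const_lt ((ENNReal.rpow_inv_lt_iff hρ).1 hac),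
        hH.eventually_const_lt hcl] with x h3 h4 h5
      exact h4.trans_le (h3 h5.le)
    · intro a ha
      obtain ⟨c, hlc, hca⟩ := ENNReal.lt_iff_exists_nnreal_btwn.1
        ((ENNReal.lt_rpow_inv_iff hρ).2 ha)
      have hc := pos _ c hlc
      filter_upwards [A c hc, (T c hc).eventually_lt_const ((ENNReal.lt_rpow_inv_iff hρ).1 hca),
        hH.eventually_lt_const hlc] with x h3 h4 h5
      exact (h3 h5.le).trans_lt h4

theorem ucl_mono
    (f h : ℝ → ℝ) (ρ : ℝ) (hρ : ρ ≠ 0)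
    (hfpos : ∀ x : ℝ, 0 < x → 0 < f x)
    (hmono : MonotoneOn f (Ioi 0))
    (hreg : ∀ x : ℝ, 0 < x →
      Tendsto (fun t => f (t * x) / f t) atTop (nhds (x ^ ρ)))
    (hhpos : ∀ x : ℝ, 0 < x → 0 < h x)
    (lam : ℝ≥0∞) :
    Tendsto (fun x => ENNReal.ofReal (f (x * h x) / f x)) atTop (nhds (lam ^ ρ)) ↔
      Tendsto (fun x => ENNReal.ofReal (h x)) atTop (nhds lam) := by
  have hρ' : 0 < ρ := by
    by_contra hn
    have h0 : ρ < 0 := lt_of_le_of_ne (not_lt.1 hn) hρ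
    have h1 : (1 : ℝ) ≤ 2 ^ ρ := by
      refine ge_of_tendsto (hreg 2 two_pos) ?_
      filter_upwards [eventually_gt_atTop 0] with t ht
      rw [one_le_div (hfpos t ht)]
      exact hmono ht (mem_Ioi.2 (by positivity)) (by linarith)
    exact absurd h1 (not_le.2 (Real.rpow_lt_one_of_one_lt_of_neg one_lt_two h0))
  refine ucl_abstract _ _ (fun c x => ENNReal.ofReal (f (x * c) / f x)) ρ hρ' ?_ ?_ ?_ lam
  · intro c hc
    filter_upwards [eventually_gt_atTop 0] with x hx hle
    have hh := hhpos x hx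
    have hc' : (0 : ℝ) < c := hc
    have hfx := hfpos x hx
    have hle' : h x ≤ c := by exact_mod_cast hle
    have := hmono (mem_Ioi.2 (mul_pos hx hh)) (mem_Ioi.2 (mul_pos hx hc'))
      (mul_le_mul_of_nonneg_left hle' hx.le)
    exact ENNReal.ofReal_le_ofReal (by gcongr)
  · intro c hc
    filter_upwards [eventually_gt_atTop 0] with x hx hle
    have hh := hhpos x hx
    have hc' : (0 : ℝ) < c := hc
    have hfx := hfpos x hx
    have hle' : c ≤ h x := (Real.le_toNNReal_iff_coe_le hh.le).1 (ENNReal.coe_le_coe.1 hle)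
    have := hmono (mem_Ioi.2 (mul_pos hx hc')) (mem_Ioi.2 (mul_pos hx hh))
      (mul_le_mul_of_nonneg_left hle' hx.le)
    exact ENNReal.ofReal_le_ofReal (by gcongr)
  · intro c hc
    have hc' : (0 : ℝ) < c := hc
    have := ENNReal.tendsto_ofReal (hreg c hc')
    rwa [← ENNReal.ofReal_rpow_of_pos hc', ENNReal.ofReal_coe_nnreal] at this

/-- Uniform Convergence Lemma: if `f > 0` is monotone and
regularly varying at infinity with index `ρ ≠ 0`, and `h > 0`, then for any
`λ ∈ [0,∞]`, `f(x h(x))/f(x) → λ^ρ` as `x → ∞` iff `h(x) → λ` as `x → ∞`,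
with limits in `[0,∞]` (and the stated conventions for `λ^ρ`, which are those
of `ENNReal.rpow`). -/
theorem uniform_convergence_lemma
    (f h : ℝ → ℝ) (ρ : ℝ) (hρ : ρ ≠ 0)
    (hfpos : ∀ x : ℝ, 0 < x → 0 < f x)
    (hmono : MonotoneOn f (Ioi 0) ∨ AntitoneOn f (Ioi 0))
    (hreg : ∀ x : ℝ, 0 < x →
      Tendsto (fun t => f (t * x) / f t) atTop (nhds (x ^ ρ)))
    (hhpos : ∀ x : ℝ, 0 < x → 0 < h x)
    (lam : ℝ≥0∞) :
    Tendsto (fun x => ENNReal.ofReal (f (x * h x) / f x)) atTop (nhds (lam ^ ρ)) ↔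
      Tendsto (fun x => ENNReal.ofReal (h x)) atTop (nhds lam) := by
  rcases hmono with hm | hm
  · exact ucl_mono f h ρ hρ hfpos hm hreg hhpos lam
  · rw [← ucl_mono (fun x => (f x)⁻¹) h (-ρ) (neg_ne_zero.2 hρ)
      (fun x hx => inv_pos.2 (hfpos x hx)) ?_ ?_ hhpos lam, ENNReal.rpow_neg,
      ← tendsto_inv_iff]
    · apply tendsto_congr'
      filter_upwards [eventually_gt_atTop 0] with x hx
      have h1 := hfpos x hx
      have h2 := hfpos (x * h x) (mul_pos hx (hhpos x hx))
      rw [← ENNReal.ofReal_inv_of_pos (div_pos h2 h1)]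
      congr 1
      field_simp
    · intro x hx y hy hxy
      exact inv_anti₀ (hfpos y hy) (hm hx hy hxy)
    · intro x hx
      have := (hreg x hx).inv₀ (Real.rpow_pos_of_pos hx ρ).ne'
      rw [← Real.rpow_neg hx.le] at this
      refine this.congr fun t => ?_
      simp [div_eq_mul_inv, mul_comm]
end
end

section
/- Let Ψ : (0,∞) → (0,∞) be continuous and regularly varying at 0 with index γ > 1, and let u : (0,∞) → (0,∞) be a differentiable solution of the ordinary differential equation u′(t) = −Ψ(u(t)) for all t > 0. Then u is regularly varying at infinity with index 1/(1−γ), i.e. for every x > 0, u(tx)/u(t) → x^{1/(1−γ)} as t → ∞. -/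
open MeasureTheory Set Filter

noncomputable section

theorem aux_growth (K K' : ℝ → ℝ) (l c d : ℝ) (hc : c < l)
    (hK : ∀ t : ℝ, 0 < t → HasDerivAt K (K' t) t) (hl : Tendsto K' atTop (nhds l)) :
    ∀ᶠ t in atTop, c * t + d < K t := by
  obtain ⟨m, hcm, hml⟩ := exists_between hc
  obtain ⟨T, hT⟩ := eventually_atTop.1 ((hl.eventually (lt_mem_nhds hml)).and (eventually_gt_atTop 0))
  have hT0 : 0 < T := (hT T le_rfl).2
  filter_upwards [eventually_ge_atTop T, eventually_gt_atTop ((d + m * T - K T) / (m - c))]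
    with t ht ht2
  have h1 : m * (t - T) ≤ K t - K T := by
    apply Convex.mul_sub_le_image_sub_of_le_deriv (convex_Ici T) (f := K)
    · intro z hz
      exact (hK z (hT0.trans_le hz)).continuousAt.continuousWithinAt
    · intro z hz
      rw [interior_Ici] at hz
      exact (hK z (hT0.trans hz)).differentiableAt.differentiableWithinAt
    · intro z hz
      rw [interior_Ici] at hz
      rw [(hK z (hT0.trans hz)).deriv]
      exact (hT z (le_of_lt hz)).1.le
    · exact self_mem_Ici
    · exact ht
    · exact ht
  rw [div_lt_iff₀ (by linarith)] at ht2
  nlinarith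

/-- if `Ψ : (0,∞) → (0,∞)` is continuous and regularly varying
at `0` with index `γ > 1`, then any positive solution of `u' = -Ψ(u)` is
regularly varying at infinity with index `1/(1-γ)`. -/
theorem ode_solution_regularly_varying
    (Ψ : ℝ → ℝ) (γ : ℝ) (hγ : 1 < γ)
    (hΨpos : ∀ u : ℝ, 0 < u → 0 < Ψ u)
    (hΨcont : ContinuousOn Ψ (Ioi 0))
    (hreg : ∀ x : ℝ, 0 < x →
      Tendsto (fun t => Ψ (t * x) / Ψ t) (nhdsWithin 0 (Ioi 0)) (nhds (x ^ γ)))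
    (u : ℝ → ℝ) (hupos : ∀ t : ℝ, 0 < t → 0 < u t)
    (hode : ∀ t : ℝ, 0 < t → HasDerivAt u (-Ψ (u t)) t) :
    ∀ x : ℝ, 0 < x →
      Tendsto (fun t => u (t * x) / u t) atTop (nhds (x ^ (1 / (1 - γ)))) := by
  intro x hx
  have hu1 : 0 < u 1 := hupos 1 one_pos
  have hinv : ContinuousOn (fun v => (Ψ v)⁻¹) (Ioi 0) :=
    hΨcont.inv₀ (fun v hv => (hΨpos v hv).ne')
  set F : ℝ → ℝ := fun y => ∫ v in y..(u 1), (Ψ v)⁻¹ with hF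
  have hFd : ∀ y, 0 < y → HasDerivAt F (-(Ψ y)⁻¹) y := by
    intro y hy
    apply intervalIntegral.integral_hasDerivAt_left
    · apply ContinuousOn.intervalIntegrable
      apply hinv.mono
      intro z hz
      exact lt_of_lt_of_le (lt_min hy hu1) hz.1
    · exact hinv.stronglyMeasurableAtFilter isOpen_Ioi y hy
    · exact hinv.continuousAt (Ioi_mem_nhds hy)
  have hFanti : StrictAntiOn F (Ioi 0) := by
    apply strictAntiOn_of_deriv_neg (convex_Ioi 0)
    · intro z hz
      exact (hFd z hz).continuousAt.continuousWithinAt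
    · intro z hz
      rw [interior_Ioi] at hz
      rw [(hFd z hz).deriv]
      have := inv_pos.2 (hΨpos z hz)
      linarith
  have hFu : ∀ t, 0 < t → F (u t) = t - 1 := by
    have hd : ∀ t, 0 < t → HasDerivAt (fun t => F (u t) - t) 0 t := by
      intro t ht
      have h := ((hFd _ (hupos t ht)).comp t (hode t ht)).sub (hasDerivAt_id t)
      have hne := (hΨpos _ (hupos t ht)).ne'
      have e : -(Ψ (u t))⁻¹ * -Ψ (u t) - 1 = 0 := by
        field_simp
        ring
      rw [e] at h
      exact h
    intro t ht
    have h := (convex_Ioi (0:ℝ)).is_const_of_fderivWithin_eq_zero (𝕜 := ℝ)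
      (f := fun t => F (u t) - t)
      (fun z hz => (hd z hz).differentiableAt.differentiableWithinAt)
      (fun z hz => by
        rw [fderivWithin_of_isOpen isOpen_Ioi hz]
        ext
        simp [(hd z hz).deriv]) (show t ∈ Ioi (0:ℝ) from ht) (show (1:ℝ) ∈ Ioi (0:ℝ) from mem_Ioi.2 one_pos)
    have hF1 : F (u 1) = 0 := by simp [hF]
    simp only [hF1] at h
    linarith
  have hu0 : Tendsto u atTop (nhdsWithin 0 (Ioi 0)) := by
    rw [tendsto_nhdsWithin_iff]
    refine ⟨?_, (eventually_gt_atTop 0).mono fun t ht => hupos t ht⟩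
    rw [tendsto_order]
    refine ⟨fun a ha => (eventually_gt_atTop 0).mono fun t ht => ha.trans (hupos t ht), ?_⟩
    intro δ hδ
    filter_upwards [eventually_gt_atTop 0, eventually_gt_atTop (F δ + 1)] with t ht ht2
    rw [← hFanti.lt_iff_gt hδ (hupos t ht), hFu t ht]
    linarith
  have hKd : ∀ a, 0 < a → ∀ t, 0 < t →
      HasDerivAt (fun t => F (u t * a)) ((Ψ (u t * a) / Ψ (u t))⁻¹ * a) t := by
    intro a ha t ht
    have h := (hFd _ (mul_pos (hupos t ht) ha)).comp t ((hode t ht).mul_const a)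
    have e : (Ψ (u t * a) / Ψ (u t))⁻¹ * a = -(Ψ (u t * a))⁻¹ * (-Ψ (u t) * a) := by
      rw [inv_div]
      ring
    rw [e]
    exact h
  have hKl : ∀ a, 0 < a →
      Tendsto (fun t => (Ψ (u t * a) / Ψ (u t))⁻¹ * a) atTop (nhds (a ^ (1 - γ))) := by
    intro a ha
    have h := (((hreg a ha).comp hu0).inv₀ (Real.rpow_pos_of_pos ha γ).ne').mul_const a
    have e : a ^ (1 - γ) = (a ^ γ)⁻¹ * a := by
      rw [Real.rpow_sub ha, Real.rpow_one]; ring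
    rw [e]
    exact h
  have hg : 1 - γ < 0 := by linarith
  have hxr : (x ^ (1 / (1 - γ))) ^ (1 - γ) = x := by
    rw [← Real.rpow_mul hx.le, one_div_mul_cancel hg.ne, Real.rpow_one]
  have hxp := Real.rpow_pos_of_pos hx (1 / (1 - γ))
  rw [tendsto_order]
  constructor
  · intro a ha
    rcases le_or_gt a 0 with ha0 | ha0
    · filter_upwards [eventually_gt_atTop 0] with t ht
      exact ha0.trans_lt (div_pos (hupos _ (mul_pos ht hx)) (hupos t ht))
    · have hlt := Real.rpow_lt_rpow_of_neg ha0 ha hg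
      rw [hxr] at hlt
      filter_upwards [eventually_gt_atTop 0,
        aux_growth _ _ _ x 0 hlt (hKd a ha0) (hKl a ha0)] with t ht h
      rw [lt_div_iff₀ (hupos t ht), mul_comm a,
        ← hFanti.lt_iff_gt (hupos _ (mul_pos ht hx)) (mul_pos (hupos t ht) ha0),
        hFu _ (mul_pos ht hx)]
      linarith
  · intro b hb
    have hb0 := hxp.trans hb
    have hlt := Real.rpow_lt_rpow_of_neg hxp hb hg
    rw [hxr] at hlt
    filter_upwards [eventually_gt_atTop 0,
      aux_growth _ _ _ (-x) 1 (neg_lt_neg hlt) (fun t ht => (hKd b hb0 t ht).neg)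
        (hKl b hb0).neg] with t ht h
    rw [div_lt_iff₀ (hupos t ht), mul_comm b,
      ← hFanti.lt_iff_gt (mul_pos (hupos t ht) hb0) (hupos _ (mul_pos ht hx)),
      hFu _ (mul_pos ht hx)]
    simp only [Pi.neg_apply] at h
    linarith
end
end

section
/- Let Ψ be a critical branching mechanism, not identically zero. Then for all s > 0: (i) Ψ(s)/s ≤ Ψ′(s) ≤ 2Ψ(s)/s, equivalently s ↦ Ψ(s)/s is nondecreasing and s ↦ Ψ(s)/s² is nonincreasing on (0,∞); and (ii) the function s ↦ 1/Ψ(s) is convex on (0,∞). -/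
open MeasureTheory Set Filter

noncomputable section

lemma aux_one_le (t : ℝ) : (1 + t) * Real.exp (-t) ≤ 1 := by
  have h := Real.add_one_le_exp t
  have h2 : Real.exp t * Real.exp (-t) = 1 := by rw [← Real.exp_add]; simp
  nlinarith [Real.exp_pos (-t)]

lemma aux_two (t : ℝ) (ht : 0 ≤ t) :
    t * (1 - Real.exp (-t)) ≤ 2 * (Real.exp (-t) - 1 + t) := by
  have hd : ∀ x : ℝ, HasDerivAt (fun y : ℝ => (y + 2) * Real.exp (-y) + y - 2)
      (1 - (1 + x) * Real.exp (-x)) x := by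
    intro x
    have h1 : HasDerivAt (fun y : ℝ => Real.exp (-y)) (Real.exp (-x) * (-1)) x :=
      ((hasDerivAt_id x).neg).exp
    have h2 := ((((hasDerivAt_id x).add_const 2).mul h1).add (hasDerivAt_id x)).sub_const 2
    refine h2.congr_deriv ?_
    simp only [id]
    ring
  have hm : Monotone (fun y : ℝ => (y + 2) * Real.exp (-y) + y - 2) := by
    apply monotone_of_deriv_nonneg (fun x => (hd x).differentiableAt)
    intro x
    rw [(hd x).deriv]
    linarith [aux_one_le x]
  have := hm ht
  simp at this
  linarith

lemma aux_g_nonneg (t : ℝ) : 0 ≤ Real.exp (-t) - 1 + t := by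
  linarith [Real.add_one_le_exp (-t)]

lemma aux_g_le (t : ℝ) : Real.exp (-t) - 1 + t ≤ t * (1 - Real.exp (-t)) := by
  linarith [aux_one_le t]

/-- the dominating bound -/
lemma aux_bound (x s S : ℝ) (hx : 0 < x) (hs : 0 < s) (hS : s ≤ S) (h1 : 1 ≤ S) :
    x * (1 - Real.exp (-(s * x))) ≤ S * min x (x ^ 2) := by
  have he := Real.exp_pos (-(s * x))
  have hl := Real.add_one_le_exp (-(s * x))
  rcases min_choice x (x ^ 2) with h | h <;> rw [h]
  · nlinarith
  · have : x * (1 - Real.exp (-(s * x))) ≤ x * (s * x) :=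
      mul_le_mul_of_nonneg_left (by linarith) hx.le
    nlinarith [mul_nonneg (sub_nonneg.2 hS) (sq_nonneg x)]

lemma aux_min_int (π : Measure ℝ)
    (hπfin : ∫⁻ x in Ioi (0:ℝ), ENNReal.ofReal (min x (x ^ 2)) ∂π < ⊤) :
    Integrable (fun x : ℝ => min x (x ^ 2)) (π.restrict (Ioi 0)) := by
  refine ⟨(by fun_prop : Measurable (fun x : ℝ => min x (x ^ 2))).aestronglyMeasurable, ?_⟩
  rw [hasFiniteIntegral_iff_ofReal]
  · exact hπfin
  · filter_upwards [ae_restrict_mem measurableSet_Ioi] with x hx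
    have : (0:ℝ) < x := hx
    simp only [Pi.zero_apply]
    positivity

lemma aux_d_int (π : Measure ℝ)
    (hm : Integrable (fun x : ℝ => min x (x ^ 2)) (π.restrict (Ioi 0))) (s : ℝ) (hs : 0 < s) :
    Integrable (fun x : ℝ => x * (1 - Real.exp (-(s * x)))) (π.restrict (Ioi 0)) := by
  refine (hm.const_mul (max s 1)).mono'
    (by fun_prop : Measurable (fun x : ℝ => x * (1 - Real.exp (-(s * x))))).aestronglyMeasurable ?_
  filter_upwards [ae_restrict_mem measurableSet_Ioi] with x hx
  have hx : (0:ℝ) < x := hx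
  have : Real.exp (-(s * x)) ≤ 1 := Real.exp_le_one_iff.2 (by nlinarith)
  rw [Real.norm_of_nonneg (mul_nonneg hx.le (by linarith))]
  exact aux_bound x s _ hx hs (le_max_left _ _) (le_max_right _ _)

lemma aux_g_int (π : Measure ℝ)
    (hm : Integrable (fun x : ℝ => min x (x ^ 2)) (π.restrict (Ioi 0))) (s : ℝ) (hs : 0 < s) :
    Integrable (fun x : ℝ => Real.exp (-(s * x)) - 1 + s * x) (π.restrict (Ioi 0)) := by
  refine ((aux_d_int π hm s hs).const_mul s).mono'
    (by fun_prop : Measurable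
      (fun x : ℝ => Real.exp (-(s * x)) - 1 + s * x)).aestronglyMeasurable ?_
  filter_upwards with x
  rw [Real.norm_of_nonneg (aux_g_nonneg _)]
  have := aux_g_le (s * x)
  linarith

lemma aux_deriv (π : Measure ℝ)
    (hm : Integrable (fun x : ℝ => min x (x ^ 2)) (π.restrict (Ioi 0))) (s : ℝ) (hs : 0 < s) :
    HasDerivAt (fun u => ∫ x in Ioi (0:ℝ), (Real.exp (-(u * x)) - 1 + u * x) ∂π)
      (∫ x in Ioi (0:ℝ), x * (1 - Real.exp (-(s * x))) ∂π) s := by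
  refine (hasDerivAt_integral_of_dominated_loc_of_deriv_le
    (F := fun u x => Real.exp (-(u * x)) - 1 + u * x)
    (F' := fun u x => x * (1 - Real.exp (-(u * x))))
    (bound := fun x => (s + 1) * min x (x ^ 2)) (s := Ioo 0 (s + 1))
    (Ioo_mem_nhds hs (by linarith)) ?_ (aux_g_int π hm s hs) ?_ ?_ ?_ ?_).2
  · exact Eventually.of_forall fun u => (by fun_prop : Measurable
      (fun x : ℝ => Real.exp (-(u * x)) - 1 + u * x)).aestronglyMeasurable
  · exact (aux_d_int π hm s hs).aestronglyMeasurable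
  · filter_upwards [ae_restrict_mem measurableSet_Ioi] with x hx u hu
    have hx : (0:ℝ) < x := hx
    have : Real.exp (-(u * x)) ≤ 1 := Real.exp_le_one_iff.2 (by nlinarith [mul_pos hu.1 hx])
    rw [Real.norm_of_nonneg (mul_nonneg hx.le (by linarith))]
    exact aux_bound x u _ hx hu.1 hu.2.le (by linarith)
  · exact hm.const_mul _
  · filter_upwards with x u hu
    have h0 : HasDerivAt (fun y : ℝ => y * x) x u := by
      simpa using (hasDerivAt_id u).mul_const x
    have h2 := ((h0.neg.exp).sub_const 1).add h0
    refine h2.congr_deriv ?_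
    simp only [Pi.neg_apply]
    ring

lemma aux_k_eq (x s : ℝ) (hs : 0 < s) :
    (Real.exp (-(s * x)) - 1 + s * x) / s = x - ∫ y in (0:ℝ)..x, Real.exp (-(s * y)) := by
  have h : ∫ y in (0:ℝ)..x, Real.exp (-(s * y))
      = -Real.exp (-(s * x)) / s - -Real.exp (-(s * 0)) / s := by
    apply intervalIntegral.integral_eq_sub_of_hasDerivAt
      (f := fun y => -Real.exp (-(s * y)) / s)
    · intro y _
      have h0 : HasDerivAt (fun y : ℝ => s * y) s y := by
        simpa using (hasDerivAt_id y).const_mul s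
      refine ((h0.neg.exp).neg.div_const s).congr_deriv ?_
      simp only [Pi.neg_apply]
      field_simp
    · exact (by fun_prop : Continuous fun y : ℝ => Real.exp (-(s * y))).intervalIntegrable _ _
  rw [h]
  simp
  field_simp
  ring

lemma aux_k_concave (x : ℝ) (hx : 0 < x) :
    ConcaveOn ℝ (Ioi 0) (fun s : ℝ => (Real.exp (-(s * x)) - 1 + s * x) / s) := by
  refine ⟨convex_Ioi 0, ?_⟩
  intro s hs t ht a b ha hb hab
  have hst : a • s + b • t ∈ Ioi (0:ℝ) := convex_Ioi 0 hs ht ha hb hab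
  have hi : ∀ s : ℝ, IntervalIntegrable (fun y : ℝ => Real.exp (-(s * y))) volume 0 x :=
    fun s => (by fun_prop : Continuous fun y : ℝ => Real.exp (-(s * y))).intervalIntegrable _ _
  simp only
  rw [aux_k_eq x s hs, aux_k_eq x t ht, aux_k_eq x _ hst]
  have key : ∫ y in (0:ℝ)..x, Real.exp (-((a • s + b • t) * y))
      ≤ ∫ y in (0:ℝ)..x, (a * Real.exp (-(s * y)) + b * Real.exp (-(t * y))) := by
    apply intervalIntegral.integral_mono_on hx.le (hi _) (((hi s).const_mul a).add ((hi t).const_mul b))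
    intro y _
    have := convexOn_exp.2 (mem_univ (-(s * y))) (mem_univ (-(t * y))) ha hb hab
    simp only [smul_eq_mul] at this ⊢
    have he : -((a * s + b * t) * y) = a * -(s * y) + b * -(t * y) := by ring
    rw [he]
    exact this
  rw [intervalIntegral.integral_add ((hi s).const_mul a) ((hi t).const_mul b),
    intervalIntegral.integral_const_mul, intervalIntegral.integral_const_mul] at key
  simp only [smul_eq_mul] at *
  have : x = a * x + b * x := by rw [← add_mul, hab, one_mul]
  linarith

/-- for a critical branching mechanism `Ψ` (not identically
zero), one has `Ψ(s)/s ≤ Ψ'(s) ≤ 2Ψ(s)/s` for all `s > 0` (equivalently,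
`s ↦ Ψ(s)/s` is nondecreasing and `s ↦ Ψ(s)/s²` is nonincreasing), and
`s ↦ 1/Ψ(s)` is convex on `(0,∞)`. -/
theorem critical_bm_derivative_bounds_and_convexity
    (Ψ : ℝ → ℝ) (β : ℝ) (π : Measure ℝ)
    (hβ : 0 ≤ β)
    (hπfin : ∫⁻ x in Ioi (0:ℝ), ENNReal.ofReal (min x (x ^ 2)) ∂π < ⊤)
    (hΨ : ∀ u : ℝ, 0 < u →
      Ψ u = β * u ^ 2 + ∫ x in Ioi (0:ℝ), (Real.exp (-(u * x)) - 1 + u * x) ∂π)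
    (hnz : ∃ u : ℝ, 0 < u ∧ Ψ u ≠ 0) :
    (∀ s : ℝ, 0 < s → Ψ s / s ≤ deriv Ψ s ∧ deriv Ψ s ≤ 2 * Ψ s / s) ∧
    MonotoneOn (fun s => Ψ s / s) (Ioi 0) ∧
    AntitoneOn (fun s => Ψ s / s ^ 2) (Ioi 0) ∧
    ConvexOn ℝ (Ioi 0) (fun s => 1 / Ψ s) := by
  have hm := aux_min_int π hπfin
  have hD : ∀ s : ℝ, 0 < s → HasDerivAt Ψ
      (2 * β * s + ∫ x in Ioi (0:ℝ), x * (1 - Real.exp (-(s * x))) ∂π) s := by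
    intro s hs
    have h1 : HasDerivAt (fun u : ℝ => β * u ^ 2) (2 * β * s) s := by
      refine (((hasDerivAt_id s).pow 2).const_mul β).congr_deriv ?_
      simp
      ring
    refine (h1.add (aux_deriv π hm s hs)).congr_of_eventuallyEq ?_
    filter_upwards [Ioi_mem_nhds hs] with u hu
    exact hΨ u hu
  have hB : ∀ s : ℝ, 0 < s → Ψ s ≤ s * deriv Ψ s ∧ s * deriv Ψ s ≤ 2 * Ψ s := by
    intro s hs
    rw [(hD s hs).deriv, hΨ s hs, mul_add, mul_add, ← integral_const_mul, ← integral_const_mul]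
    constructor
    · have : ∫ x in Ioi (0:ℝ), (Real.exp (-(s * x)) - 1 + s * x) ∂π
          ≤ ∫ x in Ioi (0:ℝ), s * (x * (1 - Real.exp (-(s * x)))) ∂π := by
        apply integral_mono (aux_g_int π hm s hs) ((aux_d_int π hm s hs).const_mul s)
        intro x
        have := aux_g_le (s * x)
        simp only
        linarith
      nlinarith [mul_nonneg hβ (sq_nonneg s)]
    · have : ∫ x in Ioi (0:ℝ), s * (x * (1 - Real.exp (-(s * x)))) ∂π
          ≤ ∫ x in Ioi (0:ℝ), 2 * (Real.exp (-(s * x)) - 1 + s * x) ∂π := by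
        apply setIntegral_mono_on ((aux_d_int π hm s hs).const_mul s)
          ((aux_g_int π hm s hs).const_mul 2) measurableSet_Ioi
        intro x hx
        have := aux_two (s * x) (mul_pos hs hx).le
        linarith
      nlinarith
  have hnn : ∀ s : ℝ, 0 < s → 0 ≤ Ψ s := by
    intro s hs
    rw [hΨ s hs]
    have : 0 ≤ ∫ x in Ioi (0:ℝ), (Real.exp (-(s * x)) - 1 + s * x) ∂π :=
      integral_nonneg fun x => aux_g_nonneg _
    positivity
  have hD' : ∀ s : ℝ, 0 < s → HasDerivAt Ψ (deriv Ψ s) s :=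
    fun s hs => (hD s hs).differentiableAt.hasDerivAt
  have hd1 : ∀ s : ℝ, 0 < s → HasDerivAt (fun s => Ψ s / s) ((deriv Ψ s * s - Ψ s * 1) / s ^ 2) s :=
    fun s hs => (hD' s hs).div (hasDerivAt_id s) hs.ne'
  have hd2 : ∀ s : ℝ, 0 < s → HasDerivAt (fun s => Ψ s / s ^ 2)
      ((deriv Ψ s * s ^ 2 - Ψ s * (2 * s)) / (s ^ 2) ^ 2) s := by
    intro s hs
    have hp : HasDerivAt (fun s : ℝ => s ^ 2) (2 * s) s := by
      simpa using hasDerivAt_pow 2 s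
    exact (hD' s hs).div hp (pow_pos hs 2).ne'
  have hmono : MonotoneOn (fun s => Ψ s / s) (Ioi 0) := by
    apply monotoneOn_of_deriv_nonneg (convex_Ioi 0)
      (fun s hs => (hd1 s hs).continuousAt.continuousWithinAt)
    · intro s hs
      rw [interior_Ioi] at hs
      exact (hd1 s hs).differentiableAt.differentiableWithinAt
    · intro s hs
      rw [interior_Ioi] at hs
      rw [(hd1 s hs).deriv]
      apply div_nonneg _ (sq_nonneg s)
      linarith [(hB s hs).1]
  have hanti : AntitoneOn (fun s => Ψ s / s ^ 2) (Ioi 0) := by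
    apply antitoneOn_of_deriv_nonpos (convex_Ioi 0)
      (fun s hs => (hd2 s hs).continuousAt.continuousWithinAt)
    · intro s hs
      rw [interior_Ioi] at hs
      exact (hd2 s hs).differentiableAt.differentiableWithinAt
    · intro s hs
      rw [interior_Ioi] at hs
      rw [(hd2 s hs).deriv]
      apply div_nonpos_of_nonpos_of_nonneg _ (sq_nonneg _)
      have hs : 0 < s := hs
      nlinarith [(hB s hs).2]
  have hpos : ∀ s : ℝ, 0 < s → 0 < Ψ s := by
    intro s hs
    obtain ⟨u, hu, hne⟩ := hnz
    have hup : 0 < Ψ u := lt_of_le_of_ne (hnn u hu) hne.symm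
    rcases le_total u s with h | h
    · have h1 : Ψ u / u ≤ Ψ s / s := hmono hu hs h
      have h2 : 0 < Ψ s / s := lt_of_lt_of_le (by positivity) h1
      exact (div_pos_iff_of_pos_right hs).1 h2
    · have h1 : Ψ u / u ^ 2 ≤ Ψ s / s ^ 2 := hanti hs hu h
      have h2 : 0 < Ψ s / s ^ 2 := lt_of_lt_of_le (by positivity) h1
      exact (div_pos_iff_of_pos_right (by positivity)).1 h2
  have hform : ∀ s : ℝ, 0 < s → Ψ s / s = β * s +
      ∫ x in Ioi (0:ℝ), (Real.exp (-(s * x)) - 1 + s * x) / s ∂π := by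
    intro s hs
    rw [integral_div, hΨ s hs]
    field_simp
  have hconc : ConcaveOn ℝ (Ioi 0) (fun s => Ψ s / s) := by
    refine ⟨convex_Ioi 0, ?_⟩
    intro s hs t ht a b ha hb hab
    have hst : a • s + b • t ∈ Ioi (0:ℝ) := convex_Ioi 0 hs ht ha hb hab
    simp only
    rw [hform s hs, hform t ht, hform _ hst]
    have is := ((aux_g_int π hm s hs).div_const s).const_mul a
    have it := ((aux_g_int π hm t ht).div_const t).const_mul b
    have key : ∫ x in Ioi (0:ℝ), (a * ((Real.exp (-(s * x)) - 1 + s * x) / s) +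
          b * ((Real.exp (-(t * x)) - 1 + t * x) / t)) ∂π
        ≤ ∫ x in Ioi (0:ℝ), (Real.exp (-((a • s + b • t) * x)) - 1 + (a • s + b • t) * x)
          / (a • s + b • t) ∂π := by
      apply setIntegral_mono_on (is.add it) ((aux_g_int π hm _ hst).div_const _) measurableSet_Ioi
      intro x hx
      exact (aux_k_concave x hx).2 hs ht ha hb hab
    rw [integral_add is it, integral_const_mul, integral_const_mul] at key
    simp only [smul_eq_mul] at *
    linarith
  refine ⟨?_, hmono, hanti, ?_⟩
  · intro s hs
    rw [div_le_iff₀ hs, le_div_iff₀ hs]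
    constructor <;> linarith [(hB s hs).1, (hB s hs).2]
  · have hq : ∀ s : ℝ, 0 < s → 0 < Ψ s / s := fun s hs => div_pos (hpos s hs) hs
    have hinv : ConvexOn ℝ (Ioi (0:ℝ)) (fun s : ℝ => s⁻¹) := by
      simpa using convexOn_zpow (𝕜 := ℝ) (-1)
    have hc1 : ConvexOn ℝ (Ioi 0) (fun s => (Ψ s / s)⁻¹) := by
      refine ⟨convex_Ioi 0, ?_⟩
      intro s hs t ht a b ha hb hab
      have hst : a • s + b • t ∈ Ioi (0:ℝ) := convex_Ioi 0 hs ht ha hb hab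
      have hqq : a • (Ψ s / s) + b • (Ψ t / t) ∈ Ioi (0:ℝ) :=
        convex_Ioi 0 (hq s hs) (hq t ht) ha hb hab
      refine le_trans ?_ (hinv.2 (hq s hs) (hq t ht) ha hb hab)
      exact inv_anti₀ hqq (hconc.2 hs ht ha hb hab)
    have hav : MonovaryOn (fun s : ℝ => s⁻¹) (fun s => (Ψ s / s)⁻¹) (Ioi 0) := by
      apply AntitoneOn.monovaryOn
      · intro s hs t ht hst
        exact inv_anti₀ hs hst
      · intro s hs t ht hst
        exact inv_anti₀ (hq s hs) (hmono hs ht hst)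
    have hmul := hinv.mul hc1 (fun s hs => (inv_pos.2 hs).le)
      (fun s hs => (inv_pos.2 (hq s hs)).le) hav
    refine hmul.congr ?_
    intro s hs
    have hs0 : s ≠ 0 := ne_of_gt hs
    have hp0 : Ψ s ≠ 0 := (hpos s hs).ne'
    simp only [Pi.mul_apply]
    field_simp
end
end

section
/- Let Ψ be a critical branching mechanism satisfying Grey's condition, and let (μ_t)_{t>0} be the fundamental solution associated with Ψ, i.e. a family of finite Borel measures on (0,∞) such that Φ(t,q) = ∫_{(0,∞)} (1 − e^{−qx}) μ_t(dx) satisfies ∂_t Φ(t,q) = −Ψ(Φ(t,q)) for t > 0, q > 0, with Φ(t,q) → q as t → 0⁺. Suppose there exist a function λ : (0,∞) → (0,∞) and a Borel probability measure μ̂ on (0,∞) such that for every bounded continuous f : (0,∞) → ℝ, μ_t((0,∞))^{−1} ∫_{(0,∞)} f(λ(t) x) μ_t(dx) → ∫_{(0,∞)} f dμ̂ as t → ∞. Then there exists γ ∈ (1,2] such that Ψ is regularly varying at 0 with index γ. Furthermore, m₁ := ∫_{(0,∞)} x μ̂(dx) < ∞, λ(t)/μ_t((0,∞)) → m₁ as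 t → ∞, and ∫_{(0,∞)} (1 − e^{−qx}) μ̂(dx) = (1 + (m₁ q)^{−(γ−1)})^{−1/(γ−1)} for all q > 0. -/
open MeasureTheory Set Filter

noncomputable section


structure FHyp (F : ℝ → ℝ) : Prop where
  pos : ∀ u, 0 < u → 0 < F u
  anti : StrictAntiOn F (Ioi 0)
  conv : ConvexOn ℝ (Ioi 0) F
  dbl : ∀ u, 0 < u → ∀ b, 0 < b → b ≤ 1 → F (u * b) ≤ F u / b
  D : ∀ a, 0 < a → a < 1 → Tendsto (fun u => F (u * a) - F u) (nhdsWithin 0 (Ioi 0)) atTop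

structure HHyp (H : ℝ → ℝ) : Prop where
  pos : ∀ u, 0 < u → 0 < H u
  lt_one : ∀ u, 0 < u → H u < 1
  mono : StrictMonoOn H (Ioi 0)
  conc : ConcaveOn ℝ (Ici 0) H
  zero : H 0 = 0

structure LHyp (F H lam : ℝ → ℝ) (φ : ℝ → ℝ → ℝ) : Prop where
  hF : FHyp F
  hH : HHyp H
  lpos : ∀ᶠ u in nhdsWithin 0 (Ioi 0), 0 < lam u
  φpos : ∀ q, 0 < q → ∀ᶠ u in nhdsWithin 0 (Ioi 0), 0 < φ u q
  φeq : ∀ q, 0 < q → ∀ᶠ u in nhdsWithin 0 (Ioi 0), F (φ u q) = F u + F (q * lam u)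
  φlim : ∀ q, 0 < q → Tendsto (fun u => φ u q / u) (nhdsWithin 0 (Ioi 0)) (nhds (H q))

structure RProp (R H : ℝ → ℝ) (l : ℝ) : Prop where
  pos : ∀ u, 0 < u → 0 < R u
  anti : AntitoneOn R (Ioi 0)
  conv : ConvexOn ℝ (Ioi 0) R
  one : R 1 = 1
  grow : ∃ ε, 0 < ε ∧ ∀ x, 0 < x → (1 + ε) * R x ≤ R (x / 4)
  lpos : 0 < l
  eq : ∀ x, 0 < x → R (H x) = 1 + R (l * x)

lemma evpos : ∀ᶠ u : ℝ in nhdsWithin 0 (Ioi 0), 0 < u := eventually_mem_nhdsWithin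

lemma LHyp.growth {F H lam : ℝ → ℝ} {φ : ℝ → ℝ → ℝ} (h : LHyp F H lam φ) :
    ∃ ε, 0 < ε ∧ ∀ᶠ v in nhdsWithin 0 (Ioi 0), (1 + ε) * F v ≤ F (v / 4) := by
  have hF := h.hF
  have hH := h.hH
  set a := H 1 with ha
  have ha0 : 0 < a := hH.pos 1 one_pos
  have ha1 : a < 1 := hH.lt_one 1 one_pos
  have h2 : a < H 2 := hH.mono (by simp) (by simp) (by norm_num)
  have h12 : H (1/2) < a := hH.mono (by simp) (by simp) (by norm_num)
  obtain ⟨b, hb1, hb2⟩ := exists_between h12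
  have hb0 : 0 < b := (hH.pos _ (by norm_num)).trans hb1
  refine ⟨(a - b)/(1 - a), div_pos (by linarith) (by linarith), ?_⟩
  -- good small u
  have ev : ∀ᶠ u in nhdsWithin 0 (Ioi 0), (0 < u) ∧ 0 < lam u ∧ F (2 * lam u) < F (u * a) - F u ∧
      F (u * b) - F u < F (1/2 * lam u) := by
    filter_upwards [evpos, h.lpos, h.φpos 2 two_pos, h.φpos (1/2) (by norm_num),
      h.φeq 2 two_pos, h.φeq (1/2) (by norm_num),
      (h.φlim 2 two_pos).eventually (lt_mem_nhds h2),
      (h.φlim (1/2) (by norm_num)).eventually (gt_mem_nhds hb1)] with u hu hl p1 p2 e1 e2 l1 l2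
    rw [lt_div_iff₀ hu] at l1
    rw [div_lt_iff₀ hu] at l2
    have := hF.anti (mem_Ioi.2 (by positivity)) (mem_Ioi.2 p1) (show u * a < φ u 2 by linarith)
    have := hF.anti (mem_Ioi.2 p2) (mem_Ioi.2 (by positivity)) (show φ u (1/2) < u * b by linarith)
    exact ⟨hu, hl, by linarith, by linarith⟩
  obtain ⟨δ, hδ, hev⟩ := mem_nhdsGT_iff_exists_Ioc_subset.1 ev
  have hδ : 0 < δ := hδ
  have hcont : ContinuousOn F (Ioi 0) := hF.conv.continuousOn isOpen_Ioi
  have hFinf : Tendsto F (nhdsWithin 0 (Ioi 0)) atTop := by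
    have h1 : Tendsto (fun u => F (u * a)) (nhdsWithin 0 (Ioi 0)) atTop := by
      refine tendsto_atTop_mono' _ ?_ (hF.D a ha0 ha1)
      filter_upwards [evpos] with u hu
      linarith [hF.pos u hu]
    have h2 : Tendsto (fun u : ℝ => u / a) (nhdsWithin 0 (Ioi 0)) (nhdsWithin 0 (Ioi 0)) := by
      refine tendsto_nhdsWithin_iff.2 ⟨?_, ?_⟩
      · have : Tendsto (fun u : ℝ => u / a) (nhds 0) (nhds (0 / a)) := tendsto_id.div_const a
        rw [zero_div] at this
        exact this.mono_left nhdsWithin_le_nhds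
      · filter_upwards [evpos] with u hu
        exact div_pos hu ha0
    refine (h1.comp h2).congr fun u => ?_
    simp only [Function.comp]
    congr 1; field_simp
  filter_upwards [evpos, hFinf.eventually_gt_atTop (F (δ * a) - F δ)] with v hv hvb
  -- find u
  obtain ⟨u0, hu0, hu0b⟩ := ((hF.D a ha0 ha1).eventually_gt_atTop (F v)).and
    (mem_of_superset (Ioc_mem_nhdsGT hδ) (fun x hx => hx) : ∀ᶠ u in nhdsWithin 0 (Ioi 0), u ∈ Ioc 0 δ) |>.exists
  have hcD : ContinuousOn (fun u => F (u * a) - F u) (Icc u0 δ) := by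
    apply ContinuousOn.sub
    · refine hcont.comp (by fun_prop) ?_
      intro x hx
      exact mul_pos (hu0b.1.trans_le hx.1) ha0
    · exact hcont.mono fun x hx => hu0b.1.trans_le hx.1
  obtain ⟨u, hu, hue⟩ := intermediate_value_Icc' hu0b.2 hcD ⟨hvb.le, hu0.le⟩
  have hupos : 0 < u := hu0b.1.trans_le hu.1
  obtain ⟨_, hl, e1, e2⟩ := hev ⟨hupos, hu.2⟩
  simp only at hue
  rw [hue] at e1
  have hvl : v < 2 * lam u := by
    by_contra hc
    push Not at hc
    have := hF.anti.antitoneOn (mem_Ioi.2 (by positivity)) (mem_Ioi.2 hv) hc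
    linarith
  have h4 : F (1/2 * lam u) ≤ F (v / 4) :=
    hF.anti.antitoneOn (mem_Ioi.2 (by positivity)) (mem_Ioi.2 (by positivity)) (by linarith)
  -- convexity
  have hc := hF.conv.2 (mem_Ioi.2 (show 0 < u * b by positivity)) (mem_Ioi.2 hupos)
    (show 0 ≤ (1 - a) / (1 - b) from div_nonneg (by linarith) (by linarith))
    (show 0 ≤ (a - b) / (1 - b) from div_nonneg (by linarith) (by linarith)) (by rw [← add_div]; rw [div_eq_one_iff_eq] <;> linarith)
  have hne : 1 - b ≠ 0 := by linarith
  have e3 : ((1 - a) / (1 - b)) • (u * b) + ((a - b) / (1 - b)) • u = u * a := by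
    simp only [smul_eq_mul]; field_simp; ring
  rw [e3] at hc
  simp only [smul_eq_mul] at hc
  have hb' : 0 < 1 - b := by linarith
  have ha' : 0 < 1 - a := by linarith
  have hc2 : (1 - b) * F (u * a) ≤ (1 - a) * F (u * b) + (a - b) * F u := by
    have := mul_le_mul_of_nonneg_left hc hb'.le
    field_simp at this
    rw [mul_comm b u] at this
    linarith
  have e4 : (1 + (a - b) / (1 - a)) * F v = (1 - b) * F v / (1 - a) := by field_simp; ring
  rw [e4, div_le_iff₀ ha']
  have : (1 - a) * (F (u * b) - F u) ≤ (1 - a) * F (v / 4) :=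
    mul_le_mul_of_nonneg_left (by linarith) ha'.le
  rw [← hue]
  nlinarith

lemma grow_pow {R : ℝ → ℝ} (one : R 1 = 1)
    (grow : ∃ ε, 0 < ε ∧ ∀ x, 0 < x → (1 + ε) * R x ≤ R (x / 4)) (C : ℝ) : ∃ x, 0 < x ∧ C < R x := by
  obtain ⟨ε, hε, hg⟩ := grow
  have key : ∀ n : ℕ, (1 + ε) ^ n ≤ R ((1/4) ^ n) := by
    intro n
    induction n with
    | zero => simp [one]
    | succ n ih =>
      have := hg ((1/4)^n) (by positivity)
      calc (1+ε)^(n+1) = (1+ε) * (1+ε)^n := by ring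
        _ ≤ (1+ε) * R ((1/4)^n) := by gcongr
        _ ≤ _ := this
        _ = _ := by congr 1; ring
  obtain ⟨n, hn⟩ := pow_unbounded_of_one_lt C (show 1 < 1 + ε by linarith)
  exact ⟨(1/4)^n, by positivity, hn.trans_le (key n)⟩

lemma RProp.H_lt {R H : ℝ → ℝ} {l : ℝ} (h : RProp R H l) (hH : HHyp H) (q : ℝ) (hq : 0 < q) :
    H q < l * q := by
  by_contra hc
  push Not at hc
  have := h.anti (mem_Ioi.2 (mul_pos h.lpos hq)) (mem_Ioi.2 (hH.pos q hq)) hc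
  rw [h.eq q hq] at this
  linarith

lemma HHyp.div_anti {H : ℝ → ℝ} (hH : HHyp H) {x y : ℝ} (hx : 0 < x) (hxy : x ≤ y) :
    H y / y ≤ H x / x := by
  have hy := hx.trans_le hxy
  have := hH.conc.2 (mem_Ici.2 hy.le) (mem_Ici.2 (le_refl (0:ℝ)))
    (show 0 ≤ x / y by positivity) (show 0 ≤ 1 - x / y by rw [sub_nonneg, div_le_one hy]; exact hxy) (by ring)
  simp only [hH.zero, smul_eq_mul, mul_zero, add_zero] at this
  rw [div_mul_cancel₀ _ hy.ne'] at this
  rw [div_le_div_iff₀ hy hx]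
  have := mul_le_mul_of_nonneg_right this hy.le
  field_simp at this
  linarith

lemma RProp.ex_q {R H : ℝ → ℝ} {l : ℝ} (h : RProp R H l) (hH : HHyp H) (c : ℝ) (hc : c < l) :
    ∃ δ, 0 < δ ∧ ∀ q, 0 < q → q ≤ δ → c * q < H q := by
  by_cases hc0 : c ≤ 0
  · exact ⟨1, one_pos, fun q hq _ => (by nlinarith : c * q ≤ 0).trans_lt (hH.pos q hq)⟩
  push Not at hc0
  suffices ∃ δ, 0 < δ ∧ c * δ < H δ by
    obtain ⟨δ, hδ, h1⟩ := this
    refine ⟨δ, hδ, fun q hq hq2 => ?_⟩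
    have := hH.div_anti hq hq2
    rw [← lt_div_iff₀ hδ] at h1
    rw [← lt_div_iff₀ hq]
    linarith
  by_contra hcon
  push Not at hcon
  obtain ⟨ε, hε, hg⟩ := h.grow
  have hl := h.lpos
  set κ := c / l with hκ
  have hκ0 : 0 < κ := div_pos hc0 hl
  have hκ1 : κ < 1 := (div_lt_one hl).2 hc
  have s1 : ∀ x, 0 < x → R (κ * x) ≤ 1 + R x := by
    intro x hx
    have e := h.eq (x / l) (by positivity)
    rw [mul_div_cancel₀ _ hl.ne'] at e
    rw [← e]
    refine h.anti (mem_Ioi.2 (hH.pos _ (by positivity))) (mem_Ioi.2 (by positivity)) ?_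
    refine (hcon (x / l) (by positivity)).trans (le_of_eq ?_)
    rw [hκ]; ring
  have s2 : ∀ (k : ℕ) x, 0 < x → R (κ ^ k * x) ≤ k + R x := by
    intro k
    induction k with
    | zero => intro x hx; simp
    | succ k ih =>
      intro x hx
      have := s1 (κ ^ k * x) (by positivity)
      have h3 := ih x hx
      have e : κ ^ (k+1) * x = κ * (κ ^ k * x) := by ring
      rw [e]; push_cast; linarith
  obtain ⟨k, hk⟩ := exists_pow_lt_of_lt_one (show (0:ℝ) < 1/4 by norm_num) hκ1
  obtain ⟨x, hx, hxR⟩ := grow_pow h.one h.grow (k / ε)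
  have h1 := hg x hx
  have h2 := s2 k x hx
  have h3 : R (x / 4) ≤ R (κ ^ k * x) :=
    h.anti (mem_Ioi.2 (by positivity)) (mem_Ioi.2 (by positivity)) (by nlinarith)
  rw [div_lt_iff₀ hε] at hxR
  linarith

lemma RProp.tendsto {R H : ℝ → ℝ} {l : ℝ} (h : RProp R H l) (hH : HHyp H) :
    Tendsto (fun q => H q / q) (nhdsWithin 0 (Ioi 0)) (nhds l) := by
  rw [tendsto_order]
  constructor
  · intro c hc
    obtain ⟨δ, hδ, h1⟩ := h.ex_q hH c hc
    filter_upwards [Ioc_mem_nhdsGT hδ] with q hq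
    rw [lt_div_iff₀ hq.1]
    exact h1 q hq.1 hq.2
  · intro c hc
    filter_upwards [evpos] with q hq
    rw [div_lt_iff₀ hq]
    have := h.H_lt hH q hq
    nlinarith

lemma RProp.one_sided {R₁ R₂ H : ℝ → ℝ} {l : ℝ} (h1 : RProp R₁ H l) (h2 : RProp R₂ H l)
    (hH : HHyp H) {x w : ℝ} (hx : 0 < x) (hxw : x ≤ w) (hTw : H (w / l) ≤ x) :
    R₁ x - R₁ w ≤ R₂ x - R₂ w := by
  have hl := h1.lpos
  set T : ℝ → ℝ := fun x => H (x / l) with hT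
  have hw : 0 < w := hx.trans_le hxw
  have Tpos : ∀ x, 0 < x → 0 < T x := fun x hx => hH.pos _ (by positivity)
  have Tlt : ∀ x, 0 < x → T x < x := by
    intro x hx
    have := h1.H_lt hH (x / l) (by positivity)
    rwa [mul_div_cancel₀ _ hl.ne'] at this
  have Tmono : ∀ x y, 0 < x → x ≤ y → T x ≤ T y := by
    intro x y hx hxy
    refine hH.mono.monotoneOn (mem_Ioi.2 (by positivity)) (mem_Ioi.2 (div_pos (hx.trans_le hxy) hl)) ?_
    gcongr
  have RT : ∀ {R}, RProp R H l → ∀ x, 0 < x → R (T x) = 1 + R x := by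
    intro R h x hx
    have := h.eq (x / l) (by positivity)
    rwa [mul_div_cancel₀ _ hl.ne'] at this
  have itpos : ∀ n : ℕ, ∀ x, 0 < x → 0 < T^[n] x := by
    intro n
    induction n with
    | zero => intro x hx; simpa
    | succ n ih => intro x hx; rw [Function.iterate_succ_apply']; exact Tpos _ (ih x hx)
  have itR : ∀ {R}, RProp R H l → ∀ n : ℕ, ∀ x, 0 < x → R (T^[n] x) = n + R x := by
    intro R h n
    induction n with
    | zero => intro x hx; simp
    | succ n ih =>
      intro x hx
      rw [Function.iterate_succ_apply', RT h _ (itpos n x hx), ih x hx]; push_cast; ring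
  have itmono : ∀ n : ℕ, ∀ x y, 0 < x → x ≤ y → T^[n] x ≤ T^[n] y := by
    intro n
    induction n with
    | zero => intro x y hx h; simpa
    | succ n ih =>
      intro x y hx h
      rw [Function.iterate_succ_apply', Function.iterate_succ_apply']
      exact Tmono _ _ (itpos n x hx) (ih x y hx h)
  -- slope lower bound
  have slope : ∀ ε, 0 < ε → ∃ δ, 0 < δ ∧ ∀ y x, 0 < y → y < x → x ≤ δ →
      (1 - ε) * (x - y) ≤ T x - T y := by
    intro ε hε
    obtain ⟨δ, hδ, hd⟩ := h1.ex_q hH (l * (1 - ε/2)) (by nlinarith)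
    refine ⟨l * δ / 2, by positivity, fun y x hy hyx hxd => ?_⟩
    have hx : 0 < x := hy.trans hyx
    have a1 := hd (2 * x / l) (by positivity) (by rw [div_le_iff₀ hl]; linarith)
    have a2 : l * (1 - ε/2) * (2 * x / l) = (2 - ε) * x := by field_simp
    rw [a2] at a1
    have a3 := Tlt x hx
    have := hH.conc.slope_anti_adjacent (x := y / l) (y := x / l) (z := 2 * x / l)
      (mem_Ici.2 (by positivity)) (mem_Ici.2 (by positivity)) (by gcongr) (by gcongr; linarith)
    have e1 : 2 * x / l - x / l = x / l := by ring
    have e2 : x / l - y / l = (x - y) / l := by ring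
    rw [e1, e2, div_le_div_iff₀ (by positivity) (div_pos (by linarith) hl)] at this
    have t1 : (H (2 * x / l) - T x) * (x - y) ≤ (T x - T y) * x := by
      have := mul_le_mul_of_nonneg_right this hl.le
      field_simp at this
      simp only [hT]
      linarith
    have t2 : ((1 - ε) * x) * (x - y) ≤ (H (2 * x / l) - T x) * (x - y) :=
      mul_le_mul_of_nonneg_right (by linarith) (by linarith)
    have t3 : ((1 - ε) * (x - y)) * x ≤ (T x - T y) * x := by linarith
    exact le_of_mul_le_mul_right t3 hx
  refine le_of_forall_pos_le_add fun ε hε => ?_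
  obtain ⟨δ, hδ, hs⟩ := slope ε hε
  obtain ⟨n, hn⟩ := exists_nat_gt (R₁ δ)
  have hpn : T^[n] w ≤ δ := by
    by_contra hc
    push Not at hc
    have := h1.anti (mem_Ioi.2 hδ) (mem_Ioi.2 (itpos n w hw)) hc.le
    rw [itR h1 n w hw] at this
    linarith [h1.pos w hw]
  set w1 := T^[n] w with hw1
  set x1 := T^[n] x with hx1
  have pw1 : 0 < w1 := itpos n w hw
  have px1 : 0 < x1 := itpos n x hx
  have b1 : x1 ≤ w1 := itmono n x w hx hxw
  have b2 : T w1 ≤ x1 := by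
    have := itmono n (T w) x (Tpos w hw) hTw
    rwa [← Function.iterate_succ_apply, Function.iterate_succ_apply'] at this
  have b3 : T x1 ≤ T w1 := Tmono _ _ px1 b1
  have r1 : R₁ x - R₁ w = R₁ (T x1) - R₁ (T w1) := by
    rw [RT h1 _ px1, RT h1 _ pw1, itR h1 n x hx, itR h1 n w hw]; ring
  have r2 : R₂ x - R₂ w = R₂ (T x1) - R₂ (T w1) := by
    rw [RT h2 _ px1, RT h2 _ pw1, itR h2 n x hx, itR h2 n w hw]; ring
  set p := T w1 with hp
  set y := T x1 with hy
  have pp : 0 < p := Tpos _ pw1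
  have py : 0 < y := Tpos _ px1
  have hpw : p < w1 := Tlt _ pw1
  have hTp : T p ≤ y := Tmono _ _ pp b2
  have hTpp : T p < p := Tlt _ pp
  have pTp : 0 < T p := Tpos _ pp
  rw [r1, r2]
  rcases eq_or_lt_of_le b3 with e | hlt
  · rw [e]; linarith
  -- upper bound for R₁
  have up : (R₁ y - R₁ p) * (p - T p) ≤ p - y := by
    rcases eq_or_lt_of_le hTp with e | h3
    · rw [← e, RT h1 _ pp]; linarith
    have := h1.conv.secant_mono (a := p) (x := T p) (y := y) (mem_Ioi.2 pp) (mem_Ioi.2 pTp) (mem_Ioi.2 py)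
      hTpp.ne hlt.ne h3.le
    rw [RT h1 _ pp, ← neg_div_neg_eq, ← neg_div_neg_eq (R₁ y - R₁ p), div_le_div_iff₀ (by linarith) (by linarith)] at this
    linarith
  have low : p - y ≤ (R₂ y - R₂ p) * (w1 - p) := by
    have := h2.conv.slope_mono_adjacent (x := y) (y := p) (z := w1) (mem_Ioi.2 py) (mem_Ioi.2 pw1) hlt hpw
    rw [div_le_div_iff₀ (by linarith) (by linarith)] at this
    have e : R₂ p = 1 + R₂ w1 := RT h2 _ pw1
    have e' : R₂ w1 - R₂ p = -1 := by linarith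
    rw [e'] at this
    linarith
  have sl := hs p w1 pp hpw hpn
  have sl : (1 - ε) * (w1 - p) ≤ p - T p := sl
  have X : R₁ y - R₁ p ≤ 1 := by
    have := h1.anti (mem_Ioi.2 pTp) (mem_Ioi.2 py) hTp
    rw [RT h1 _ pp] at this; linarith
  have Y : 0 ≤ R₁ y - R₁ p := by
    have := h1.anti (mem_Ioi.2 py) (mem_Ioi.2 pp) b3; linarith
  have dd : 0 < w1 - p := by linarith
  have : (R₁ y - R₁ p) * ((1 - ε) * (w1 - p)) ≤ (R₂ y - R₂ p) * (w1 - p) :=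
    (mul_le_mul_of_nonneg_left sl Y).trans (up.trans low)
  have : (R₁ y - R₁ p) * (1 - ε) ≤ (R₂ y - R₂ p) := by
    apply le_of_mul_le_mul_right _ dd; linarith
  nlinarith

lemma RProp.uniq_aux {R₁ R₂ H : ℝ → ℝ} {l : ℝ} (h1 : RProp R₁ H l) (h2 : RProp R₂ H l)
    (hH : HHyp H) {x w : ℝ} (hx : 0 < x) (hxw : x ≤ w) :
    R₁ x - R₁ w = R₂ x - R₂ w := by
  have hl := h1.lpos
  set T : ℝ → ℝ := fun x => H (x / l) with hT
  have hw : 0 < w := hx.trans_le hxw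
  have Tpos : ∀ x, 0 < x → 0 < T x := fun x hx => hH.pos _ (by positivity)
  have RT : ∀ {R}, RProp R H l → ∀ x, 0 < x → R (T x) = 1 + R x := by
    intro R h x hx
    have := h.eq (x / l) (by positivity)
    rwa [mul_div_cancel₀ _ hl.ne'] at this
  have itpos : ∀ n : ℕ, ∀ x, 0 < x → 0 < T^[n] x := by
    intro n
    induction n with
    | zero => intro x hx; simpa
    | succ n ih => intro x hx; rw [Function.iterate_succ_apply']; exact Tpos _ (ih x hx)
  have itR : ∀ {R}, RProp R H l → ∀ n : ℕ, ∀ x, 0 < x → R (T^[n] x) = n + R x := by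
    intro R h n
    induction n with
    | zero => intro x hx; simp
    | succ n ih =>
      intro x hx
      rw [Function.iterate_succ_apply', RT h _ (itpos n x hx), ih x hx]; push_cast; ring
  have ex : ∃ n : ℕ, T^[n+1] w ≤ x := by
    obtain ⟨n, hn⟩ := exists_nat_gt (R₁ x)
    refine ⟨n, ?_⟩
    by_contra hc
    push Not at hc
    have := h1.anti (mem_Ioi.2 hx) (mem_Ioi.2 (itpos (n+1) w hw)) hc.le
    rw [itR h1 _ w hw] at this
    push_cast at this
    linarith [h1.pos w hw]
  classical
  have hn := Nat.find_spec ex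
  set n := Nat.find ex with hnd
  have hn2 : x ≤ T^[n] w := by
    rcases Nat.eq_zero_or_pos n with e | e
    · rw [e]; simpa
    · have := Nat.find_min ex (m := n - 1) (by omega)
      rw [Nat.sub_add_cancel e] at this
      push Not at this
      exact this.le
  rw [Function.iterate_succ_apply'] at hn
  have A := RProp.one_sided h1 h2 hH hx hn2 hn
  have B := RProp.one_sided h2 h1 hH hx hn2 hn
  rw [itR h1 n w hw, itR h2 n w hw] at A B
  linarith

lemma RProp.uniq {R₁ R₂ H : ℝ → ℝ} {l : ℝ} (h1 : RProp R₁ H l) (h2 : RProp R₂ H l)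
    (hH : HHyp H) {x : ℝ} (hx : 0 < x) : R₁ x = R₂ x := by
  rcases le_total x 1 with h | h
  · have := RProp.uniq_aux h1 h2 hH hx h
    rw [h1.one, h2.one] at this; linarith
  · have := RProp.uniq_aux h1 h2 hH one_pos h
    rw [h1.one, h2.one] at this; linarith

lemma shrink_pow {R : ℝ → ℝ} (one : R 1 = 1)
    (grow : ∃ ε, 0 < ε ∧ ∀ x, 0 < x → (1 + ε) * R x ≤ R (x / 4)) (c : ℝ) (hc : 0 < c) :
    ∃ x, 0 < x ∧ R x < c := by
  obtain ⟨ε, hε, hg⟩ := grow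
  have key : ∀ n : ℕ, (1 + ε) ^ n * R (4 ^ n) ≤ 1 := by
    intro n
    induction n with
    | zero => simp [one]
    | succ n ih =>
      have := hg (4^(n+1)) (by positivity)
      have e : (4:ℝ)^(n+1)/4 = 4^n := by rw [pow_succ]; field_simp
      rw [e] at this
      calc (1+ε)^(n+1) * R (4^(n+1)) = (1+ε)^n * ((1+ε) * R (4^(n+1))) := by ring
        _ ≤ (1+ε)^n * R (4^n) := by gcongr
        _ ≤ _ := ih
  obtain ⟨n, hn⟩ := pow_unbounded_of_one_lt (1/c) (show 1 < 1 + ε by linarith)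
  refine ⟨4^n, by positivity, ?_⟩
  by_contra hcon
  push Not at hcon
  have := key n
  rw [div_lt_iff₀ hc] at hn
  have : (1 + ε)^n * c ≤ (1+ε)^n * R (4^n) := by gcongr
  linarith

lemma ultra_lim {𝒰 : Ultrafilter ℝ} {g : ℝ → ℝ} {a b : ℝ} (h : ∀ᶠ u in (𝒰 : Filter ℝ), g u ∈ Icc a b) :
    ∃ c ∈ Icc a b, Tendsto g 𝒰 (nhds c) := by
  obtain ⟨c, hc, h2⟩ := (isCompact_Icc (a := a) (b := b)).ultrafilter_le_nhds (𝒰.map g)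
    (by rw [le_principal_iff]; exact h)
  exact ⟨c, hc, h2⟩

lemma LHyp.exists_R {F H lam : ℝ → ℝ} {φ : ℝ → ℝ → ℝ} (h : LHyp F H lam φ) (𝒰 : Ultrafilter ℝ)
    (hU : (𝒰 : Filter ℝ) ≤ nhdsWithin 0 (Ioi 0)) :
    ∃ R l, (∀ x, 0 < x → Tendsto (fun u => F (u * x) / F u) 𝒰 (nhds (R x))) ∧
      Tendsto (fun u => lam u / u) 𝒰 (nhds l) ∧ RProp R H l := by
  have hF := h.hF
  have hH := h.hH
  have up : ∀ᶠ u in (𝒰 : Filter ℝ), 0 < u := hU evpos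
  have Fanti : ∀ {x y}, 0 < x → x ≤ y → F y ≤ F x := fun {x y} hx hxy =>
    hF.anti.antitoneOn (mem_Ioi.2 hx) (mem_Ioi.2 (hx.trans_le hxy)) hxy
  have bd : ∀ x, 0 < x → ∀ u, 0 < u → F (u * x) / F u ∈ Icc (min 1 (1/x)) (max 1 (1/x)) := by
    intro x hx u hu
    have fp := hF.pos u hu
    have fp2 := hF.pos (u * x) (by positivity)
    rcases le_total x 1 with h1 | h1
    · constructor
      · refine (min_le_left _ _).trans ?_
        rw [one_le_div fp]
        exact Fanti (by positivity) (by nlinarith)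
      · refine le_trans ?_ (le_max_right _ _)
        rw [div_le_iff₀ fp]
        have := hF.dbl u hu x hx h1
        rwa [div_eq_mul_one_div, mul_comm (F u)] at this
    · constructor
      · refine (min_le_right _ _).trans ?_
        rw [div_le_div_iff₀ hx fp]
        have := hF.dbl (u * x) (by positivity) (1/x) (by positivity) (by rw [div_le_one hx]; exact h1)
        have e : u * x * (1/x) = u := by field_simp
        rw [e] at this
        simpa using this
      · refine le_trans ?_ (le_max_left _ _)
        rw [div_le_one fp]
        exact Fanti hu (by nlinarith)
  have exR : ∀ x : ℝ, ∃ c : ℝ, 0 < x → (0 < c ∧ Tendsto (fun u => F (u * x) / F u) 𝒰 (nhds c)) := by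
    intro x
    by_cases hx : 0 < x
    · obtain ⟨c, hc, h1⟩ := ultra_lim (𝒰 := 𝒰) (g := fun u => F (u * x) / F u) (up.mono fun u hu => bd x hx u hu)
      exact ⟨c, fun _ => ⟨(lt_min one_pos (by positivity)).trans_le hc.1, h1⟩⟩
    · exact ⟨0, fun h => absurd h hx⟩
  choose R hR using exR
  have Rpos : ∀ x, 0 < x → 0 < R x := fun x hx => (hR x hx).1
  have Rlim : ∀ x, 0 < x → Tendsto (fun u => F (u * x) / F u) 𝒰 (nhds (R x)) := fun x hx => (hR x hx).2
  have Ranti : AntitoneOn R (Ioi 0) := by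
    intro x hx y hy hxy
    have hx : 0 < x := hx
    refine le_of_tendsto_of_tendsto (Rlim y hy) (Rlim x hx) ?_
    filter_upwards [up] with u hu
    have := hF.pos u hu
    have := Fanti (show 0 < u * x by positivity) (show u * x ≤ u * y by gcongr)
    gcongr
  have Rconv : ConvexOn ℝ (Ioi 0) R := by
    refine ⟨convex_Ioi 0, ?_⟩
    intro x hx y hy a b ha hb hab
    have hx : 0 < x := hx
    have hy : 0 < y := hy
    have hz : 0 < a • x + b • y := (convex_Ioi (0:ℝ)) hx hy ha hb hab
    refine le_of_tendsto_of_tendsto (Rlim _ hz) (((Rlim x hx).const_mul a).add ((Rlim y hy).const_mul b)) ?_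
    filter_upwards [up] with u hu
    have fp := hF.pos u hu
    have := hF.conv.2 (mem_Ioi.2 (show 0 < u * x by positivity)) (mem_Ioi.2 (show 0 < u * y by positivity)) ha hb hab
    have e : a • (u * x) + b • (u * y) = u * (a • x + b • y) := by simp only [smul_eq_mul]; ring
    rw [e] at this
    simp only [smul_eq_mul] at this ⊢
    rw [← mul_div_assoc, ← mul_div_assoc, ← add_div]
    gcongr
  have Rone : R 1 = 1 := by
    refine tendsto_nhds_unique (Rlim 1 one_pos) (tendsto_const_nhds.congr' ?_)
    filter_upwards [up] with u hu
    rw [mul_one, div_self (hF.pos u hu).ne']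
  have Rgrow : ∃ ε, 0 < ε ∧ ∀ x, 0 < x → (1 + ε) * R x ≤ R (x / 4) := by
    obtain ⟨ε, hε, hg⟩ := h.growth
    refine ⟨ε, hε, fun x hx => ?_⟩
    refine le_of_tendsto_of_tendsto ((Rlim x hx).const_mul (1+ε)) (Rlim (x/4) (by positivity)) ?_
    have tx : Tendsto (fun u : ℝ => u * x) 𝒰 (nhdsWithin 0 (Ioi 0)) := by
      refine tendsto_nhdsWithin_iff.2 ⟨?_, ?_⟩
      · have : Tendsto (fun u : ℝ => u * x) (nhds 0) (nhds (0 * x)) := tendsto_id.mul_const x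
        rw [zero_mul] at this
        exact this.mono_left (hU.trans nhdsWithin_le_nhds)
      · filter_upwards [up] with u hu
        exact mul_pos hu hx
    filter_upwards [up, tx.eventually hg] with u hu h1
    have fp := hF.pos u hu
    rw [← mul_div_assoc, ← mul_div_assoc]
    gcongr
  have Rcont : ContinuousOn R (Ioi 0) := Rconv.continuousOn isOpen_Ioi
  have sq : ∀ (g : ℝ → ℝ) (c : ℝ), 0 < c → Tendsto (fun u => g u / u) 𝒰 (nhds c) →
      Tendsto (fun u => F (g u) / F u) 𝒰 (nhds (R c)) := by
    intro g c hc hg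
    have hcc : ContinuousAt R c := Rcont.continuousAt (Ioi_mem_nhds hc)
    have gpos : ∀ᶠ u in (𝒰 : Filter ℝ), 0 < g u := by
      filter_upwards [up, hg.eventually (lt_mem_nhds hc)] with u hu h1
      exact (div_pos_iff_of_pos_right hu).1 h1
    rw [tendsto_order]
    constructor
    · intro a ha
      have ev1 : ∀ᶠ y in nhdsWithin c (Ioi c), a < R y :=
        nhdsWithin_le_nhds (hcc.eventually (lt_mem_nhds ha))
      obtain ⟨c', h1, h2⟩ := (ev1.and eventually_mem_nhdsWithin).exists
      have h2 : c < c' := h2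
      filter_upwards [up, gpos, hg.eventually (gt_mem_nhds h2),
        (Rlim c' (hc.trans h2)).eventually (lt_mem_nhds h1)] with u hu gp l1 l2
      have fp := hF.pos u hu
      rw [div_lt_iff₀ hu] at l1
      have := Fanti gp (show g u ≤ u * c' by linarith)
      refine l2.trans_le ?_
      gcongr
    · intro a ha
      have ev1 : ∀ᶠ y in nhdsWithin c (Iio c), R y < a ∧ 0 < y :=
        nhdsWithin_le_nhds ((hcc.eventually (gt_mem_nhds ha)).and (lt_mem_nhds hc))
      obtain ⟨c', h1, h2⟩ := (ev1.and eventually_mem_nhdsWithin).exists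
      have h2 : c' < c := h2
      have hc' := h1.2
      filter_upwards [up, gpos, hg.eventually (lt_mem_nhds h2),
        (Rlim c' hc').eventually (gt_mem_nhds h1.1)] with u hu gp l1 l2
      have fp := hF.pos u hu
      rw [lt_div_iff₀ hu] at l1
      have := Fanti (show 0 < u * c' by positivity) (show u * c' ≤ g u by linarith)
      refine lt_of_le_of_lt ?_ l2
      gcongr
  have S : ∀ x, 0 < x → Tendsto (fun u => F (x * lam u) / F u) 𝒰 (nhds (R (H x) - 1)) := by
    intro x hx
    have h1 := (sq (fun u => φ u x) (H x) (hH.pos x hx) ((h.φlim x hx).mono_left hU)).sub_const 1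
    refine h1.congr' ?_
    filter_upwards [up, hU (h.φeq x hx)] with u hu e
    have fp := hF.pos u hu
    rw [e]; field_simp; ring
  have lp : ∀ᶠ u in (𝒰 : Filter ℝ), 0 < lam u := hU h.lpos
  have hK : ∃ K, ∀ᶠ u in (𝒰 : Filter ℝ), lam u / u ≤ K := by
    by_contra hcon
    push Not at hcon
    have hcon : ∀ K, ∀ᶠ u in (𝒰 : Filter ℝ), K < lam u / u := by
      intro K
      have := hcon K
      exact this
    have hle : ∀ K, 0 < K → R (H 1) - 1 ≤ R K := by
      intro K hKp
      refine le_of_tendsto_of_tendsto (S 1 one_pos) (Rlim K hKp) ?_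
      filter_upwards [up, hcon K] with u hu h1
      have fp := hF.pos u hu
      rw [lt_div_iff₀ hu] at h1
      have := Fanti (show 0 < u * K by positivity) (show u * K ≤ 1 * lam u by linarith)
      gcongr
    have hH1 := hH.lt_one 1 one_pos
    have hH0 := hH.pos 1 one_pos
    have r4 : R 4 < 1 := by
      obtain ⟨ε, hε, hg⟩ := Rgrow
      have := hg 4 (by norm_num)
      norm_num [Rone] at this
      have := Rpos 4 (by norm_num)
      nlinarith
    have sl := Rconv.slope_mono_adjacent (x := H 1) (y := 1) (z := 4) (mem_Ioi.2 hH0) (by simp) hH1 (by norm_num)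
    have r1 : 1 < R (H 1) := by
      rw [Rone, div_le_div_iff₀ (by linarith) (by norm_num)] at sl
      nlinarith
    obtain ⟨x, hx, hx2⟩ := shrink_pow Rone Rgrow (R (H 1) - 1) (by linarith)
    linarith [hle x hx]
  have hd : ∃ d, 0 < d ∧ ∀ᶠ u in (𝒰 : Filter ℝ), d ≤ lam u / u := by
    by_contra hcon
    push Not at hcon
    have hcon : ∀ d, 0 < d → ∀ᶠ u in (𝒰 : Filter ℝ), lam u / u < d := by
      intro d hd
      have := hcon d hd
      exact this
    obtain ⟨x, hx, hx2⟩ := grow_pow Rone Rgrow (R (H 1) - 1)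
    have : R x ≤ R (H 1) - 1 := by
      refine le_of_tendsto_of_tendsto (Rlim x hx) (S 1 one_pos) ?_
      filter_upwards [up, hcon x hx, lp] with u hu h1 h2
      have fp := hF.pos u hu
      rw [div_lt_iff₀ hu] at h1
      have := Fanti (show 0 < 1 * lam u by positivity) (show 1 * lam u ≤ u * x by linarith)
      gcongr
    linarith
  obtain ⟨K, hK⟩ := hK
  obtain ⟨d, hd0, hd⟩ := hd
  obtain ⟨l, hl, hlim⟩ := ultra_lim (𝒰 := 𝒰) (g := fun u => lam u / u) (hd.and hK)
  have lpos : 0 < l := hd0.trans_le hl.1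
  refine ⟨R, l, Rlim, hlim, ⟨Rpos, Ranti, Rconv, Rone, Rgrow, lpos, ?_⟩⟩
  intro x hx
  have h1 : Tendsto (fun u => (x * lam u) / u) 𝒰 (nhds (l * x)) := by
    have := hlim.const_mul x
    rw [mul_comm] at this
    refine this.congr fun u => ?_
    ring
  have := tendsto_nhds_unique (sq _ _ (by positivity) h1) (S x hx)
  linarith

theorem LHyp.core {F H lam : ℝ → ℝ} {φ : ℝ → ℝ → ℝ} (h : LHyp F H lam φ) :
    ∃ α m : ℝ, 0 < α ∧ 0 < m ∧
      (∀ x, 0 < x → Tendsto (fun u => F (u * x) / F u) (nhdsWithin 0 (Ioi 0)) (nhds (x ^ (-α)))) ∧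
      Tendsto (fun u => lam u / u) (nhdsWithin 0 (Ioi 0)) (nhds m) ∧
      Tendsto (fun q => H q / q) (nhdsWithin 0 (Ioi 0)) (nhds m) ∧
      ∀ q, 0 < q → (H q) ^ (-α) = 1 + (m * q) ^ (-α) := by
  have hF := h.hF
  have hH := h.hH
  obtain ⟨R, m, hR, hm, hP⟩ := h.exists_R (Ultrafilter.of (nhdsWithin 0 (Ioi 0))) (Ultrafilter.of_le _)
  have Hq := hP.tendsto hH
  have all : ∀ g : Ultrafilter ℝ, (g : Filter ℝ) ≤ nhdsWithin 0 (Ioi 0) →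
      (∀ x, 0 < x → Tendsto (fun u => F (u * x) / F u) g (nhds (R x))) ∧
      Tendsto (fun u => lam u / u) g (nhds m) := by
    intro g hg
    obtain ⟨R', m', hR', hm', hP'⟩ := h.exists_R g hg
    have e : m' = m := tendsto_nhds_unique (hP'.tendsto hH) Hq
    subst e
    refine ⟨fun x hx => ?_, hm'⟩
    rw [hP.uniq hP' hH hx]
    exact hR' x hx
  have Rlim : ∀ x, 0 < x → Tendsto (fun u => F (u * x) / F u) (nhdsWithin 0 (Ioi 0)) (nhds (R x)) :=
    fun x hx => (tendsto_iff_ultrafilter _ _ _).2 fun g hg => (all g hg).1 x hx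
  have llim : Tendsto (fun u => lam u / u) (nhdsWithin 0 (Ioi 0)) (nhds m) :=
    (tendsto_iff_ultrafilter _ _ _).2 fun g hg => (all g hg).2
  have Rmul : ∀ x y, 0 < x → 0 < y → R (x * y) = R x * R y := by
    intro x y hx hy
    have tx : Tendsto (fun u : ℝ => u * y) (nhdsWithin 0 (Ioi 0)) (nhdsWithin 0 (Ioi 0)) := by
      refine tendsto_nhdsWithin_iff.2 ⟨?_, ?_⟩
      · have : Tendsto (fun u : ℝ => u * y) (nhds 0) (nhds (0 * y)) := tendsto_id.mul_const y
        rw [zero_mul] at this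
        exact this.mono_left nhdsWithin_le_nhds
      · filter_upwards [evpos] with u hu
        exact mul_pos hu hy
    refine tendsto_nhds_unique (Rlim (x * y) (by positivity)) ((((Rlim x hx).comp tx).mul (Rlim y hy)).congr' ?_)
    filter_upwards [evpos] with u hu
    have := hF.pos u hu
    have := hF.pos (u * y) (by positivity)
    simp only [Function.comp]
    have e : u * y * x = u * (x * y) := by ring
    rw [e]
    field_simp
  have Rcont : ContinuousOn R (Ioi 0) := hP.conv.continuousOn isOpen_Ioi
  let L : ℝ →+ ℝ :=
    { toFun := fun s => Real.log (R (Real.exp s))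
      map_zero' := by simp [hP.one]
      map_add' := fun s t => by
        rw [Real.exp_add, Rmul _ _ (Real.exp_pos _) (Real.exp_pos _), Real.log_mul
          (hP.pos _ (Real.exp_pos _)).ne' (hP.pos _ (Real.exp_pos _)).ne'] }
  have Lc : Continuous L := by
    have : Continuous fun s => R (Real.exp s) :=
      Rcont.comp_continuous Real.continuous_exp fun s => Real.exp_pos s
    exact this.log fun s => (hP.pos _ (Real.exp_pos _)).ne'
  have Llin : ∀ s, L s = s * L 1 := by
    intro s
    have := map_real_smul L Lc s 1
    simpa using this
  have Rpow : ∀ x, 0 < x → R x = x ^ (L 1) := by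
    intro x hx
    have h1 := Llin (Real.log x)
    have h2 : L (Real.log x) = Real.log (R x) := by
      change Real.log (R (Real.exp (Real.log x))) = _
      rw [Real.exp_log hx]
    rw [h2] at h1
    rw [Real.rpow_def_of_pos hx, ← h1, Real.exp_log (hP.pos x hx)]
  have hneg : L 1 < 0 := by
    by_contra hc
    push Not at hc
    obtain ⟨ε, hε, hg⟩ := hP.grow
    have h1 := hg 1 one_pos
    rw [hP.one, Rpow _ (by norm_num)] at h1
    have := Real.rpow_le_one (show (0:ℝ) ≤ 1/4 by norm_num) (by norm_num) hc
    linarith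
  refine ⟨-L 1, m, by linarith, hP.lpos, ?_, llim, Hq, ?_⟩
  · intro x hx
    rw [neg_neg, ← Rpow x hx]
    exact Rlim x hx
  · intro q hq
    rw [neg_neg, ← Rpow _ (hH.pos q hq), ← Rpow _ (mul_pos hP.lpos hq)]
    exact hP.eq q hq

lemma kk_nonneg (z : ℝ) : 0 ≤ Real.exp (-z) - 1 + z := by
  have := Real.add_one_le_exp (-z); linarith

lemma kk_le (z : ℝ) (hz : 0 ≤ z) : Real.exp (-z) - 1 + z ≤ z := by
  have := Real.exp_le_one_iff.2 (show -z ≤ 0 by linarith); linarith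

lemma kk_le_sq (z : ℝ) (hz : 0 ≤ z) : Real.exp (-z) - 1 + z ≤ z ^ 2 := by
  rcases le_total z 1 with h | h
  · have := Real.abs_exp_sub_one_sub_id_le (x := -z) (by rw [abs_neg, abs_of_nonneg hz]; exact h)
    have := (le_abs_self _).trans this
    nlinarith
  · have := kk_le z hz
    nlinarith

lemma kk_mono {x y : ℝ} (hx : 0 ≤ x) (hxy : x ≤ y) :
    Real.exp (-x) - 1 + x ≤ Real.exp (-y) - 1 + y := by
  have h1 := Real.add_one_le_exp (-(y - x))
  have h2 : Real.exp (-y) = Real.exp (-x) * Real.exp (-(y-x)) := by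
    rw [← Real.exp_add]; congr 1; ring
  have h3 := Real.exp_pos (-x)
  have h4 := Real.exp_le_one_iff.2 (show -x ≤ 0 by linarith)
  rw [h2]
  nlinarith [mul_le_mul_of_nonneg_left h1 h3.le]

lemma kk_aux (y : ℝ) (hy : 0 ≤ y) : 2 - y ≤ (2 + y) * Real.exp (-y) := by
  have hm : MonotoneOn (fun y : ℝ => (2 + y) * Real.exp (-y) + y) (Ici 0) := by
    refine monotoneOn_of_deriv_nonneg (convex_Ici 0) (by fun_prop) (by fun_prop) ?_
    intro x hx
    have hd : HasDerivAt (fun y : ℝ => (2 + y) * Real.exp (-y) + y)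
        (1 * Real.exp (-x) + (2 + x) * (Real.exp (-x) * (-1)) + 1) x :=
      ((((hasDerivAt_id x).const_add 2).mul ((hasDerivAt_neg x).exp)).add (hasDerivAt_id x))
    rw [hd.deriv]
    have h1 := Real.add_one_le_exp x
    have h2 : Real.exp x * Real.exp (-x) = 1 := by rw [← Real.exp_add]; simp
    have h3 := Real.exp_pos (-x)
    nlinarith [mul_le_mul_of_nonneg_right h1 h3.le]
  have := hm (mem_Ici.2 le_rfl) (mem_Ici.2 hy) hy
  simp at this
  linarith

lemma kk_scale (z b : ℝ) (hz : 0 < z) (hb : 0 < b) (hb1 : b ≤ 1) :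
    b ^ 2 * (Real.exp (-z) - 1 + z) ≤ Real.exp (-(z * b)) - 1 + z * b := by
  have hm : AntitoneOn (fun y : ℝ => (Real.exp (-y) - 1 + y) / y ^ 2) (Ioi 0) := by
    have hd : ∀ x : ℝ, 0 < x → HasDerivAt (fun y : ℝ => (Real.exp (-y) - 1 + y) / y ^ 2)
        (((Real.exp (-x) * (-1) + 1) * x ^ 2 - (Real.exp (-x) - 1 + x) * (2 * x)) / (x ^ 2) ^ 2) x := by
      intro x hx
      have h1 : HasDerivAt (fun y : ℝ => Real.exp (-y) - 1 + y) (Real.exp (-x) * (-1) + 1) x :=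
        ((hasDerivAt_neg x).exp.sub_const 1).add (hasDerivAt_id x)
      have h2 : HasDerivAt (fun y : ℝ => y ^ 2) (2 * x) x := by simpa using hasDerivAt_pow 2 x
      exact h1.div h2 (by positivity)
    refine antitoneOn_of_deriv_nonpos (convex_Ioi 0) ?_ ?_ ?_
    · exact fun x hx => (hd x hx).continuousAt.continuousWithinAt
    · rw [interior_Ioi]
      exact fun x hx => (hd x hx).differentiableAt.differentiableWithinAt
    · rw [interior_Ioi]
      intro x hx
      have hx : 0 < x := hx
      rw [(hd x hx).deriv]
      apply div_nonpos_of_nonpos_of_nonneg _ (by positivity)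
      have := kk_aux x hx.le
      have : x * (2 - x) ≤ x * ((2 + x) * Real.exp (-x)) := by gcongr
      nlinarith
  have := hm (mem_Ioi.2 (show 0 < z * b by positivity)) (mem_Ioi.2 hz) (by nlinarith)
  simp only at this
  rw [div_le_div_iff₀ (by positivity) (by positivity)] at this
  have hz2 : 0 < z ^ 2 := by positivity
  apply le_of_mul_le_mul_right _ hz2
  linarith [mul_pow z b 2]

structure PsiHyp (Ψ : ℝ → ℝ) : Prop where
  pos : ∀ u, 0 < u → 0 < Ψ u
  mono : MonotoneOn Ψ (Ioi 0)
  cont : ContinuousOn Ψ (Ioi 0)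
  scale : ∀ u, 0 < u → ∀ b, 0 < b → b ≤ 1 → b ^ 2 * Ψ u ≤ Ψ (u * b)
  little : Tendsto (fun u => Ψ u / u) (nhdsWithin 0 (Ioi 0)) (nhds 0)
  integ : ∀ u, 0 < u → IntegrableOn (fun v => (Ψ v)⁻¹) (Ioi u)

lemma psiHyp (Ψ : ℝ → ℝ) (β : ℝ) (π : Measure ℝ)
    (hβ : 0 ≤ β)
    (hπfin : ∫⁻ x in Ioi (0:ℝ), ENNReal.ofReal (min x (x ^ 2)) ∂π < ⊤)
    (hΨ : ∀ u : ℝ, 0 < u →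
      Ψ u = β * u ^ 2 + ∫ x in Ioi (0:ℝ), (Real.exp (-(u * x)) - 1 + u * x) ∂π)
    (hGrey₁ : Tendsto Ψ atTop atTop)
    (hGrey₂ : ∃ a : ℝ, 0 < a ∧ IntegrableOn (fun u => (Ψ u)⁻¹) (Ioi a)) : PsiHyp Ψ := by
  have hint0 : IntegrableOn (fun x : ℝ => min x (x ^ 2)) (Ioi 0) π := by
    refine ⟨(by fun_prop : Measurable fun x : ℝ => min x (x ^ 2)).aestronglyMeasurable, ?_⟩
    rw [hasFiniteIntegral_iff_ofReal]
    · exact hπfin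
    · refine (ae_restrict_iff' measurableSet_Ioi).2 (Eventually.of_forall fun x hx => ?_)
      have hx : 0 < x := hx
      exact le_min hx.le (by positivity)
  have hmeas : ∀ u : ℝ, AEStronglyMeasurable (fun x : ℝ => Real.exp (-(u * x)) - 1 + u * x) (π.restrict (Ioi 0)) :=
    fun u => (by fun_prop : Measurable fun x : ℝ => Real.exp (-(u * x)) - 1 + u * x).aestronglyMeasurable
  have bound : ∀ C u x : ℝ, 1 ≤ C → 0 < u → u ≤ C → 0 < x →
      ‖Real.exp (-(u * x)) - 1 + u * x‖ ≤ C ^ 2 * min x (x ^ 2) := by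
    intro C u x hC hu huC hx
    rw [Real.norm_of_nonneg (kk_nonneg _), mul_min_of_nonneg _ _ (by positivity)]
    have ux : 0 ≤ u * x := by positivity
    refine le_min ((kk_le _ ux).trans ?_) ((kk_le_sq _ ux).trans ?_)
    · have : u ≤ C ^ 2 := by nlinarith
      gcongr
    · rw [mul_pow]; gcongr
  have hint : ∀ u, 0 < u → IntegrableOn (fun x : ℝ => Real.exp (-(u * x)) - 1 + u * x) (Ioi 0) π := by
    intro u hu
    refine (hint0.const_mul ((max 1 u) ^ 2)).mono' (hmeas u) ?_
    refine (ae_restrict_iff' measurableSet_Ioi).2 (Eventually.of_forall fun x hx => ?_)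
    exact bound _ u x (le_max_left _ _) hu (le_max_right _ _) hx
  have mono : MonotoneOn Ψ (Ioi 0) := by
    intro u hu v hv huv
    have hu : 0 < u := hu
    have hv : 0 < v := hv
    rw [hΨ u hu, hΨ v hv]
    have : ∫ x in Ioi (0:ℝ), (Real.exp (-(u * x)) - 1 + u * x) ∂π ≤
        ∫ x in Ioi (0:ℝ), (Real.exp (-(v * x)) - 1 + v * x) ∂π := by
      refine setIntegral_mono_on (hint u hu) (hint v hv) measurableSet_Ioi fun x hx => ?_
      have hx : 0 < x := hx
      exact kk_mono (by positivity) (by gcongr)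
    gcongr
  have scale : ∀ u, 0 < u → ∀ b, 0 < b → b ≤ 1 → b ^ 2 * Ψ u ≤ Ψ (u * b) := by
    intro u hu b hb hb1
    rw [hΨ u hu, hΨ (u * b) (by positivity), mul_add, ← integral_const_mul]
    have : ∫ x in Ioi (0:ℝ), b ^ 2 * (Real.exp (-(u * x)) - 1 + u * x) ∂π ≤
        ∫ x in Ioi (0:ℝ), (Real.exp (-(u * b * x)) - 1 + u * b * x) ∂π := by
      refine setIntegral_mono_on ((hint u hu).const_mul _) (hint _ (by positivity)) measurableSet_Ioi fun x hx => ?_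
      have hx : 0 < x := hx
      have := kk_scale (u * x) b (by positivity) hb hb1
      have e : u * b * x = u * x * b := by ring
      rw [e]; exact this
    have e : b ^ 2 * (β * u ^ 2) = β * (u * b) ^ 2 := by ring
    rw [e]; gcongr
  have pos : ∀ u, 0 < u → 0 < Ψ u := by
    intro u hu
    obtain ⟨v, hv, hv2⟩ := ((hGrey₁.eventually_gt_atTop 0).and (eventually_ge_atTop u)).exists
    have hv0 : 0 < v := hu.trans_le hv2
    have := scale v hv0 (u / v) (by positivity) (by rw [div_le_one hv0]; exact hv2)
    rw [mul_div_cancel₀ _ hv0.ne'] at this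
    exact lt_of_lt_of_le (by positivity) this
  have cont : ContinuousOn Ψ (Ioi 0) := by
    have c2 : ContinuousOn (fun u => β * u ^ 2 + ∫ x in Ioi (0:ℝ), (Real.exp (-(u * x)) - 1 + u * x) ∂π) (Ioi 0) := by
      apply ContinuousOn.add (by fun_prop)
      intro u hu
      have hu : 0 < u := hu
      apply ContinuousAt.continuousWithinAt
      refine continuousAt_of_dominated (bound := fun x => (u + 1) ^ 2 * min x (x ^ 2)) (Eventually.of_forall hmeas) ?_ (hint0.const_mul _) ?_
      · filter_upwards [Ioo_mem_nhds hu (lt_add_one u)] with v hv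
        refine (ae_restrict_iff' measurableSet_Ioi).2 (Eventually.of_forall fun x hx => ?_)
        exact bound _ v x (by linarith) hv.1 hv.2.le hx
      · exact Eventually.of_forall fun x => by fun_prop
    exact c2.congr fun u hu => hΨ u hu
  have little : Tendsto (fun u => Ψ u / u) (nhdsWithin 0 (Ioi 0)) (nhds 0) := by
    have h1 : Tendsto (fun u => ∫ x in Ioi (0:ℝ), (Real.exp (-(u * x)) - 1 + u * x) / u ∂π)
        (nhdsWithin 0 (Ioi 0)) (nhds (∫ x in Ioi (0:ℝ), (0:ℝ) ∂π)) := by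
      refine tendsto_integral_filter_of_dominated_convergence (fun x => min x (x ^ 2))
        (Eventually.of_forall fun u => (by fun_prop : Measurable fun x : ℝ => (Real.exp (-(u * x)) - 1 + u * x) / u).aestronglyMeasurable) ?_ hint0 ?_
      · filter_upwards [Ioc_mem_nhdsGT one_pos] with u hu
        refine (ae_restrict_iff' measurableSet_Ioi).2 (Eventually.of_forall fun x hx => ?_)
        have hu0 := hu.1
        have hu1 := hu.2
        have hx : 0 < x := hx
        rw [Real.norm_of_nonneg (div_nonneg (kk_nonneg _) hu0.le)]
        have ux : 0 ≤ u * x := by positivity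
        refine le_min ?_ ?_
        · rw [div_le_iff₀ hu0]; linarith [kk_le _ ux]
        · rw [div_le_iff₀ hu0]
          have := kk_le_sq _ ux
          have : (u * x) ^ 2 ≤ x ^ 2 * u := by
            have : 0 ≤ x ^ 2 * u := by positivity
            nlinarith
          linarith
      · refine (ae_restrict_iff' measurableSet_Ioi).2 (Eventually.of_forall fun x hx => ?_)
        have hx : 0 < x := hx
        have t : Tendsto (fun u : ℝ => u * x ^ 2) (nhdsWithin 0 (Ioi 0)) (nhds 0) := by
          have : Tendsto (fun u : ℝ => u * x ^ 2) (nhds 0) (nhds (0 * x ^ 2)) := tendsto_id.mul_const _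
          rw [zero_mul] at this
          exact this.mono_left nhdsWithin_le_nhds
        refine tendsto_of_tendsto_of_tendsto_of_le_of_le' tendsto_const_nhds t ?_ ?_
        · filter_upwards [evpos] with u hu
          exact div_nonneg (kk_nonneg _) hu.le
        · filter_upwards [evpos] with u hu
          rw [div_le_iff₀ hu]
          linarith [kk_le_sq (u * x) (by positivity), mul_pow u x 2]
    have h2 : Tendsto (fun u : ℝ => β * u) (nhdsWithin 0 (Ioi 0)) (nhds 0) := by
      have : Tendsto (fun u : ℝ => β * u) (nhds 0) (nhds (β * 0)) := tendsto_id.const_mul _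
      rw [mul_zero] at this
      exact this.mono_left nhdsWithin_le_nhds
    have h3 := h2.add h1
    simp only [integral_zero, add_zero] at h3
    refine h3.congr' ?_
    filter_upwards [evpos] with u hu
    rw [hΨ u hu, integral_div]
    field_simp
  refine ⟨pos, mono, cont, scale, little, ?_⟩
  intro u hu
  obtain ⟨a, ha, hai⟩ := hGrey₂
  rcases le_total a u with h | h
  · exact hai.mono_set (Ioi_subset_Ioi h)
  · rw [← Ioc_union_Ioi_eq_Ioi h]
    refine IntegrableOn.union ?_ hai
    have : ContinuousOn (fun v => (Ψ v)⁻¹) (Icc u a) :=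
      (cont.mono fun x hx => hu.trans_le hx.1).inv₀ fun x hx => (pos x (hu.trans_le hx.1)).ne'
    exact this.integrableOn_Icc.mono_set Ioc_subset_Icc_self

lemma F_hasDeriv {Ψ : ℝ → ℝ} (h : PsiHyp Ψ) (u : ℝ) (hu : 0 < u) :
    HasDerivAt (fun u => ∫ v in Ioi u, (Ψ v)⁻¹) (-(Ψ u)⁻¹) u := by
  have hc : ContinuousOn (fun v => (Ψ v)⁻¹) (Ioi 0) := h.cont.inv₀ fun x hx => (h.pos x hx).ne'
  have hu2 : 0 < u / 2 := by positivity
  have d : HasDerivAt (fun w => ∫ v in (u/2)..w, (Ψ v)⁻¹) ((Ψ u)⁻¹) u := by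
    apply intervalIntegral.integral_hasDerivAt_right
    · rw [intervalIntegrable_iff_integrableOn_Ioc_of_le (by linarith)]
      exact (h.integ _ hu2).mono_set Ioc_subset_Ioi_self
    · exact hc.stronglyMeasurableAtFilter isOpen_Ioi u hu
    · exact hc.continuousAt (Ioi_mem_nhds hu)
  have d2 := d.const_sub (∫ v in Ioi (u/2), (Ψ v)⁻¹)
  refine d2.congr_of_eventuallyEq ?_
  filter_upwards [Ioi_mem_nhds (show u / 2 < u by linarith)] with w hw
  have hw : u / 2 < w := hw
  rw [← intervalIntegral.integral_interval_add_Ioi' (a := u / 2) (b := w)]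
  · simp
  · rw [intervalIntegrable_iff_integrableOn_Ioc_of_le hw.le]
    exact (h.integ _ hu2).mono_set Ioc_subset_Ioi_self
  · exact h.integ _ (hu2.trans hw)

lemma F_tendsto {Ψ : ℝ → ℝ} (h : PsiHyp Ψ) :
    Tendsto (fun u => ∫ v in Ioi u, (Ψ v)⁻¹) atTop (nhds 0) := by
  have h1 := (intervalIntegral_tendsto_integral_Ioi 1 (h.integ 1 one_pos) tendsto_id).const_sub (∫ v in Ioi 1, (Ψ v)⁻¹)
  rw [sub_self] at h1
  refine h1.congr' ?_
  filter_upwards [eventually_gt_atTop 1] with w hw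
  rw [← intervalIntegral.integral_interval_add_Ioi' (a := 1) (b := w)]
  · simp
  · rw [intervalIntegrable_iff_integrableOn_Ioc_of_le hw.le]
    exact (h.integ _ one_pos).mono_set Ioc_subset_Ioi_self
  · exact h.integ _ (one_pos.trans hw)

lemma F_hyp {Ψ : ℝ → ℝ} (h : PsiHyp Ψ) : FHyp (fun u => ∫ v in Ioi u, (Ψ v)⁻¹) := by
  set F : ℝ → ℝ := fun u => ∫ v in Ioi u, (Ψ v)⁻¹ with hFdef
  have hd : ∀ u, 0 < u → HasDerivAt F (-(Ψ u)⁻¹) u := F_hasDeriv h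
  have hcont : ContinuousOn F (Ioi 0) := fun u hu => (hd u hu).continuousAt.continuousWithinAt
  have anti : StrictAntiOn F (Ioi 0) := by
    refine strictAntiOn_of_deriv_neg (convex_Ioi 0) hcont ?_
    rw [interior_Ioi]
    intro x hx
    rw [(hd x hx).deriv]
    have := h.pos x hx
    have := inv_pos.2 this
    linarith
  have conv : ConvexOn ℝ (Ioi 0) F := by
    refine MonotoneOn.convexOn_of_deriv (convex_Ioi 0) hcont ?_ ?_
    · rw [interior_Ioi]
      exact fun x hx => (hd x hx).differentiableAt.differentiableWithinAt
    · rw [interior_Ioi]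
      intro x hx y hy hxy
      rw [(hd x hx).deriv, (hd y hy).deriv]
      have := h.mono hx hy hxy
      have := h.pos x hx
      gcongr
  have nn : ∀ u, 0 < u → 0 ≤ F u := fun u hu =>
    setIntegral_nonneg measurableSet_Ioi fun x hx => (inv_pos.2 (h.pos x (hu.trans hx))).le
  refine ⟨?_, anti, conv, ?_, ?_⟩
  · intro u hu
    exact (nn (u+1) (by linarith)).trans_lt (anti (mem_Ioi.2 hu) (mem_Ioi.2 (by linarith)) (by linarith))
  · intro u hu b hb hb1
    have e := integral_comp_mul_left_Ioi (fun v => (Ψ v)⁻¹) u hb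
    have ii : IntegrableOn (fun v => (Ψ (b * v))⁻¹) (Ioi u) := by
      rw [integrableOn_Ioi_comp_mul_left_iff (fun v => (Ψ v)⁻¹) u hb]
      exact h.integ _ (by positivity)
    have le : ∫ v in Ioi u, (Ψ (b * v))⁻¹ ≤ ∫ v in Ioi u, (b ^ 2)⁻¹ * (Ψ v)⁻¹ := by
      refine setIntegral_mono_on ii ((h.integ u hu).const_mul _) measurableSet_Ioi fun x hx => ?_
      have hx : 0 < x := hu.trans hx
      rw [← mul_inv]
      have := h.pos x hx
      have := h.scale x hx b hb hb1
      rw [mul_comm b x]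
      gcongr
    rw [e, integral_const_mul, smul_eq_mul] at le
    change ∫ v in Ioi (u * b), (Ψ v)⁻¹ ≤ _
    rw [mul_comm u b, le_div_iff₀ hb]
    change _ * _ ≤ ∫ v in Ioi u, (Ψ v)⁻¹
    have := mul_le_mul_of_nonneg_left le (show 0 ≤ b ^ 2 by positivity)
    rw [← mul_assoc, ← mul_assoc, mul_inv_cancel₀ (by positivity), one_mul, pow_two, mul_assoc b b,
      mul_inv_cancel₀ hb.ne', mul_one] at this
    linarith
  · intro a ha ha1
    have hlit : Tendsto (fun u => u / Ψ u) (nhdsWithin 0 (Ioi 0)) atTop := by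
      have : Tendsto (fun u => Ψ u / u) (nhdsWithin 0 (Ioi 0)) (nhdsWithin 0 (Ioi 0)) :=
        tendsto_nhdsWithin_iff.2 ⟨h.little, by
          filter_upwards [evpos] with u hu
          exact div_pos (h.pos u hu) hu⟩
      refine (tendsto_inv_nhdsGT_zero.comp this).congr fun u => ?_
      simp
    refine tendsto_atTop_mono' _ ?_ (hlit.const_mul_atTop (show 0 < 1 - a by linarith))
    filter_upwards [evpos] with u hu
    have hua : u * a < u := by nlinarith
    have := conv.slope_le_of_hasDerivAt (mem_Ioi.2 (show 0 < u * a by positivity)) (mem_Ioi.2 hu) hua (hd u hu)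
    rw [slope_def_field, div_le_iff₀ (by linarith)] at this
    have e : (1 - a) * (u / Ψ u) = (Ψ u)⁻¹ * (u - u * a) := by ring
    rw [e]; linarith


lemma psi_rv {Ψ F : ℝ → ℝ} {α : ℝ} (hF : FHyp F) (hd : ∀ u, 0 < u → HasDerivAt F (-(Ψ u)⁻¹) u)
    (hpos : ∀ u, 0 < u → 0 < Ψ u) (hα : 0 < α)
    (hlim : ∀ x, 0 < x → Tendsto (fun u => F (u * x) / F u) (nhdsWithin 0 (Ioi 0)) (nhds (x ^ (-α)))) :
    ∀ x, 0 < x → Tendsto (fun u => Ψ (u * x) / Ψ u) (nhdsWithin 0 (Ioi 0)) (nhds (x ^ (α + 1))) := by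
  have hs : Tendsto (fun c => -slope (fun x : ℝ => x ^ (-α)) 1 c) (nhdsWithin 1 {1}ᶜ) (nhds α) := by
    have h1 : HasDerivAt (fun x : ℝ => x ^ (-α)) (-α) 1 := by
      have := Real.hasDerivAt_rpow_const (x := 1) (p := -α) (Or.inl one_ne_zero)
      simpa using this
    have := (hasDerivAt_iff_tendsto_slope.1 h1).neg
    simpa using this
  have hsc : ∀ c, 0 < c → Tendsto (fun u => -((F (u * c) / F u - 1) / (c - 1))) (nhdsWithin 0 (Ioi 0))
      (nhds (-slope (fun x : ℝ => x ^ (-α)) 1 c)) := by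
    intro c hc
    have := (((hlim c hc).sub_const 1).div_const (c - 1)).neg
    rw [slope_def_field]
    simpa using this
  have hK : Tendsto (fun u => u * (Ψ u)⁻¹ / F u) (nhdsWithin 0 (Ioi 0)) (nhds α) := by
    rw [tendsto_order]
    constructor
    · intro a ha
      have hs1 : Tendsto (fun c => -slope (fun x : ℝ => x ^ (-α)) 1 c) (nhdsWithin 1 (Ioi 1)) (nhds α) :=
        hs.mono_left (nhdsWithin_mono _ fun x hx => ne_of_gt hx)
      obtain ⟨c, h1, h2⟩ := ((hs1.eventually (lt_mem_nhds ha)).and eventually_mem_nhdsWithin).exists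
      have h2 : 1 < c := h2
      filter_upwards [evpos, (hsc c (by linarith)).eventually (lt_mem_nhds h1)] with u hu h3
      refine h3.trans_le ?_
      have fp := hF.pos u hu
      have huc : u < u * c := by nlinarith
      have := hF.conv.le_slope_of_hasDerivAt (mem_Ioi.2 hu) (mem_Ioi.2 (hu.trans huc)) huc (hd u hu)
      rw [slope_def_field, le_div_iff₀ (by linarith)] at this
      have hc1 : 0 < c - 1 := by linarith
      rw [le_div_iff₀ fp]
      have e : -((F (u * c) / F u - 1) / (c - 1)) * F u = (F u - F (u * c)) / (c - 1) := by
        field_simp; ring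
      rw [e, div_le_iff₀ hc1]
      linarith
    · intro a ha
      have hs1 : Tendsto (fun c => -slope (fun x : ℝ => x ^ (-α)) 1 c) (nhdsWithin 1 (Iio 1)) (nhds α) :=
        hs.mono_left (nhdsWithin_mono _ fun x hx => ne_of_lt hx)
      obtain ⟨c, h1, h2, h0⟩ := ((hs1.eventually (gt_mem_nhds ha)).and
        (Ioo_mem_nhdsLT (show (0:ℝ) < 1 by norm_num))).exists
      have h2 : 0 < c := h2
      have h0 : c < 1 := h0
      filter_upwards [evpos, (hsc c (by linarith)).eventually (gt_mem_nhds h1)] with u hu h3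
      refine lt_of_le_of_lt ?_ h3
      have fp := hF.pos u hu
      have huc : u * c < u := by nlinarith
      have := hF.conv.slope_le_of_hasDerivAt (mem_Ioi.2 (show 0 < u * c by positivity)) (mem_Ioi.2 hu) huc (hd u hu)
      rw [slope_def_field, div_le_iff₀ (by linarith)] at this
      have hc1 : 0 < 1 - c := by linarith
      have hc2 : c - 1 ≠ 0 := by linarith
      rw [div_le_iff₀ fp]
      have e : -((F (u * c) / F u - 1) / (c - 1)) * F u = (F (u * c) - F u) / (1 - c) := by
        rw [eq_div_iff hc1.ne']
        field_simp; ring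
      rw [e, le_div_iff₀ hc1]
      linarith
  intro x hx
  have tx : Tendsto (fun u : ℝ => u * x) (nhdsWithin 0 (Ioi 0)) (nhdsWithin 0 (Ioi 0)) := by
    refine tendsto_nhdsWithin_iff.2 ⟨?_, ?_⟩
    · have : Tendsto (fun u : ℝ => u * x) (nhds 0) (nhds (0 * x)) := tendsto_id.mul_const x
      rw [zero_mul] at this
      exact this.mono_left nhdsWithin_le_nhds
    · filter_upwards [evpos] with u hu
      exact mul_pos hu hx
  have hxp : 0 < x ^ (-α) := Real.rpow_pos_of_pos hx _
  have h1 := (hK.const_mul x).div ((hK.comp tx).mul (hlim x hx)) (by positivity)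
  have e : x * α / (α * x ^ (-α)) = x ^ (α + 1) := by
    rw [Real.rpow_neg hx.le, Real.rpow_add hx, Real.rpow_one]
    have : 0 < x ^ α := Real.rpow_pos_of_pos hx _
    field_simp
  rw [e] at h1
  refine h1.congr' ?_
  filter_upwards [evpos] with u hu
  have := hF.pos u hu
  have hux : 0 < u * x := by positivity
  have := hF.pos _ hux
  have := hpos u hu
  have := hpos _ hux
  have hne := (mul_pos hx hu).ne'
  simp only [Function.comp, Pi.div_apply]
  field_simp
  rw [mul_comm x u]
  exact mul_div_cancel_right₀ _ (hF.pos _ hux).ne'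

lemma posint {ν : Measure ℝ} {f : ℝ → ℝ} (hf : IntegrableOn f (Ioi 0) ν) (hp : ∀ x, 0 < x → 0 < f x)
    (hν : ν (Ioi 0) ≠ 0) : 0 < ∫ x in Ioi (0:ℝ), f x ∂ν := by
  rw [setIntegral_pos_iff_support_of_nonneg_ae _ hf]
  · have : Function.support f ∩ Ioi 0 = Ioi 0 := by
      ext x
      simp only [mem_inter_iff, Function.mem_support, mem_Ioi, and_iff_right_iff_imp]
      exact fun hx => (hp x hx).ne'
    rw [this]
    exact pos_iff_ne_zero.2 hν
  · exact (ae_restrict_iff' measurableSet_Ioi).2 (Eventually.of_forall fun x hx => (hp x hx).le)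

lemma exp_int {ν : Measure ℝ} [IsFiniteMeasure ν] (q : ℝ) (hq : 0 ≤ q) :
    IntegrableOn (fun x : ℝ => Real.exp (-(q * x))) (Ioi 0) ν := by
  refine (integrable_const (1:ℝ)).mono' (by fun_prop : Measurable fun x : ℝ => Real.exp (-(q * x))).aestronglyMeasurable ?_
  refine (ae_restrict_iff' measurableSet_Ioi).2 (Eventually.of_forall fun x hx => ?_)
  have hx : 0 < x := hx
  rw [Real.norm_of_nonneg (Real.exp_pos _).le, Real.exp_le_one_iff]
  have : 0 ≤ q * x := by positivity
  linarith

lemma one_sub_int {ν : Measure ℝ} [IsFiniteMeasure ν] (q : ℝ) (hq : 0 ≤ q) :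
    IntegrableOn (fun x : ℝ => 1 - Real.exp (-(q * x))) (Ioi 0) ν :=
  (integrable_const (1:ℝ)).sub (exp_int q hq)

lemma one_sub_pos {q x : ℝ} (hq : 0 < q) (hx : 0 < x) : 0 < 1 - Real.exp (-(q * x)) := by
  have h1 : Real.exp (-(q * x)) < 1 := by
    rw [← Real.exp_zero]
    exact Real.exp_lt_exp.2 (by have := mul_pos hq hx; linarith)
  linarith

lemma H_hyp {ν : Measure ℝ} [IsProbabilityMeasure ν] (hc : ν (Iic 0) = 0) :
    HHyp (fun q => ∫ x in Ioi (0:ℝ), (1 - Real.exp (-(q * x))) ∂ν) := by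
  have h1 : ν (Ioi 0) = 1 := by
    have := prob_compl_eq_one_iff (μ := ν) (measurableSet_Iic (a := (0:ℝ)))
    rw [compl_Iic] at this
    exact this.2 hc
  have hne : ν (Ioi 0) ≠ 0 := by rw [h1]; exact one_ne_zero
  refine ⟨?_, ?_, ?_, ?_, ?_⟩
  · intro q hq
    exact posint (one_sub_int q hq.le) (fun x hx => one_sub_pos hq hx) hne
  · intro q hq
    have := posint (exp_int (ν := ν) q hq.le) (fun x _ => Real.exp_pos _) hne
    rw [integral_sub (integrable_const _) (exp_int q hq.le)]
    have h2 : ∫ x in Ioi (0:ℝ), (1:ℝ) ∂ν = 1 := by simp [Measure.real, h1]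
    rw [h2]
    linarith
  · intro p hp q hq hpq
    have hp : 0 < p := hp
    have hq : 0 < q := hq
    have := posint ((one_sub_int (ν := ν) q hq.le).sub (one_sub_int p hp.le)) (fun x hx => by
      simp only [Pi.sub_apply]
      have : Real.exp (-(q * x)) < Real.exp (-(p * x)) := by
        apply Real.exp_lt_exp.2
        have := mul_lt_mul_of_pos_right hpq hx
        linarith
      linarith) hne
    simp only [Pi.sub_apply] at this
    rw [integral_sub (one_sub_int q hq.le) (one_sub_int p hp.le)] at this
    simp only
    linarith
  · refine ⟨convex_Ici 0, ?_⟩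
    intro p hp q hq a b ha hb hab
    have hp : 0 ≤ p := hp
    have hq : 0 ≤ q := hq
    simp only [smul_eq_mul]
    rw [← integral_const_mul, ← integral_const_mul, ← integral_add ((one_sub_int p hp).const_mul a) ((one_sub_int q hq).const_mul b)]
    refine setIntegral_mono_on (((one_sub_int p hp).const_mul a).add ((one_sub_int q hq).const_mul b))
      (one_sub_int _ (by positivity)) measurableSet_Ioi fun x hx => ?_
    have := convexOn_exp.2 (mem_univ (-(p * x))) (mem_univ (-(q * x))) ha hb hab
    simp only [smul_eq_mul] at this
    have e : a * -(p * x) + b * -(q * x) = -((a * p + b * q) * x) := by ring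
    rw [e] at this
    linarith
  · simp

lemma mean_of_deriv {ν : Measure ℝ} [IsProbabilityMeasure ν] {m : ℝ}
    (h : Tendsto (fun q => (∫ x in Ioi (0:ℝ), (1 - Real.exp (-(q * x))) ∂ν) / q) (nhdsWithin 0 (Ioi 0)) (nhds m)) :
    IntegrableOn (fun x => x) (Ioi 0) ν ∧ ∫ x in Ioi (0:ℝ), x ∂ν = m := by
  have pt : ∀ x : ℝ, 0 < x → Tendsto (fun q => (1 - Real.exp (-(q * x))) / q) (nhdsWithin 0 (Ioi 0)) (nhds x) := by
    intro x hx
    have hd : HasDerivAt (fun q : ℝ => 1 - Real.exp (-(q * x))) x 0 := by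
      have := (((hasDerivAt_id (0:ℝ)).mul_const x).neg.exp).const_sub 1
      simpa using this
    have := hasDerivAt_iff_tendsto_slope.1 hd
    have := this.mono_left (nhdsWithin_mono (0:ℝ) (fun (y:ℝ) (hy : 0 < y) => ne_of_gt hy) : nhdsWithin (0:ℝ) (Ioi 0) ≤ nhdsWithin 0 {0}ᶜ)
    refine this.congr fun q => ?_
    rw [slope_def_field]; simp
  have hseq : Tendsto (fun n : ℕ => (1:ℝ) / (n + 1)) atTop (nhdsWithin 0 (Ioi 0)) :=
    tendsto_nhdsWithin_iff.2 ⟨tendsto_one_div_add_atTop_nhds_zero_nat, Eventually.of_forall fun n => by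
      simp only [mem_Ioi]; positivity⟩
  have hi : IntegrableOn (fun x => x) (Ioi 0) ν := by
    refine ⟨measurable_id.aestronglyMeasurable, ?_⟩
    have fat : ∫⁻ x in Ioi (0:ℝ), ENNReal.ofReal x ∂ν ≤ ENNReal.ofReal m := by
      have e1 : ∫⁻ x in Ioi (0:ℝ), ENNReal.ofReal x ∂ν ≤
          ∫⁻ x in Ioi (0:ℝ), liminf (fun n : ℕ => ENNReal.ofReal ((1 - Real.exp (-((1:ℝ) / (n + 1) * x))) / ((1:ℝ) / (n + 1)))) atTop ∂ν := by
        refine setLIntegral_mono' measurableSet_Ioi fun x hx => ?_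
        have := (ENNReal.continuous_ofReal.tendsto x).comp ((pt x hx).comp hseq)
        exact this.liminf_eq.ge
      refine e1.trans ((lintegral_liminf_le fun n => by fun_prop).trans ?_)
      have e2 : Tendsto (fun n : ℕ => ∫⁻ x in Ioi (0:ℝ), ENNReal.ofReal ((1 - Real.exp (-((1:ℝ) / (n + 1) * x))) / ((1:ℝ) / (n + 1))) ∂ν)
          atTop (nhds (ENNReal.ofReal m)) := by
        refine ((ENNReal.continuous_ofReal.tendsto m).comp (h.comp hseq)).congr fun n => ?_
        simp only [Function.comp]
        rw [← integral_div, ofReal_integral_eq_lintegral_ofReal]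
        · exact (one_sub_int _ (by positivity)).div_const _
        · refine (ae_restrict_iff' measurableSet_Ioi).2 (Eventually.of_forall fun x hx => ?_)
          exact div_nonneg (one_sub_pos (by positivity) hx).le (by positivity)
      exact e2.liminf_eq.le
    rw [hasFiniteIntegral_iff_ofReal]
    · exact fat.trans_lt ENNReal.ofReal_lt_top
    · exact (ae_restrict_iff' measurableSet_Ioi).2 (Eventually.of_forall fun x hx => (le_of_lt hx : (0:ℝ) ≤ x))
  refine ⟨hi, ?_⟩
  have d : Tendsto (fun q => ∫ x in Ioi (0:ℝ), (1 - Real.exp (-(q * x))) / q ∂ν) (nhdsWithin 0 (Ioi 0))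
      (nhds (∫ x in Ioi (0:ℝ), x ∂ν)) := by
    refine tendsto_integral_filter_of_dominated_convergence (fun x => x)
      (Eventually.of_forall fun q => (by fun_prop : Measurable fun x : ℝ => (1 - Real.exp (-(q * x))) / q).aestronglyMeasurable) ?_ hi ?_
    · filter_upwards [evpos] with q hq
      refine (ae_restrict_iff' measurableSet_Ioi).2 (Eventually.of_forall fun x hx => ?_)
      rw [Real.norm_of_nonneg (div_nonneg (one_sub_pos hq hx).le hq.le), div_le_iff₀ hq]
      have := Real.add_one_le_exp (-(q * x))
      linarith
    · exact (ae_restrict_iff' measurableSet_Ioi).2 (Eventually.of_forall fun x hx => pt x hx)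
  refine tendsto_nhds_unique d (h.congr fun q => ?_)
  rw [integral_div]

lemma FHyp.inf {F : ℝ → ℝ} (hF : FHyp F) : Tendsto F (nhdsWithin 0 (Ioi 0)) atTop := by
  have h1 : Tendsto (fun u => F (u * (1/2))) (nhdsWithin 0 (Ioi 0)) atTop := by
    refine tendsto_atTop_mono' _ ?_ (hF.D (1/2) (by norm_num) (by norm_num))
    filter_upwards [evpos] with u hu
    linarith [hF.pos u hu]
  have h2 : Tendsto (fun u : ℝ => u / (1/2)) (nhdsWithin 0 (Ioi 0)) (nhdsWithin 0 (Ioi 0)) := by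
    refine tendsto_nhdsWithin_iff.2 ⟨?_, ?_⟩
    · have : Tendsto (fun u : ℝ => u / (1/2)) (nhds 0) (nhds (0 / (1/2))) := tendsto_id.div_const _
      rw [zero_div] at this
      exact this.mono_left nhdsWithin_le_nhds
    · filter_upwards [evpos] with u hu
      exact div_pos hu (by norm_num)
  refine (h1.comp h2).congr fun u => ?_
  simp only [Function.comp]
  congr 1; field_simp

lemma phi_tendsto {ν : Measure ℝ} [IsFiniteMeasure ν] :
    Tendsto (fun q => ∫ x in Ioi (0:ℝ), (1 - Real.exp (-(q * x))) ∂ν) atTop (nhds ((ν (Ioi 0)).toReal)) := by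
  have h0 : ∫ x in Ioi (0:ℝ), (1:ℝ) ∂ν = (ν (Ioi 0)).toReal := by simp [Measure.real]
  rw [← h0]
  refine tendsto_integral_filter_of_dominated_convergence (fun _ => (1:ℝ))
    (Eventually.of_forall fun q => (by fun_prop : Measurable fun x : ℝ => 1 - Real.exp (-(q * x))).aestronglyMeasurable)
    ?_ (integrable_const _) ?_
  · filter_upwards [eventually_gt_atTop 0] with q hq
    refine (ae_restrict_iff' measurableSet_Ioi).2 (Eventually.of_forall fun x hx => ?_)
    rw [Real.norm_of_nonneg (one_sub_pos hq hx).le]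
    have := Real.exp_pos (-(q * x))
    linarith
  · refine (ae_restrict_iff' measurableSet_Ioi).2 (Eventually.of_forall fun x hx => ?_)
    have h1 : Tendsto (fun q : ℝ => q * x) atTop atTop := tendsto_id.atTop_mul_const hx
    have h2 := (Real.tendsto_exp_neg_atTop_nhds_zero.comp h1).const_sub 1
    rw [sub_zero] at h2
    exact h2

lemma phi_le {ν : Measure ℝ} [IsFiniteMeasure ν] (q : ℝ) (hq : 0 < q) :
    ∫ x in Ioi (0:ℝ), (1 - Real.exp (-(q * x))) ∂ν ≤ (ν (Ioi 0)).toReal := by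
  have h0 : ∫ x in Ioi (0:ℝ), (1:ℝ) ∂ν = (ν (Ioi 0)).toReal := by simp [Measure.real]
  rw [← h0]
  refine setIntegral_mono_on (one_sub_int q hq.le) (integrable_const _) measurableSet_Ioi fun x hx => ?_
  have := Real.exp_pos (-(q * x))
  linarith

lemma phi_nonneg {ν : Measure ℝ} (q : ℝ) (hq : 0 < q) :
    0 ≤ ∫ x in Ioi (0:ℝ), (1 - Real.exp (-(q * x))) ∂ν :=
  setIntegral_nonneg measurableSet_Ioi fun _ hx => (one_sub_pos hq hx).le

lemma ode_pos {Ψ : ℝ → ℝ} (hP : PsiHyp Ψ) {y : ℝ → ℝ} (h0 : ∀ t, 0 < t → 0 ≤ y t)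
    (hd : ∀ t, 0 < t → HasDerivAt y (-Ψ (y t)) t) (hev : ∀ᶠ t in atTop, y t ≠ 0) :
    ∀ t, 0 < t → 0 < y t := by
  intro t ht
  refine lt_of_le_of_ne (h0 t ht) fun hz => ?_
  have hmin : IsLocalMin y t := by
    filter_upwards [Ioi_mem_nhds ht] with s hs
    rw [← hz]
    exact h0 s hs
  have hΨ0 : Ψ 0 = 0 := by
    have := hmin.hasDerivAt_eq_zero (hd t ht)
    rw [← hz] at this
    linarith
  have hanti : AntitoneOn y (Ioi 0) := by
    refine antitoneOn_of_deriv_nonpos (convex_Ioi 0)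
      (fun s hs => (hd s hs).continuousAt.continuousWithinAt) ?_ ?_
    · rw [interior_Ioi]
      exact fun s hs => (hd s hs).differentiableAt.differentiableWithinAt
    · rw [interior_Ioi]
      intro s hs
      rw [(hd s hs).deriv]
      rcases (h0 s hs).eq_or_lt with e | e
      · rw [← e, hΨ0]; simp
      · linarith [hP.pos _ e]
  obtain ⟨s, hs, hst⟩ := (hev.and (eventually_ge_atTop t)).exists
  have hs0 : 0 < s := ht.trans_le hst
  have := hanti (mem_Ioi.2 ht) (mem_Ioi.2 hs0) hst
  exact hs (le_antisymm (this.trans hz.ge) (h0 s hs0))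

lemma ode_sol {Ψ F : ℝ → ℝ} (hP : PsiHyp Ψ) (hF : ∀ u, 0 < u → HasDerivAt F (-(Ψ u)⁻¹) u)
    {y : ℝ → ℝ} {q : ℝ} (hq : 0 < q) (hy : ∀ t, 0 < t → 0 < y t)
    (hd : ∀ t, 0 < t → HasDerivAt y (-Ψ (y t)) t)
    (hi : Tendsto y (nhdsWithin 0 (Ioi 0)) (nhds q)) :
    ∀ t, 0 < t → F (y t) = t + F q := by
  have hd2 : ∀ t, 0 < t → HasDerivAt (fun t => F (y t) - t) 0 t := by
    intro t ht
    have h1 := ((hF _ (hy t ht)).comp t (hd t ht)).sub (hasDerivAt_id t)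
    have e : -(Ψ (y t))⁻¹ * -Ψ (y t) - 1 = 0 := by
      have := (hP.pos _ (hy t ht)).ne'
      field_simp; ring
    rw [e] at h1
    exact h1
  obtain ⟨c, hc⟩ := isOpen_Ioi.exists_is_const_of_deriv_eq_zero (isPreconnected_Ioi (a := (0:ℝ)))
    (f := fun t => F (y t) - t) (fun t ht => (hd2 t ht).differentiableAt.differentiableWithinAt)
    (fun t ht => (hd2 t ht).deriv)
  have l1 : Tendsto (fun t => F (y t) - t) (nhdsWithin 0 (Ioi 0)) (nhds (F q - 0)) :=
    ((hF q hq).continuousAt.tendsto.comp hi).sub (tendsto_id.mono_left nhdsWithin_le_nhds)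
  have l2 : Tendsto (fun t => F (y t) - t) (nhdsWithin 0 (Ioi 0)) (nhds c) := by
    refine tendsto_const_nhds.congr' ?_
    filter_upwards [evpos] with t ht
    exact (hc t ht).symm
  have := tendsto_nhds_unique l1 l2
  intro t ht
  have h3 : F (y t) - t = c := hc t ht
  linarith

/-- if the fundamental solution `(μ_t)` of the generalized
Smoluchowski equation (for a critical branching mechanism `Ψ` satisfying
Grey's condition) admits a nondegenerate scaling limit
`μ_t(λ(t)⁻¹ dx)/⟨μ_t,1⟩ → μ̂`, then `Ψ` is regularly varying at `0` with some
index `γ ∈ (1,2]`, `m₁ = ∫ x μ̂(dx) < ∞`, `λ(t)/⟨μ_t,1⟩ → m₁`, and `μ̂` is the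
generalized Mittag-Leffler law `F_{γ,1}` scaled by `m₁`. -/
theorem fundamental_solution_scaling_limit
    (Ψ : ℝ → ℝ) (β : ℝ) (π : Measure ℝ)
    (hβ : 0 ≤ β)
    (hπfin : ∫⁻ x in Ioi (0:ℝ), ENNReal.ofReal (min x (x ^ 2)) ∂π < ⊤)
    (hΨ : ∀ u : ℝ, 0 < u →
      Ψ u = β * u ^ 2 + ∫ x in Ioi (0:ℝ), (Real.exp (-(u * x)) - 1 + u * x) ∂π)
    (hGrey₁ : Tendsto Ψ atTop atTop)
    (hGrey₂ : ∃ a : ℝ, 0 < a ∧ IntegrableOn (fun u => (Ψ u)⁻¹) (Ioi a))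
    (μ : ℝ → Measure ℝ)
    (hfin : ∀ t : ℝ, 0 < t → IsFiniteMeasure (μ t))
    (hconc : ∀ t : ℝ, 0 < t → μ t (Iic 0) = 0)
    (hode : ∀ q : ℝ, 0 < q → ∀ t : ℝ, 0 < t →
      HasDerivAt (fun u => ∫ x in Ioi (0:ℝ), (1 - Real.exp (-(q * x))) ∂(μ u))
        (-Ψ (∫ x in Ioi (0:ℝ), (1 - Real.exp (-(q * x))) ∂(μ t))) t)
    (hinit : ∀ q : ℝ, 0 < q →
      Tendsto (fun t => ∫ x in Ioi (0:ℝ), (1 - Real.exp (-(q * x))) ∂(μ t))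
        (nhdsWithin 0 (Ioi 0)) (nhds q))
    (lam : ℝ → ℝ) (hlam : ∀ t : ℝ, 0 < t → 0 < lam t)
    (μhat : Measure ℝ) (hμhatp : IsProbabilityMeasure μhat) (hμhatc : μhat (Iic 0) = 0)
    (hlim : ∀ f : ℝ → ℝ, ContinuousOn f (Ioi 0) →
      (∃ M : ℝ, ∀ x ∈ Ioi (0:ℝ), |f x| ≤ M) →
      Tendsto (fun t => (((μ t) (Ioi 0)).toReal)⁻¹ *
          ∫ x in Ioi (0:ℝ), f (lam t * x) ∂(μ t)) atTop
        (nhds (∫ x in Ioi (0:ℝ), f x ∂μhat))) :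
    ∃ γ : ℝ, 1 < γ ∧ γ ≤ 2 ∧
      (∀ x : ℝ, 0 < x →
        Tendsto (fun u => Ψ (u * x) / Ψ u) (nhdsWithin 0 (Ioi 0)) (nhds (x ^ γ))) ∧
      IntegrableOn (fun x => x) (Ioi 0) μhat ∧
      Tendsto (fun t => lam t / ((μ t) (Ioi 0)).toReal) atTop
        (nhds (∫ x in Ioi (0:ℝ), x ∂μhat)) ∧
      (∀ q : ℝ, 0 < q →
        ∫ x in Ioi (0:ℝ), (1 - Real.exp (-(q * x))) ∂μhat
          = (1 + ((∫ x in Ioi (0:ℝ), x ∂μhat) * q) ^ (-(γ - 1))) ^ (-(1 / (γ - 1)))) := by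
  have hP := psiHyp Ψ β π hβ hπfin hΨ hGrey₁ hGrey₂
  have hFd := F_hasDeriv hP
  have hF0 := F_tendsto hP
  have hF := F_hyp hP
  set F : ℝ → ℝ := fun u => ∫ v in Ioi u, (Ψ v)⁻¹ with hFdef
  have hH := H_hyp hμhatc
  have hinj := hF.anti.injOn
  have hM : ∀ᶠ t in atTop, μ t (Ioi 0) ≠ 0 := by
    have h1 := hlim (fun _ => 1) continuousOn_const ⟨1, fun x _ => by simp⟩
    have hne : ∫ x in Ioi (0:ℝ), (1:ℝ) ∂μhat ≠ 0 := by
      have h2 : μhat (Ioi 0) = 1 := by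
        have := prob_compl_eq_one_iff (μ := μhat) (measurableSet_Iic (a := (0:ℝ)))
        rw [compl_Iic] at this
        exact this.2 hμhatc
      simp [Measure.real, h2]
    filter_upwards [h1.eventually_ne hne] with t ht h0
    apply ht
    rw [h0]; simp
  have hΦpos : ∀ q, 0 < q → ∀ t, 0 < t → 0 < ∫ x in Ioi (0:ℝ), (1 - Real.exp (-(q * x))) ∂(μ t) := by
    intro q hq
    refine ode_pos hP (fun t _ => phi_nonneg q hq) (hode q hq) ?_
    filter_upwards [hM, eventually_gt_atTop 0] with t ht ht0
    have := hfin t ht0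
    exact (posint (one_sub_int q hq.le) (fun x hx => one_sub_pos hq hx) ht).ne'
  have hsol : ∀ q, 0 < q → ∀ t, 0 < t →
      F (∫ x in Ioi (0:ℝ), (1 - Real.exp (-(q * x))) ∂(μ t)) = t + F q := by
    intro q hq
    exact ode_sol hP hFd hq (hΦpos q hq) (hode q hq) (hinit q hq)
  have hMpos : ∀ t, 0 < t → 0 < ((μ t) (Ioi 0)).toReal := by
    intro t ht
    have := hfin t ht
    exact (hΦpos 1 one_pos t ht).trans_le (phi_le 1 one_pos)
  have hFM : ∀ t, 0 < t → F ((μ t) (Ioi 0)).toReal = t := by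
    intro t ht
    have := hfin t ht
    have l1 := (hFd _ (hMpos t ht)).continuousAt.tendsto.comp (phi_tendsto (ν := μ t))
    have l2 : Tendsto (fun q => t + F q) atTop (nhds (t + 0)) := hF0.const_add t
    rw [add_zero] at l2
    refine tendsto_nhds_unique l1 (l2.congr' ?_)
    filter_upwards [eventually_gt_atTop 0] with q hq
    exact (hsol q hq t ht).symm
  have hMF : ∀ u, 0 < u → ((μ (F u)) (Ioi 0)).toReal = u := by
    intro u hu
    exact hinj (hMpos _ (hF.pos u hu)) hu (hFM _ (hF.pos u hu))
  have hL : LHyp F (fun q => ∫ x in Ioi (0:ℝ), (1 - Real.exp (-(q * x))) ∂μhat) (fun u => lam (F u))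
      (fun u q => ∫ x in Ioi (0:ℝ), (1 - Real.exp (-((q * lam (F u)) * x))) ∂(μ (F u))) := by
    refine ⟨hF, hH, ?_, ?_, ?_, ?_⟩
    · filter_upwards [evpos] with u hu
      exact hlam _ (hF.pos u hu)
    · intro q hq
      filter_upwards [evpos] with u hu
      exact hΦpos _ (mul_pos hq (hlam _ (hF.pos u hu))) _ (hF.pos u hu)
    · intro q hq
      filter_upwards [evpos] with u hu
      exact hsol _ (mul_pos hq (hlam _ (hF.pos u hu))) _ (hF.pos u hu)
    · intro q hq
      have h1 := hlim (fun x => 1 - Real.exp (-(q * x))) (by fun_prop) ⟨1, fun x hx => by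
        rw [abs_of_pos (one_sub_pos hq hx)]
        have := Real.exp_pos (-(q * x))
        linarith⟩
      refine (h1.comp hF.inf).congr' ?_
      filter_upwards [evpos] with u hu
      simp only [Function.comp]
      rw [hMF u hu, div_eq_inv_mul]
      simp only [mul_assoc]
  obtain ⟨α, m, hα, hm, hrv, hlm, hHm, hform⟩ := hL.core
  have hα1 : α ≤ 1 := by
    have h1 : ((1:ℝ)/2) ^ (-α) ≤ 2 := by
      refine le_of_tendsto (hrv (1/2) (by norm_num)) ?_
      filter_upwards [evpos] with u hu
      have := hF.dbl u hu (1/2) (by norm_num) (by norm_num)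
      rw [div_le_iff₀ (hF.pos u hu)]
      linarith
    have h2 : ((1:ℝ)/2) ^ (-α) = 2 ^ α := by
      rw [one_div, Real.inv_rpow (by norm_num), Real.rpow_neg (by norm_num), inv_inv]
    rw [h2] at h1
    by_contra hc
    push Not at hc
    have := Real.rpow_lt_rpow_of_exponent_lt (x := 2) (by norm_num) hc
    rw [Real.rpow_one] at this
    linarith
  obtain ⟨hint, hmean⟩ := mean_of_deriv hHm
  rw [hmean]
  refine ⟨α + 1, by linarith, by linarith, psi_rv hF hFd hP.pos hα hrv, hint, ?_, ?_⟩
  · have hM0 : Tendsto (fun t => ((μ t) (Ioi 0)).toReal) atTop (nhdsWithin 0 (Ioi 0)) := by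
      refine tendsto_nhdsWithin_iff.2 ⟨?_, ?_⟩
      · rw [tendsto_order]
        constructor
        · intro a ha
          filter_upwards [eventually_gt_atTop 0] with t ht
          exact ha.trans (hMpos t ht)
        · intro a ha
          filter_upwards [eventually_gt_atTop 0, eventually_gt_atTop (F a)] with t ht hta
          rw [← hFM t ht] at hta
          exact (hF.anti.lt_iff_gt (mem_Ioi.2 ha) (mem_Ioi.2 (hMpos t ht))).1 hta
      · filter_upwards [eventually_gt_atTop 0] with t ht
        exact hMpos t ht
    refine (hlm.comp hM0).congr' ?_
    filter_upwards [eventually_gt_atTop 0] with t ht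
    simp only [Function.comp]
    rw [hFM t ht]
  · intro q hq
    have h1 := hform q hq
    have hHq := hH.pos q hq
    rw [add_sub_cancel_right, ← h1, ← Real.rpow_mul hHq.le]
    have : -α * -(1 / α) = 1 := by field_simp
    rw [this, Real.rpow_one]
end
end
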